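/- arXiv:2309.10529 — 2 statements merged into one kernel-verified Lean document; each statement's English description precedes it below -/
import Mathlib

section
/- Let m ≥ 1 be an integer, let A_0, …, A_{m−1} > 1 and c_0, …, c_{m−1} > 0 be real numbers. Set β_{−1} = 1 and β_i = A_0·A_1⋯A_i for 0 ≤ i ≤ m−1, and put d_0 = s_{β_0} and d_i = g_{β_i, β_{i−1}} for 1 ≤ i ≤ m−1. Let S_m = { x ∈ (0,1) irrational : there are infinitely many n ∈ ℕ such that c_i·A_i^n ≤ a_{n+i}(x) < 2·c_i·A_i^n for every 0 ≤ i ≤ m−1 }. Then dim_H S_m ≥ min_{0 ≤ i ≤ m−1} d_i. -/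
open Filter MeasureTheory Set

/-- The Gauss map `T(x) = 1/x - ⌊1/x⌋`. -/
noncomputable def gaussMap (x : ℝ) : ℝ := 1 / x - (⌊1 / x⌋ : ℤ)

/-- The `n`-th partial quotient `a_n(x)` (for `n ≥ 1`) of the continued
fraction expansion of `x`: `a_n(x) = ⌊1 / T^{n-1}(x)⌋`. -/
noncomputable def pq (x : ℝ) (n : ℕ) : ℕ := ⌊1 / (gaussMap^[n - 1] x)⌋₊

/-- The continuant `q_n(a_1, …, a_n)`: `q_0 = 1`, `q_1 = a_1`,
`q_k = a_k q_{k-1} + q_{k-2}`. -/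
def contQ : (n : ℕ) → (Fin n → ℕ) → ℕ
  | 0, _ => 1
  | 1, a => a 0
  | (n + 2), a =>
      a (Fin.last (n + 1)) * contQ (n + 1) (Fin.init a) +
        contQ n (Fin.init (Fin.init a))

/-- `s_B`: the Wang–Wu pressure exponent. -/
noncomputable def sExp (B : ℝ) : ℝ :=
  sInf {s : ℝ | 0 ≤ s ∧
    Filter.atTop.limsup (fun n : ℕ =>
      (((n : ℝ)⁻¹ : ℝ) : EReal) * ENNReal.log (∑' a : Fin n → ℕ+,
        ENNReal.ofReal ((B ^ n * ((contQ n fun i => (a i : ℕ)) : ℝ) ^ 2) ^ (-s)))) ≤ 0}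

/-- `g_{B₁,B₂}`: the two-parameter pressure exponent. -/
noncomputable def gExp (B₁ B₂ : ℝ) : ℝ :=
  sInf {s : ℝ | 0 ≤ s ∧
    Filter.atTop.limsup (fun n : ℕ =>
      (((n : ℝ)⁻¹ : ℝ) : EReal) * ENNReal.log (∑' a : Fin n → ℕ+,
        ENNReal.ofReal (B₂ ^ ((1 - s) * (n : ℝ)) *
          (B₁ ^ n * ((contQ n fun i => (a i : ℕ)) : ℝ) ^ 2) ^ (-s)))) ≤ 0}

/-- `β_i = A_0 ⋯ A_i`. -/
noncomputable def betaProd (A : ℕ → ℝ) (i : ℕ) : ℝ := ∏ j ∈ Finset.range (i + 1), A j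

/-- The dimensional numbers `d_0 = s_{β_0}` and `d_i = g_{β_i, β_{i-1}}` for `i ≥ 1`. -/
noncomputable def dimNum (A : ℕ → ℝ) (i : ℕ) : ℝ :=
  if i = 0 then sExp (betaProd A 0) else gExp (betaProd A i) (betaProd A (i - 1))

/-!
Build a Cantor subset of `S_m` by appending words of digits step by step, and apply the mass
distribution principle. For `s < min dᵢ` let `l` be the smallest of the numbers
`λᵢ = β_{i-1} ^ (1 - s) * β_i ^ (-s)`, attained at `i₀`. As `s < d_{i₀}`, the pressure sums for
`d_{i₀}` get arbitrarily large, so there is a finite set of words of equal length whose Gibbs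
measure `μ` satisfies `μ(cylinder) * q ^ (2 s) ≤ l ^ n / 2` for words of `n` digits. Almost all
steps append such free words; from time to time a block of `m` digits of sizes `cᵢ Aᵢ ^ n` is
inserted, each uniformly distributed in its range. For the estimate `μ(ball) ≤ C * radius ^ s` to
survive the `i`-th digit of a block whose first digit has index `n`, the value of `μ(cylinder) * q
^ (2 s)` before the block must be at most of order `λᵢ ^ n`, which `l ≤ λᵢ` grants. The gain `1 /
2` from the long runs of free words absorbs all constants and all previous blocks.
-/

/-! ### Continued fraction words -/

/-- The matrix of the Möbius map `y ↦ [a₁, …, aₙ + y]` attached to the word `w = (a₁, …, aₙ)`.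
Its rows are `(pₙ₋₁, pₙ)` and `(qₙ₋₁, qₙ)`, so the numerators of the convergents come first. -/
def cfMatrix (w : List ℕ+) : Matrix (Fin 2) (Fin 2) ℕ :=
  (w.map fun a => !![0, 1; 1, (a : ℕ)]).prod

/-- The continuant `qₙ(a₁, …, aₙ)` of a word. -/
def cfDen (w : List ℕ+) : ℕ := cfMatrix w 1 1

/-- The number `[a₁, …, aₙ + y]`, for a word `(a₁, …, aₙ)` and a tail `y`. -/
noncomputable def cfEval : List ℕ+ → ℝ → ℝ
  | [], y => y
  | a :: w, y => ((a : ℝ) + cfEval w y)⁻¹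

@[simp] theorem cfMatrix_nil : cfMatrix [] = 1 := rfl

theorem cfMatrix_cons (a : ℕ+) (w : List ℕ+) :
    cfMatrix (a :: w) = !![0, 1; 1, (a : ℕ)] * cfMatrix w := by
  simp [cfMatrix]

theorem cfMatrix_append (u v : List ℕ+) : cfMatrix (u ++ v) = cfMatrix u * cfMatrix v := by
  simp [cfMatrix]

theorem cfMatrix_cons_zero (a : ℕ+) (w : List ℕ+) (j : Fin 2) :
    cfMatrix (a :: w) 0 j = cfMatrix w 1 j := by
  simp [cfMatrix_cons, Matrix.mul_apply]

theorem cfMatrix_cons_one (a : ℕ+) (w : List ℕ+) (j : Fin 2) :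
    cfMatrix (a :: w) 1 j = cfMatrix w 0 j + a * cfMatrix w 1 j := by
  simp [cfMatrix_cons, Matrix.mul_apply]

theorem cfMatrix_append_singleton_zero (u : List ℕ+) (a : ℕ+) (i : Fin 2) :
    cfMatrix (u ++ [a]) i 0 = cfMatrix u i 1 := by
  simp [cfMatrix_append, cfMatrix_cons, Matrix.mul_apply]

theorem cfDen_append_singleton (u : List ℕ+) (a : ℕ+) :
    cfDen (u ++ [a]) = a * cfDen u + cfMatrix u 1 0 := by
  simp [cfDen, cfMatrix_append, cfMatrix_cons, Matrix.mul_apply]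
  ring

theorem cfDen_cons (a : ℕ+) (w : List ℕ+) : cfDen (a :: w) = a * cfDen w + cfMatrix w 0 1 := by
  rw [cfDen, cfMatrix_cons_one, cfDen, add_comm]

theorem cfDen_pos (w : List ℕ+) : 0 < cfDen w := by
  induction w with
  | nil => simp [cfDen]
  | cons a w ih => rw [cfDen_cons]; positivity

theorem cfMatrix_zero_one_le_cfDen (w : List ℕ+) : cfMatrix w 0 1 ≤ cfDen w := by
  cases w with
  | nil => simp
  | cons a w =>
    rw [cfMatrix_cons_zero, cfDen_cons]
    exact (Nat.le_mul_of_pos_left _ a.pos).trans (Nat.le_add_right _ _)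

theorem cfMatrix_one_zero_le_cfDen (w : List ℕ+) : cfMatrix w 1 0 ≤ cfDen w := by
  cases w using List.reverseRecOn with
  | nil => simp
  | append_singleton w a =>
    rw [cfMatrix_append_singleton_zero, cfDen_append_singleton]
    exact (Nat.le_mul_of_pos_left _ a.pos).trans (Nat.le_add_right _ _)

theorem cfDen_append_singleton_le (u : List ℕ+) (a : ℕ+) :
    cfDen (u ++ [a]) ≤ (a + 1) * cfDen u := by
  rw [cfDen_append_singleton, add_mul, one_mul]
  gcongr
  exact cfMatrix_one_zero_le_cfDen u

theorem cfDen_append_le (u v : List ℕ+) : cfDen (u ++ v) ≤ 2 * cfDen u * cfDen v := by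
  have h : cfDen (u ++ v) = cfMatrix u 1 0 * cfMatrix v 0 1 + cfDen u * cfDen v := by
    simp [cfDen, cfMatrix_append, Matrix.mul_apply]
  have := Nat.mul_le_mul (cfMatrix_one_zero_le_cfDen u) (cfMatrix_zero_one_le_cfDen v)
  linarith

theorem cfDen_append_cons_le (u : List ℕ+) (a : ℕ+) (v : List ℕ+) :
    cfDen (u ++ a :: v) ≤ 2 * (a + 1) * cfDen u * cfDen v := by
  calc cfDen (u ++ a :: v) = cfDen (u ++ [a] ++ v) := by simp
    _ ≤ 2 * cfDen (u ++ [a]) * cfDen v := cfDen_append_le _ _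
    _ ≤ 2 * ((a + 1) * cfDen u) * cfDen v := by gcongr; exact cfDen_append_singleton_le u a
    _ = 2 * (a + 1) * cfDen u * cfDen v := by ring

theorem contQ_eq_cfDen_ofFn : ∀ (n : ℕ) (a : Fin n → ℕ+),
    contQ n (fun i => (a i : ℕ)) = cfDen (List.ofFn a)
  | 0, a => by simp [contQ, cfDen]
  | 1, a => by simp [contQ, cfDen, cfMatrix_cons_one]
  | n + 2, a => by
    have ofFn_init {k : ℕ} (b : Fin (k + 1) → ℕ+) :
        List.ofFn b = List.ofFn (Fin.init b) ++ [b (Fin.last k)] := by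
      rw [List.ofFn_succ', List.concat_eq_append]; rfl
    have h₁ := contQ_eq_cfDen_ofFn (n + 1) (Fin.init a)
    have h₀ := contQ_eq_cfDen_ofFn n (Fin.init (Fin.init a))
    rw [ofFn_init a, cfDen_append_singleton, ← h₁, ofFn_init (Fin.init a),
      cfMatrix_append_singleton_zero, ← cfDen, ← h₀]
    rfl

theorem abs_cfMatrix_det (w : List ℕ+) :
    |(cfMatrix w 0 0 : ℝ) * cfDen w - cfMatrix w 0 1 * cfMatrix w 1 0| = 1 := by
  induction w with
  | nil => simp [cfDen]
  | cons a w ih =>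
    rw [← ih, ← abs_neg, cfDen_cons, cfMatrix_cons_zero, cfMatrix_cons_zero, cfMatrix_cons_one,
      ← cfDen]
    push_cast
    ring_nf

theorem cfEval_append (u v : List ℕ+) (y : ℝ) : cfEval (u ++ v) y = cfEval u (cfEval v y) := by
  induction u with
  | nil => rfl
  | cons a u ih => rw [List.cons_append, cfEval, cfEval, ih]

theorem cfEval_nonneg (w : List ℕ+) {y : ℝ} (hy : 0 ≤ y) : 0 ≤ cfEval w y := by
  induction w with
  | nil => exact hy
  | cons a w ih => rw [cfEval]; positivity

theorem cfEval_cons_mem_Ioc (a : ℕ+) (w : List ℕ+) {y : ℝ} (hy : 0 ≤ y) :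
    cfEval (a :: w) y ∈ Ioc (0 : ℝ) (a : ℝ)⁻¹ := by
  have h := cfEval_nonneg w hy
  have : (0 : ℝ) < a := by exact_mod_cast a.pos
  exact ⟨by rw [cfEval]; positivity, by rw [cfEval]; gcongr; linarith⟩

theorem cfEval_mem_Icc (w : List ℕ+) {y : ℝ} (hy : y ∈ Icc (0 : ℝ) 1) :
    cfEval w y ∈ Icc (0 : ℝ) 1 := by
  cases w with
  | nil => exact hy
  | cons a w =>
    have h := cfEval_cons_mem_Ioc a w hy.1
    exact ⟨h.1.le, h.2.trans (inv_le_one_of_one_le₀ (by exact_mod_cast one_le))⟩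

theorem cfEval_mem_Ioo (w : List ℕ+) {y : ℝ} (hy : y ∈ Ioo (0 : ℝ) 1) :
    cfEval w y ∈ Ioo (0 : ℝ) 1 := by
  induction w with
  | nil => exact hy
  | cons a w ih =>
    have ha : (1 : ℝ) ≤ a := by exact_mod_cast one_le
    exact ⟨(cfEval_cons_mem_Ioc a w hy.1.le).1, inv_lt_one_of_one_lt₀ (by linarith [ih.1])⟩

theorem continuousOn_cfEval (w : List ℕ+) : ContinuousOn (cfEval w) (Ici 0) := by
  induction w with
  | nil => exact continuousOn_id
  | cons a w ih =>
    refine (continuousOn_const.add ih).inv₀ fun y hy => ?_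
    have := cfEval_nonneg w hy
    have ha : (0 : ℝ) < a := by exact_mod_cast a.pos
    exact (add_pos_of_pos_of_nonneg ha this).ne'

theorem cfMatrix_denom_pos (w : List ℕ+) {y : ℝ} (hy : 0 ≤ y) :
    0 < (cfDen w : ℝ) + cfMatrix w 1 0 * y := by
  have := cfDen_pos w
  positivity

theorem cfEval_eq_div (w : List ℕ+) {y : ℝ} (hy : 0 ≤ y) :
    cfEval w y = (cfMatrix w 0 1 + cfMatrix w 0 0 * y) / (cfDen w + cfMatrix w 1 0 * y) := by
  induction w with
  | nil => simp [cfEval, cfDen]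
  | cons a w ih =>
    have h := cfMatrix_denom_pos w hy
    rw [cfEval, ih, cfDen_cons, cfMatrix_cons_zero, cfMatrix_cons_zero, cfMatrix_cons_one,
      ← cfDen, add_div' _ _ _ h.ne', inv_div]
    push_cast
    ring_nf

theorem abs_sub_div_le_abs_cfEval_sub (w : List ℕ+) {y y' : ℝ} (hy : y ∈ Icc (0 : ℝ) 1)
    (hy' : y' ∈ Icc (0 : ℝ) 1) :
    |y - y'| / (4 * (cfDen w : ℝ) ^ 2) ≤ |cfEval w y - cfEval w y'| := by
  have denom_le {z : ℝ} (hz : z ∈ Icc (0 : ℝ) 1) :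
      (cfDen w : ℝ) + cfMatrix w 1 0 * z ≤ 2 * cfDen w := by
    have h : (cfMatrix w 1 0 : ℝ) ≤ cfDen w := by exact_mod_cast cfMatrix_one_zero_le_cfDen w
    nlinarith [mul_le_mul h hz.2 hz.1 (Nat.cast_nonneg _)]
  have hpos := cfMatrix_denom_pos w hy.1
  have hpos' := cfMatrix_denom_pos w hy'.1
  have hdet : (cfMatrix w 0 1 + cfMatrix w 0 0 * y) * ((cfDen w : ℝ) + cfMatrix w 1 0 * y') -
      (cfDen w + cfMatrix w 1 0 * y) * (cfMatrix w 0 1 + cfMatrix w 0 0 * y') =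
      (cfMatrix w 0 0 * cfDen w - cfMatrix w 0 1 * cfMatrix w 1 0) * (y - y') := by ring
  rw [cfEval_eq_div w hy.1, cfEval_eq_div w hy'.1, div_sub_div _ _ hpos.ne' hpos'.ne', hdet,
    abs_div, abs_mul, abs_cfMatrix_det, one_mul, abs_of_pos (mul_pos hpos hpos')]
  refine div_le_div_of_nonneg_left (abs_nonneg _) (mul_pos hpos hpos') ?_
  calc _ ≤ (2 * (cfDen w : ℝ)) * (2 * cfDen w) :=
        mul_le_mul (denom_le hy) (denom_le hy') hpos'.le (by positivity)
    _ = 4 * (cfDen w : ℝ) ^ 2 := by ring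

/-! ### The Gauss map along a concatenation of words -/

theorem gaussMap_eq_fract_inv (x : ℝ) : gaussMap x = Int.fract x⁻¹ := by
  rw [gaussMap, one_div, Int.self_sub_floor]

theorem gaussMap_inv_add (a : ℕ+) {z : ℝ} (hz : z ∈ Ico (0 : ℝ) 1) :
    gaussMap ((a : ℝ) + z)⁻¹ = z := by
  rw [gaussMap_eq_fract_inv, inv_inv, Int.fract_natCast_add, Int.fract_eq_self.2 hz]

theorem iterate_gaussMap_cfEval (w : List ℕ+) {y : ℝ} (hy : y ∈ Ioo (0 : ℝ) 1) :
    gaussMap^[w.length] (cfEval w y) = y := by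
  induction w with
  | nil => rfl
  | cons a w ih =>
    rw [List.length_cons, Function.iterate_succ_apply, cfEval,
      gaussMap_inv_add a (Ioo_subset_Ico_self (cfEval_mem_Ioo w hy)), ih]

theorem exists_iterate_gaussMap_ratCast_eq_zero (q : ℚ) (hq : 0 ≤ q) :
    ∃ n, gaussMap^[n] (q : ℝ) = 0 := by
  induction h : q.num.toNat using Nat.strong_induction_on generalizing q with
  | _ k ih =>
    rcases hq.eq_or_lt with rfl | hpos
    · exact ⟨0, Rat.cast_zero⟩
    · have hlt := Rat.fract_inv_num_lt_num_of_pos hpos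
      have hnum := Rat.num_pos.2 hpos
      obtain ⟨n, hn⟩ := ih _ (by omega) (Int.fract q⁻¹) (Int.fract_nonneg _) rfl
      refine ⟨n + 1, ?_⟩
      rw [Function.iterate_succ_apply, gaussMap_eq_fract_inv, ← hn]
      push_cast
      rfl

theorem irrational_of_frequently_iterate_gaussMap_ne_zero {x : ℝ} (hx : 0 ≤ x)
    (h : ∃ᶠ n in atTop, gaussMap^[n] x ≠ 0) : Irrational x := by
  rintro ⟨q, rfl⟩
  obtain ⟨n, hn⟩ := exists_iterate_gaussMap_ratCast_eq_zero q (by exact_mod_cast hx)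
  refine h (eventually_atTop.2 ⟨n, fun k hk => not_not.2 ?_⟩)
  obtain ⟨l, rfl⟩ := Nat.exists_eq_add_of_le' hk
  rw [Function.iterate_add_apply, hn]
  exact Function.iterate_fixed (by simp [gaussMap]) l

theorem exists_backward_orbit {X : Type*} [TopologicalSpace X] [CompactSpace X] [T2Space X]
    [Nonempty X] {f : ℕ → X → X} (hf : ∀ j, Continuous (f j)) :
    ∃ y : ℕ → X, ∀ j, y j = f j (y (j + 1)) := by
  let t (N : ℕ) : Set (ℕ → X) := {y | ∀ j < N, y j = f j (y (j + 1))}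
  have nonempty_t (N : ℕ) : (t N).Nonempty := by
    induction N generalizing f with
    | zero => exact ⟨fun _ => Classical.arbitrary X, by simp [t]⟩
    | succ N ih =>
      obtain ⟨y, hy⟩ := ih fun j => hf (j + 1)
      refine ⟨fun j => Nat.casesOn j (f 0 (y 0)) y, fun j hj => ?_⟩
      cases j with
      | zero => rfl
      | succ j => exact hy j (by omega)
  have isClosed_t (N : ℕ) : IsClosed (t N) := by
    simp only [t, ofPred_forall]
    exact isClosed_biInter fun j _ =>
      isClosed_eq (continuous_apply j) ((hf j).comp (continuous_apply (j + 1)))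
  obtain ⟨y, hy⟩ := IsCompact.nonempty_iInter_of_sequence_nonempty_isCompact_isClosed t
    (fun N y hy j hj => hy j (hj.trans N.lt_succ_self)) nonempty_t (isClosed_t 0).isCompact
    isClosed_t
  exact ⟨y, fun j => mem_iInter.1 hy (j + 1) j j.lt_succ_self⟩

/-- The first digit of the word exists and is at least `2`. Cutting a digit sequence into such
words keeps every tail in `(0, 1/2]`, hence uniformly away from `1`. -/
def TwoLeHead (w : List ℕ+) : Prop := ∃ a v, w = a :: v ∧ 2 ≤ a

theorem TwoLeHead.cfEval_mem_Ioc {w : List ℕ+} (hw : TwoLeHead w) {y : ℝ} (hy : 0 ≤ y) :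
    cfEval w y ∈ Ioc (0 : ℝ) 2⁻¹ := by
  obtain ⟨a, v, rfl, ha⟩ := hw
  have h := cfEval_cons_mem_Ioc a v hy
  have ha' : (2 : ℝ) ≤ a := by exact_mod_cast ha
  exact ⟨h.1, h.2.trans (by gcongr)⟩

/-- The concatenation `ω₀ ω₁ ⋯ ω_{j-1}`. -/
def cfPrefix (ω : ℕ → List ℕ+) (j : ℕ) : List ℕ+ := (List.range j).flatMap ω

theorem cfPrefix_succ (ω : ℕ → List ℕ+) (j : ℕ) : cfPrefix ω (j + 1) = cfPrefix ω j ++ ω j := by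
  simp [cfPrefix, List.range_succ]

theorem cfPrefix_congr {ω ω' : ℕ → List ℕ+} {j : ℕ} (h : ∀ i < j, ω i = ω' i) :
    cfPrefix ω j = cfPrefix ω' j :=
  List.flatMap_congr fun i hi => h i (List.mem_range.1 hi)

theorem length_cfPrefix (ω : ℕ → List ℕ+) (j : ℕ) :
    (cfPrefix ω j).length = ∑ i ∈ Finset.range j, (ω i).length := by
  induction j with
  | zero => rfl
  | succ j ih => rw [cfPrefix_succ, List.length_append, ih, Finset.sum_range_succ]

/-- `y j` is the value of the infinite continued fraction `[ω_j, ω_{j+1}, …]`, for every `j`. -/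
def IsTailSeq (ω : ℕ → List ℕ+) (y : ℕ → ℝ) : Prop :=
  ∀ j, y j ∈ Ioc (0 : ℝ) 2⁻¹ ∧ y j = cfEval (ω j) (y (j + 1))

theorem exists_isTailSeq {ω : ℕ → List ℕ+} (hω : ∀ j, TwoLeHead (ω j)) :
    ∃ y, IsTailSeq ω y := by
  let f (j : ℕ) (y : Icc (0 : ℝ) 1) : Icc (0 : ℝ) 1 := ⟨cfEval (ω j) y, cfEval_mem_Icc _ y.2⟩
  have hf (j : ℕ) : Continuous (f j) :=
    ((continuousOn_cfEval (ω j)).comp_continuous continuous_subtype_val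
      fun y => y.2.1).subtype_mk _
  obtain ⟨y, hy⟩ := exists_backward_orbit hf
  have hy' (j : ℕ) : (y j : ℝ) = cfEval (ω j) (y (j + 1)) := congrArg Subtype.val (hy j)
  exact ⟨fun j => y j, fun j =>
    ⟨mem_of_eq_of_mem (hy' j) ((hω j).cfEval_mem_Ioc (y (j + 1)).2.1), hy' j⟩⟩

namespace IsTailSeq

variable {ω : ℕ → List ℕ+} {y : ℕ → ℝ}

theorem mem_Icc (h : IsTailSeq ω y) (j : ℕ) : y j ∈ Icc (0 : ℝ) 2⁻¹ :=
  Ioc_subset_Icc_self (h j).1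

theorem mem_Ioo (h : IsTailSeq ω y) (j : ℕ) : y j ∈ Ioo (0 : ℝ) 1 :=
  ⟨(h j).1.1, (h j).1.2.trans_lt (by norm_num)⟩

theorem eq_cfEval_cfPrefix (h : IsTailSeq ω y) (j : ℕ) : y 0 = cfEval (cfPrefix ω j) (y j) := by
  induction j with
  | zero => rfl
  | succ j ih => rw [cfPrefix_succ, cfEval_append, ← (h j).2, ih]

theorem iterate_gaussMap (h : IsTailSeq ω y) (j : ℕ) :
    gaussMap^[(cfPrefix ω j).length] (y 0) = y j := by
  rw [h.eq_cfEval_cfPrefix j, iterate_gaussMap_cfEval _ (h.mem_Ioo j)]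

theorem pq_eq (h : IsTailSeq ω y) {j : ℕ} {a : ℕ+} {w : List ℕ+} (hj : ω j = a :: w) :
    pq (y 0) ((cfPrefix ω j).length + 1) = a := by
  have hw := cfEval_mem_Ioo w (h.mem_Ioo (j + 1))
  rw [pq, Nat.add_sub_cancel, h.iterate_gaussMap, (h j).2, hj, cfEval, one_div, inv_inv,
    add_comm, Nat.floor_add_natCast hw.1.le, Nat.floor_eq_zero.2 hw.2, zero_add]

theorem irrational (h : IsTailSeq ω y) (hω : ∀ j, ω j ≠ []) : Irrational (y 0) := by
  have hlen : StrictMono fun j => (cfPrefix ω j).length := strictMono_nat_of_lt_succ fun j => by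
    simpa [cfPrefix_succ, List.length_pos_iff] using hω j
  refine irrational_of_frequently_iterate_gaussMap_ne_zero (h.mem_Ioo 0).1.le
    (hlen.tendsto_atTop.frequently (Frequently.of_forall fun j => ?_))
  rw [h.iterate_gaussMap]
  exact (h.mem_Ioo j).1.ne'

end IsTailSeq

/-! ### Mass distribution on a sequence space -/

section MassDistribution

open scoped ENNReal NNReal

theorem le_dimH_of_measure_inter_preimage_le {Ω X : Type*} [MeasurableSpace Ω] [EMetricSpace X]
    {μ : Measure Ω} {E : Set Ω} {S : Set X} {f : Ω → X} {C : ℝ≥0∞} {s : ℝ≥0} (hE : μ E ≠ 0)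
    (hf : MapsTo f E S) (hC : C ≠ ⊤)
    (h : ∀ U : Set X, μ (E ∩ f ⁻¹' U) ≤ C * Metric.ediam U ^ (s : ℝ)) : s ≤ dimH S := by
  borelize X
  let ν : OuterMeasure X := OuterMeasure.map f (OuterMeasure.restrict E μ.toOuterMeasure)
  have ν_apply (U : Set X) : ν U = μ (E ∩ f ⁻¹' U) := by
    simp [ν, inter_comm]
  have hν : ν ≤ (C + 1) • OuterMeasure.mkMetric fun r => r ^ (s : ℝ) := by
    rw [← OuterMeasure.mkMetric_smul _ (ENNReal.add_ne_top.2 ⟨hC, ENNReal.one_ne_top⟩) (by simp)]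
    refine OuterMeasure.le_mkMetric _ ν 1 one_pos fun U _ => ?_
    rw [ν_apply]
    exact (h U).trans (mul_le_mul_left le_self_add _)
  refine le_dimH_of_hausdorffMeasure_ne_zero fun h0 => hE ?_
  have hS : OuterMeasure.mkMetric (fun r => r ^ (s : ℝ)) S = 0 := by
    rwa [← Measure.mkMetric_toOuterMeasure]
  rw [← nonpos_iff_eq_zero]
  calc μ E ≤ ν S := by rw [ν_apply, inter_eq_left.2 (mapsTo_iff_subset_preimage.1 hf)]
    _ ≤ (C + 1) * OuterMeasure.mkMetric (fun r => r ^ (s : ℝ)) S := hν S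
    _ = 0 := by rw [hS, mul_zero]

variable {α : Type*}

/-- The measure giving mass `p w` to each `w` in the finite set `D`. -/
noncomputable def weightedDirac [MeasurableSpace α] (D : Finset α) (p : α → ℝ) : Measure α :=
  ∑ w ∈ D, ENNReal.ofReal (p w) • Measure.dirac w

theorem weightedDirac_apply [MeasurableSpace α] [MeasurableSingletonClass α] {D V : Finset α}
    {p : α → ℝ} (hp : ∀ w ∈ D, 0 ≤ p w) (hV : V ⊆ D) :
    weightedDirac D p V = ENNReal.ofReal (∑ w ∈ V, p w) := by
  classical
  rw [weightedDirac, Measure.finsetSum_apply, ENNReal.ofReal_sum_of_nonneg fun w hw => hp w (hV hw),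
    ← Finset.sum_subset hV fun w _ hw => by simp [Measure.dirac_apply' _ V.measurableSet, hw]]
  exact Finset.sum_congr rfl fun w hw => by simp [Measure.dirac_apply' _ V.measurableSet, hw]

theorem isProbabilityMeasure_weightedDirac [MeasurableSpace α] {D : Finset α} {p : α → ℝ}
    (hp : ∀ w ∈ D, 0 ≤ p w) (hp_sum : ∑ w ∈ D, p w = 1) :
    IsProbabilityMeasure (weightedDirac D p) :=
  ⟨by simp [weightedDirac, Measure.finsetSum_apply, ← ENNReal.ofReal_sum_of_nonneg hp, hp_sum]⟩

theorem infinitePi_cylinder [MeasurableSpace α] [MeasurableSingletonClass α] (P : ℕ → Measure α)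
    [∀ j, IsProbabilityMeasure (P j)] (ω : ℕ → α) (j : ℕ) {V : Set α} (hV : MeasurableSet V) :
    Measure.infinitePi P {ω' | (∀ i < j, ω' i = ω i) ∧ ω' j ∈ V} =
      (∏ i ∈ Finset.range j, P i {ω i}) * P j V := by
  classical
  let U (i : ℕ) : Set α := if i < j then {ω i} else V
  have hU : {ω' : ℕ → α | (∀ i < j, ω' i = ω i) ∧ ω' j ∈ V} =
      Set.pi (Finset.range (j + 1) : Finset ℕ) U := by
    ext ω'
    simp only [mem_ofPred_eq, Set.mem_pi, Finset.mem_coe, Finset.mem_range,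
      Nat.forall_lt_succ_right, U, lt_irrefl, if_false]
    exact and_congr_left fun _ => forall₂_congr fun i hi => by simp [hi]
  rw [hU, Measure.infinitePi_pi _ fun i _ => by
    unfold U; split_ifs; exacts [measurableSet_singleton _, hV], Finset.prod_range_succ]
  congr 1
  · exact Finset.prod_congr rfl fun i hi => by simp [U, Finset.mem_range.1 hi]
  · simp [U]

theorem exists_branching {D : ℕ → Finset α} {A : Set (ℕ → α)} (hA : A.Nontrivial)
    (hD : ∀ ω ∈ A, ∀ i, ω i ∈ D i) :
    ∃ j, ∃ ω ∈ A, ∃ V ⊆ D j, V.Nontrivial ∧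
      (∀ ω' ∈ A, (∀ i < j, ω' i = ω i) ∧ ω' j ∈ V) ∧ ∀ w ∈ V, ∃ ω' ∈ A, ω' j = w := by
  classical
  have hex : ∃ j, ∃ ω ∈ A, ∃ ω' ∈ A, ω j ≠ ω' j := by
    obtain ⟨ω, hω, ω', hω', hne⟩ := hA
    exact (Function.ne_iff.1 hne).imp fun j hj => ⟨ω, hω, ω', hω', hj⟩
  obtain ⟨ω, hω, ω', hω', hne⟩ := Nat.find_spec hex
  have hmem {ω₁} (h₁ : ω₁ ∈ A) : ω₁ (Nat.find hex) ∈
      (D (Nat.find hex)).filter fun w => ∃ ω ∈ A, ω (Nat.find hex) = w :=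
    Finset.mem_filter.2 ⟨hD ω₁ h₁ _, ω₁, h₁, rfl⟩
  refine ⟨Nat.find hex, ω, hω, _, Finset.filter_subset _ _, ⟨_, hmem hω, _, hmem hω', hne⟩,
    fun ω₁ h₁ => ⟨fun i hi => ?_, hmem h₁⟩, fun w hw => (Finset.mem_filter.1 hw).2⟩
  by_contra h
  exact Nat.find_min hex hi ⟨ω₁, h₁, ω, hω, h⟩

theorem infinitePi_weightedDirac_cylinder [MeasurableSpace α] [MeasurableSingletonClass α]
    {D : ℕ → Finset α} {p : ℕ → α → ℝ} (hp : ∀ j, ∀ w ∈ D j, 0 ≤ p j w)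
    [∀ j, IsProbabilityMeasure (weightedDirac (D j) (p j))] {ω : ℕ → α} (hω : ∀ i, ω i ∈ D i)
    {j : ℕ} {V : Finset α} (hV : V ⊆ D j) :
    Measure.infinitePi (fun j => weightedDirac (D j) (p j))
        {ω' | (∀ i < j, ω' i = ω i) ∧ ω' j ∈ V} =
      ENNReal.ofReal ((∏ i ∈ Finset.range j, p i (ω i)) * ∑ w ∈ V, p j w) := by
  have hsingle (i : ℕ) : weightedDirac (D i) (p i) {ω i} = ENNReal.ofReal (p i (ω i)) := by
    simpa using weightedDirac_apply (hp i) (Finset.singleton_subset_iff.2 (hω i))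
  refine (infinitePi_cylinder _ ω j V.measurableSet).trans ?_
  rw [weightedDirac_apply (hp j) hV, Finset.prod_congr rfl fun i _ => hsingle i,
    ← ENNReal.ofReal_prod_of_nonneg fun i _ => hp i _ (hω i),
    ← ENNReal.ofReal_mul (Finset.prod_nonneg fun i _ => hp i _ (hω i))]

theorem ae_infinitePi_weightedDirac_mem [MeasurableSpace α] [MeasurableSingletonClass α]
    {D : ℕ → Finset α} {p : ℕ → α → ℝ} (hp : ∀ j, ∀ w ∈ D j, 0 ≤ p j w)
    (hp_sum : ∀ j, ∑ w ∈ D j, p j w = 1)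
    [∀ j, IsProbabilityMeasure (weightedDirac (D j) (p j))] :
    ∀ᵐ ω ∂Measure.infinitePi (fun j => weightedDirac (D j) (p j)), ∀ i, ω i ∈ D i := by
  refine ae_all_iff.2 fun i => (measurePreserving_eval_infinitePi
    (fun j => weightedDirac (D j) (p j)) i).quasiMeasurePreserving.ae (p := (· ∈ D i)) ?_
  rw [ae_iff, ← compl_ofPred, prob_compl_eq_zero_iff (s := {w | w ∈ D i}) (D i).measurableSet]
  simpa [hp_sum] using weightedDirac_apply (hp i) (subset_refl (D i))

theorem infinitePi_weightedDirac_subsingleton [MeasurableSpace α] [MeasurableSingletonClass α]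
    {D : ℕ → Finset α} {p : ℕ → α → ℝ} (hp : ∀ j, ∀ w ∈ D j, 0 ≤ p j w)
    (hp_sum : ∀ j, ∑ w ∈ D j, p j w = 1) (hp_half : ∀ j, ∀ w ∈ D j, p j w ≤ 1 / 2)
    [∀ j, IsProbabilityMeasure (weightedDirac (D j) (p j))] {A : Set (ℕ → α)}
    (hA : A.Subsingleton) (hD : ∀ ω ∈ A, ∀ i, ω i ∈ D i) :
    Measure.infinitePi (fun j => weightedDirac (D j) (p j)) A = 0 := by
  rcases hA.eq_empty_or_singleton with rfl | ⟨ω, rfl⟩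
  · exact measure_empty
  have hω := hD ω rfl
  have hle (j : ℕ) : Measure.infinitePi (fun j => weightedDirac (D j) (p j)) {ω} ≤
      ENNReal.ofReal ((1 / 2) ^ j) := by
    calc _ ≤ Measure.infinitePi (fun j => weightedDirac (D j) (p j))
            {ω' | (∀ i < j, ω' i = ω i) ∧ ω' j ∈ D j} :=
          measure_mono (singleton_subset_iff.2 ⟨fun _ _ => rfl, hω j⟩)
      _ = ENNReal.ofReal (∏ i ∈ Finset.range j, p i (ω i)) := by
          rw [infinitePi_weightedDirac_cylinder hp hω subset_rfl, hp_sum, mul_one]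
      _ ≤ ENNReal.ofReal ((1 / 2) ^ j) := by
          gcongr
          exact (Finset.prod_le_prod (fun i _ => hp i _ (hω i))
            fun i _ => hp_half i _ (hω i)).trans_eq (by simp)
  have hlim : Tendsto (fun j : ℕ => ENNReal.ofReal ((1 / 2) ^ j)) atTop (nhds 0) := by
    rw [← ENNReal.ofReal_zero]
    exact ENNReal.tendsto_ofReal
      (tendsto_pow_atTop_nhds_zero_of_lt_one (by norm_num) (by norm_num))
  exact nonpos_iff_eq_zero.1 (ge_of_tendsto' hlim hle)

theorem le_dimH_of_coding {X : Type*} [MetricSpace X] {D : ℕ → Finset α} {p : ℕ → α → ℝ}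
    {Y : (ℕ → α) → X} {S : Set X} {s : ℝ≥0} {C : ℝ} (hp : ∀ j, ∀ w ∈ D j, 0 ≤ p j w)
    (hp_sum : ∀ j, ∑ w ∈ D j, p j w = 1) (hp_half : ∀ j, ∀ w ∈ D j, p j w ≤ 1 / 2)
    (hS : ∀ ω, (∀ i, ω i ∈ D i) → Y ω ∈ S)
    (hsep : ∀ j, ∀ V ⊆ D j, V.Nontrivial → ∃ w ∈ V, ∃ w' ∈ V, ∀ ω ω' : ℕ → α,
      (∀ i, ω i ∈ D i) → (∀ i, ω' i ∈ D i) → (∀ i < j, ω i = ω' i) → ω j = w → ω' j = w' →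
      (∏ i ∈ Finset.range j, p i (ω i)) * ∑ w ∈ V, p j w ≤ C * dist (Y ω) (Y ω') ^ (s : ℝ)) :
    s ≤ dimH S := by
  let _ : MeasurableSpace α := ⊤
  have _ (j : ℕ) : IsProbabilityMeasure (weightedDirac (D j) (p j)) :=
    isProbabilityMeasure_weightedDirac (hp j) (hp_sum j)
  let μ : Measure (ℕ → α) := Measure.infinitePi fun j => weightedDirac (D j) (p j)
  let E : Set (ℕ → α) := {ω | ∀ i, ω i ∈ D i}
  have hE : ∀ᵐ ω ∂μ, ω ∈ E := ae_infinitePi_weightedDirac_mem hp hp_sum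
  refine le_dimH_of_measure_inter_preimage_le (μ := μ) (E := E) (f := Y)
    (C := ENNReal.ofReal C) (fun h => ?_) hS ENNReal.ofReal_ne_top fun U => ?_
  · obtain ⟨ω, hω, hω'⟩ := (hE.and (measure_eq_zero_iff_ae_notMem.1 h)).exists
    exact hω' hω
  rcases (E ∩ Y ⁻¹' U).subsingleton_or_nontrivial with hU | hU
  · exact (infinitePi_weightedDirac_subsingleton hp hp_sum hp_half hU fun ω hω => hω.1).trans_le
      zero_le
  obtain ⟨j, ω, -, V, hV, hVnt, hcyl, hsurj⟩ := exists_branching hU fun ω hω => hω.1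
  obtain ⟨w, hw, w', hw', hdist⟩ := hsep j V hV hVnt
  obtain ⟨ω₁, hω₁, rfl⟩ := hsurj w hw
  obtain ⟨ω₂, hω₂, rfl⟩ := hsurj w' hw'
  have hpre {i : ℕ} (hi : i < j) : ω₁ i = ω i := (hcyl ω₁ hω₁).1 i hi
  calc μ (E ∩ Y ⁻¹' U) ≤ μ {ω' | (∀ i < j, ω' i = ω₁ i) ∧ ω' j ∈ V} :=
        measure_mono fun ω' h =>
          ⟨fun i hi => ((hcyl ω' h).1 i hi).trans (hpre hi).symm, (hcyl ω' h).2⟩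
    _ = ENNReal.ofReal ((∏ i ∈ Finset.range j, p i (ω₁ i)) * ∑ w ∈ V, p j w) :=
        infinitePi_weightedDirac_cylinder hp hω₁.1 hV
    _ ≤ ENNReal.ofReal (C * dist (Y ω₁) (Y ω₂) ^ (s : ℝ)) :=
        ENNReal.ofReal_le_ofReal (hdist ω₁ ω₂ hω₁.1 hω₂.1
          (fun i hi => (hpre hi).trans ((hcyl ω₂ hω₂).1 i hi).symm) rfl rfl)
    _ = ENNReal.ofReal C * edist (Y ω₁) (Y ω₂) ^ (s : ℝ) := by
        rw [ENNReal.ofReal_mul' (by positivity), edist_dist,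
          ENNReal.ofReal_rpow_of_nonneg dist_nonneg s.coe_nonneg]
    _ ≤ ENNReal.ofReal C * Metric.ediam U ^ (s : ℝ) := by
        gcongr
        exact Metric.edist_le_ediam_of_mem hω₁.2 hω₂.2

end MassDistribution

/-! ### Mass distribution on continued fractions -/

/-- A finite set `D` of words with probability weights `p`, fit for one step of the construction of
a Cantor set of dimension at least `s`. If the previous digits form the word `u`, appending `w ∈ D`
multiplies mass `* cfDen ^ (2 * s)` by at most `ρ`, and the mass of each `V ⊆ D` is at most `B`
times the `s`-th power of the distance between two cylinders of `V` (before contraction by `u`). -/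
structure IsAdmissibleStep (s ρ B : ℝ) (D : Finset (List ℕ+)) (p : List ℕ+ → ℝ) : Prop where
  twoLeHead : ∀ w ∈ D, TwoLeHead w
  nonneg : ∀ w ∈ D, 0 ≤ p w
  sum_eq_one : ∑ w ∈ D, p w = 1
  le_half : ∀ w ∈ D, p w ≤ 1 / 2
  growth : ∀ w ∈ D, ∀ u, p w * (cfDen (u ++ w) : ℝ) ^ (2 * s) ≤ ρ * (cfDen u : ℝ) ^ (2 * s)
  separated : ∀ V ⊆ D, V.Nontrivial → ∃ w ∈ V, ∃ w' ∈ V, ∃ g : ℝ, 0 ≤ g ∧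
    (∀ y ∈ Icc (0 : ℝ) 2⁻¹, ∀ y' ∈ Icc (0 : ℝ) 2⁻¹, g ≤ |cfEval w y - cfEval w' y'|) ∧
    ∑ w ∈ V, p w ≤ B * g ^ s

theorem IsAdmissibleStep.factor_nonneg {s ρ B : ℝ} {D : Finset (List ℕ+)} {p : List ℕ+ → ℝ}
    (h : IsAdmissibleStep s ρ B D p) {w : List ℕ+} (hw : w ∈ D) : 0 ≤ ρ := by
  have hle := h.growth w hw []
  have hden := cfDen_pos []
  exact nonneg_of_mul_nonneg_left ((mul_nonneg (h.nonneg w hw) (by positivity)).trans hle)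
    (by positivity)

theorem le_abs_sub_of_isTailSeq {ω ω' : ℕ → List ℕ+} {y y' : ℕ → ℝ} {j : ℕ} {g : ℝ}
    (hy : IsTailSeq ω y) (hy' : IsTailSeq ω' y') (hpre : ∀ i < j, ω i = ω' i)
    (hg : ∀ z ∈ Icc (0 : ℝ) 2⁻¹, ∀ z' ∈ Icc (0 : ℝ) 2⁻¹,
      g ≤ |cfEval (ω j) z - cfEval (ω' j) z'|) :
    g / (4 * (cfDen (cfPrefix ω j) : ℝ) ^ 2) ≤ |y 0 - y' 0| := by
  rw [hy.eq_cfEval_cfPrefix j, hy'.eq_cfEval_cfPrefix j, ← cfPrefix_congr hpre]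
  refine le_trans ?_ (abs_sub_div_le_abs_cfEval_sub _ (Ioo_subset_Icc_self (hy.mem_Ioo j))
    (Ioo_subset_Icc_self (hy'.mem_Ioo j)))
  gcongr
  rw [(hy j).2, (hy' j).2]
  exact hg _ (hy.mem_Icc (j + 1)) _ (hy'.mem_Icc (j + 1))

section

variable {s C : ℝ} {ρ τ : ℕ → ℝ} {D : ℕ → Finset (List ℕ+)} {p : ℕ → List ℕ+ → ℝ}

theorem prod_mul_cfDen_rpow_le {B : ℕ → ℝ} (h : ∀ j, IsAdmissibleStep s (ρ j) (B j) (D j) (p j))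
    {ω : ℕ → List ℕ+} (hω : ∀ i, ω i ∈ D i) (j : ℕ) :
    (∏ i ∈ Finset.range j, p i (ω i)) * (cfDen (cfPrefix ω j) : ℝ) ^ (2 * s) ≤
      ∏ i ∈ Finset.range j, ρ i := by
  induction j with
  | zero => simp [cfPrefix, cfDen]
  | succ j ih =>
    rw [Finset.prod_range_succ, Finset.prod_range_succ, cfPrefix_succ, mul_assoc]
    calc _ ≤ (∏ i ∈ Finset.range j, p i (ω i)) *
          (ρ j * (cfDen (cfPrefix ω j) : ℝ) ^ (2 * s)) :=
          mul_le_mul_of_nonneg_left ((h j).growth _ (hω j) _)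
            (Finset.prod_nonneg fun i _ => (h i).nonneg _ (hω i))
      _ = (∏ i ∈ Finset.range j, p i (ω i)) * (cfDen (cfPrefix ω j) : ℝ) ^ (2 * s) * ρ j := by
          ring
      _ ≤ (∏ i ∈ Finset.range j, ρ i) * ρ j :=
          mul_le_mul_of_nonneg_right ih ((h j).factor_nonneg (hω j))

theorem prod_mul_sum_mul_cfDen_rpow_le (hC : 0 ≤ C)
    (h : ∀ j, IsAdmissibleStep s (ρ j) (C * τ j) (D j) (p j))
    (hτ : ∀ j, (∏ i ∈ Finset.range j, ρ i) * τ j ≤ 1) {ω : ℕ → List ℕ+} (hω : ∀ i, ω i ∈ D i)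
    {j : ℕ} {V : Finset (List ℕ+)} (hV : V ⊆ D j) {g : ℝ} (hg : 0 ≤ g)
    (hmass : ∑ w ∈ V, p j w ≤ C * τ j * g ^ s) :
    (∏ i ∈ Finset.range j, p i (ω i)) * (∑ w ∈ V, p j w) *
      (cfDen (cfPrefix ω j) : ℝ) ^ (2 * s) ≤ C * g ^ s := by
  have hρ : 0 ≤ ∏ i ∈ Finset.range j, ρ i :=
    Finset.prod_nonneg fun i _ => (h i).factor_nonneg (hω i)
  calc _ = (∏ i ∈ Finset.range j, p i (ω i)) * (cfDen (cfPrefix ω j) : ℝ) ^ (2 * s) *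
        ∑ w ∈ V, p j w := by ring
    _ ≤ (∏ i ∈ Finset.range j, ρ i) * ∑ w ∈ V, p j w := by
        gcongr
        · exact Finset.sum_nonneg fun w hw => (h j).nonneg w (hV hw)
        · exact prod_mul_cfDen_rpow_le h hω j
    _ ≤ (∏ i ∈ Finset.range j, ρ i) * (C * τ j * g ^ s) := by gcongr
    _ = (∏ i ∈ Finset.range j, ρ i) * τ j * (C * g ^ s) := by ring
    _ ≤ C * g ^ s := mul_le_of_le_one_left (by positivity) (hτ j)

theorem le_dimH_of_isAdmissibleStep {S : Set ℝ} (hs : 0 ≤ s) (hC : 0 ≤ C)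
    (h : ∀ j, IsAdmissibleStep s (ρ j) (C * τ j) (D j) (p j))
    (hτ : ∀ j, (∏ i ∈ Finset.range j, ρ i) * τ j ≤ 1)
    (hS : ∀ ω y, (∀ i, ω i ∈ D i) → IsTailSeq ω y → y 0 ∈ S) : ENNReal.ofReal s ≤ dimH S := by
  have hex (ω : ℕ → List ℕ+) : ∃ y, (∀ i, ω i ∈ D i) → IsTailSeq ω y := by
    by_cases hω : ∀ i, ω i ∈ D i
    · exact (exists_isTailSeq fun j => (h j).twoLeHead _ (hω j)).imp fun y hy _ => hy
    · exact ⟨0, fun h => absurd h hω⟩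
  choose Y hY using hex
  rw [ENNReal.ofReal_eq_coe_nnreal hs]
  refine le_dimH_of_coding (C := C * 4 ^ s) (Y := fun ω => Y ω 0)
    (fun j => (h j).nonneg) (fun j => (h j).sum_eq_one) (fun j => (h j).le_half)
    (fun ω hω => hS ω _ hω (hY ω hω)) fun j V hV hVnt => ?_
  obtain ⟨w, hw, w', hw', g, hg, hgap, hmass⟩ := (h j).separated V hV hVnt
  refine ⟨w, hw, w', hw', fun ω ω' hω hω' hpre hωj hω'j => ?_⟩
  subst hωj hω'j
  have hq : (0 : ℝ) < cfDen (cfPrefix ω j) := by exact_mod_cast cfDen_pos _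
  have hscale : C * 4 ^ s * (g / (4 * (cfDen (cfPrefix ω j) : ℝ) ^ 2)) ^ s =
      C * g ^ s / (cfDen (cfPrefix ω j) : ℝ) ^ (2 * s) := by
    rw [Real.div_rpow hg (by positivity), Real.mul_rpow (by norm_num) (by positivity),
      ← Real.rpow_natCast_mul hq.le]
    push_cast
    field_simp
  calc _ ≤ C * g ^ s / (cfDen (cfPrefix ω j) : ℝ) ^ (2 * s) := by
        rw [le_div_iff₀ (by positivity)]
        exact prod_mul_sum_mul_cfDen_rpow_le hC h hτ hω hV hg hmass
    _ = C * 4 ^ s * (g / (4 * (cfDen (cfPrefix ω j) : ℝ) ^ 2)) ^ s := hscale.symm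
    _ ≤ C * 4 ^ s * dist (Y ω 0) (Y ω' 0) ^ s := by
        rw [Real.dist_eq]
        gcongr
        exact le_abs_sub_of_isTailSeq (hY ω hω) (hY ω' hω') hpre hgap

end

/-! ### Free steps and block steps -/

theorem IsAdmissibleStep.mono {s ρ ρ' B B' : ℝ} {D : Finset (List ℕ+)} {p : List ℕ+ → ℝ}
    (h : IsAdmissibleStep s ρ B D p) (hρ : ρ ≤ ρ') (hB : B ≤ B') :
    IsAdmissibleStep s ρ' B' D p where
  __ := h
  growth w hw u := (h.growth w hw u).trans (by gcongr)
  separated V hV hVnt := by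
    obtain ⟨w, hw, w', hw', g, hg, hgap, hmass⟩ := h.separated V hV hVnt
    exact ⟨w, hw, w', hw', g, hg, hgap, hmass.trans (by gcongr)⟩

theorem abs_cfEval_sub_cfEval_lt_one {w w' : List ℕ+} (hlen : w.length = w'.length) {y y' : ℝ}
    (hy : y ∈ Icc (0 : ℝ) 2⁻¹) (hy' : y' ∈ Icc (0 : ℝ) 2⁻¹) :
    |cfEval w y - cfEval w' y'| < 1 := by
  rw [abs_sub_lt_iff]
  match w, w', hlen with
  | [], [], _ =>
    norm_num [cfEval] at hy hy' ⊢
    constructor <;> linarith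
  | a :: v, b :: v', _ =>
    have le_one {c : ℕ+} : (c : ℝ)⁻¹ ≤ 1 := inv_le_one_of_one_le₀ (by exact_mod_cast one_le)
    obtain ⟨hpos, hle⟩ := cfEval_cons_mem_Ioc a v hy.1
    obtain ⟨hpos', hle'⟩ := cfEval_cons_mem_Ioc b v' hy'.1
    constructor <;> linarith [hle.trans le_one, hle'.trans le_one]

theorem eq_of_cfEval_eq {w w' : List ℕ+} (hlen : w.length = w'.length) {y y' : ℝ}
    (hy : y ∈ Icc (0 : ℝ) 2⁻¹) (hy' : y' ∈ Icc (0 : ℝ) 2⁻¹) (h : cfEval w y = cfEval w' y') :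
    w = w' := by
  induction w generalizing w' with
  | nil => exact (List.length_eq_zero_iff.1 hlen.symm).symm
  | cons a v ih =>
    obtain _ | ⟨b, v'⟩ := w'
    · simp at hlen
    have hlen' : v.length = v'.length := Nat.succ_injective hlen
    have hsum : (a : ℝ) + cfEval v y = b + cfEval v' y' := inv_injective h
    obtain ⟨h₁, h₂⟩ := abs_sub_lt_iff.1 (abs_cfEval_sub_cfEval_lt_one hlen' hy hy')
    have hab : (a : ℕ) < b + 1 := by exact_mod_cast (by linarith : (a : ℝ) < b + 1)
    have hba : (b : ℕ) < a + 1 := by exact_mod_cast (by linarith : (b : ℝ) < a + 1)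
    obtain rfl : a = b := PNat.coe_injective (by omega)
    rw [ih hlen' (by linarith)]

theorem eventually_le_abs_cfEval_sub {w w' : List ℕ+} (hlen : w.length = w'.length)
    (hne : w ≠ w') : ∀ᶠ g in nhdsWithin (0 : ℝ) (Ioi 0),
      ∀ y ∈ Icc (0 : ℝ) 2⁻¹, ∀ y' ∈ Icc (0 : ℝ) 2⁻¹, g ≤ |cfEval w y - cfEval w' y'| := by
  have hcont : ContinuousOn (fun z : ℝ × ℝ => |cfEval w z.1 - cfEval w' z.2|)
      (Icc 0 2⁻¹ ×ˢ Icc 0 2⁻¹) :=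
    (((continuousOn_cfEval w).comp continuousOn_fst fun z hz => hz.1.1).sub
      ((continuousOn_cfEval w').comp continuousOn_snd fun z hz => hz.2.1)).abs
  obtain ⟨z, hz, hmin⟩ := (isCompact_Icc.prod isCompact_Icc).exists_isMinOn
    ⟨(0, 0), by norm_num⟩ hcont
  have hpos : 0 < |cfEval w z.1 - cfEval w' z.2| :=
    abs_pos.2 (sub_ne_zero.2 fun h => hne (eq_of_cfEval_eq hlen hz.1 hz.2 h))
  filter_upwards [Ioc_mem_nhdsGT hpos] with g hg y hy y' hy'
  exact hg.2.trans (hmin (mk_mem_prod hy hy'))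

theorem exists_pos_le_abs_cfEval_sub {D : Finset (List ℕ+)} {n : ℕ}
    (hD : ∀ w ∈ D, w.length = n) : ∃ g > 0, ∀ w ∈ D, ∀ w' ∈ D, w ≠ w' →
      ∀ y ∈ Icc (0 : ℝ) 2⁻¹, ∀ y' ∈ Icc (0 : ℝ) 2⁻¹, g ≤ |cfEval w y - cfEval w' y'| := by
  have h : ∀ᶠ g in nhdsWithin (0 : ℝ) (Ioi 0), ∀ z ∈ D.offDiag,
      ∀ y ∈ Icc (0 : ℝ) 2⁻¹, ∀ y' ∈ Icc (0 : ℝ) 2⁻¹, g ≤ |cfEval z.1 y - cfEval z.2 y'| := by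
    refine (Finset.eventually_all _).2 fun z hz => ?_
    obtain ⟨hz₁, hz₂, hne⟩ := Finset.mem_offDiag.1 hz
    exact eventually_le_abs_cfEval_sub ((hD _ hz₁).trans (hD _ hz₂).symm) hne
  obtain ⟨g, hg, hpos⟩ := (h.and self_mem_nhdsWithin).exists
  exact ⟨g, hpos, fun w hw w' hw' hne => hg (w, w') (Finset.mem_offDiag.2 ⟨hw, hw', hne⟩)⟩

theorem rpow_two_mul_le_sq {x s : ℝ} (hx : 1 ≤ x) (hs : s ≤ 1) : x ^ (2 * s) ≤ x ^ 2 := by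
  rw [← Real.rpow_natCast]
  exact Real.rpow_le_rpow_of_exponent_le hx (by push_cast; linarith)

/-- The pressure sum `∑ q(w) ^ (-2s)` over a finite set `W` of words. -/
noncomputable def cfSum (s : ℝ) (W : Finset (List ℕ+)) : ℝ :=
  ∑ w ∈ W, (cfDen w : ℝ) ^ (-(2 * s))

/-- The words of a free step: those of `W`, each preceded by a digit `2` which keeps the tails in
`(0, 1/2]`. -/
def freeWords (W : Finset (List ℕ+)) : Finset (List ℕ+) := W.image (2 :: ·)

/-- The Gibbs weights `q(w) ^ (-2s)`, normalized to a probability on `freeWords W`; the leading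
digit `2` is ignored. -/
noncomputable def freeWeight (s : ℝ) (W : Finset (List ℕ+)) (w : List ℕ+) : ℝ :=
  (cfDen w.tail : ℝ) ^ (-(2 * s)) / cfSum s W

theorem sum_freeWeight {s : ℝ} {W : Finset (List ℕ+)} (hW : 0 < cfSum s W) :
    ∑ w ∈ freeWords W, freeWeight s W w = 1 := by
  rw [freeWords, Finset.sum_image (List.cons_injective.injOn)]
  simp only [freeWeight, List.tail_cons]
  rw [← Finset.sum_div, ← cfSum, div_self hW.ne']

theorem freeWeight_mul_cfDen_rpow_le {s : ℝ} (hs : 0 ≤ s) (hs1 : s ≤ 1) {W : Finset (List ℕ+)}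
    (hW : 0 < cfSum s W) (u v : List ℕ+) :
    freeWeight s W (2 :: v) * (cfDen (u ++ 2 :: v) : ℝ) ^ (2 * s) ≤
      36 / cfSum s W * (cfDen u : ℝ) ^ (2 * s) := by
  have hv : (0 : ℝ) < cfDen v := by exact_mod_cast cfDen_pos v
  have hden : (cfDen (u ++ 2 :: v) : ℝ) ≤ 6 * (cfDen u * cfDen v) := by
    have : cfDen (u ++ 2 :: v) ≤ 2 * (2 + 1) * cfDen u * cfDen v := cfDen_append_cons_le u 2 v
    exact_mod_cast (by linarith : cfDen (u ++ 2 :: v) ≤ 6 * (cfDen u * cfDen v))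
  have h36 : (6 : ℝ) ^ (2 * s) ≤ 36 := (rpow_two_mul_le_sq (by norm_num) hs1).trans (by norm_num)
  rw [freeWeight, List.tail_cons, Real.rpow_neg hv.le]
  calc _ ≤ ((cfDen v : ℝ) ^ (2 * s))⁻¹ / cfSum s W * (6 * (cfDen u * cfDen v)) ^ (2 * s) := by
        gcongr
    _ = 6 ^ (2 * s) / cfSum s W * (cfDen u : ℝ) ^ (2 * s) := by
        rw [Real.mul_rpow (by norm_num) (by positivity), Real.mul_rpow (by positivity) hv.le]
        field_simp
    _ ≤ _ := by gcongr

theorem exists_isAdmissibleStep_freeWords {s : ℝ} (hs : 0 ≤ s) (hs1 : s ≤ 1)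
    {W : Finset (List ℕ+)} {n : ℕ} (hlen : ∀ w ∈ W, w.length = n) (hW : 2 ≤ cfSum s W) :
    ∃ B, IsAdmissibleStep s (36 / cfSum s W) B (freeWords W) (freeWeight s W) := by
  have hpos : 0 < cfSum s W := by linarith
  have hlen' : ∀ w ∈ freeWords W, w.length = n + 1 :=
    Finset.forall_mem_image.2 fun v hv => by rw [List.length_cons, hlen v hv]
  have hnonneg (w : List ℕ+) : 0 ≤ freeWeight s W w := div_nonneg (by positivity) hpos.le
  obtain ⟨g, hg, hgap⟩ := exists_pos_le_abs_cfEval_sub hlen'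
  refine ⟨(g ^ s)⁻¹, ⟨Finset.forall_mem_image.2 fun v _ => ⟨2, v, rfl, le_rfl⟩,
    fun w _ => hnonneg w, sum_freeWeight hpos, fun w _ => ?_,
    Finset.forall_mem_image.2 fun v _ u => freeWeight_mul_cfDen_rpow_le hs hs1 hpos u v,
    fun V hV hVnt => ?_⟩⟩
  · have hden : (1 : ℝ) ≤ cfDen w.tail := by exact_mod_cast cfDen_pos w.tail
    exact div_le_div₀ zero_le_one (Real.rpow_le_one_of_one_le_of_nonpos hden (by linarith))
      two_pos hW
  · obtain ⟨w, hw, w', hw', hne⟩ := hVnt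
    refine ⟨w, hw, w', hw', g, hg.le, hgap w (hV hw) w' (hV hw') hne, ?_⟩
    rw [inv_mul_cancel₀ (by positivity), ← sum_freeWeight hpos]
    exact Finset.sum_le_sum_of_subset_of_nonneg hV fun w _ _ => hnonneg w

/-- The one-letter words of a block step of size `N`: the digits in `[N, 2N)`. -/
noncomputable def blockWords (N : ℝ) : Finset (List ℕ+) :=
  (Finset.Ico ⌈N⌉₊.toPNat' ⌈2 * N⌉₊.toPNat').image ([·])

theorem mem_blockWords {N : ℝ} (hN : 0 < N) {w : List ℕ+} :
    w ∈ blockWords N ↔ ∃ a : ℕ+, w = [a] ∧ N ≤ a ∧ (a : ℝ) < 2 * N := by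
  have hpos : 0 < ⌈N⌉₊ := Nat.ceil_pos.2 hN
  have hpos' : 0 < ⌈2 * N⌉₊ := Nat.ceil_pos.2 (by linarith)
  simp only [blockWords, Finset.mem_image, Finset.mem_Ico, ← PNat.coe_le_coe, ← PNat.coe_lt_coe,
    Nat.toPNat'_coe, hpos, hpos', if_true, Nat.ceil_le, Nat.lt_ceil]
  exact exists_congr fun a => by rw [and_comm, eq_comm]

theorem half_le_card_blockWords {N : ℝ} (hN : 4 ≤ N) : N / 2 ≤ (blockWords N).card := by
  have hpos : 0 < ⌈N⌉₊ := Nat.ceil_pos.2 (by linarith)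
  have hpos' : 0 < ⌈2 * N⌉₊ := Nat.ceil_pos.2 (by linarith)
  rw [blockWords, Finset.card_image_of_injective _ List.singleton_injective, PNat.card_Ico,
    Nat.toPNat'_coe, Nat.toPNat'_coe, if_pos hpos, if_pos hpos',
    Nat.cast_sub (Nat.ceil_le_ceil (by linarith))]
  linarith [Nat.ceil_lt_add_one (show 0 ≤ N by linarith), Nat.le_ceil (2 * N)]

theorem inv_card_blockWords_le {N : ℝ} (hN : 4 ≤ N) : ((blockWords N).card : ℝ)⁻¹ ≤ 2 / N := by
  rw [← inv_div]
  exact inv_anti₀ (by linarith) (half_le_card_blockWords hN)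

theorem le_abs_cfEval_singleton_sub {N : ℝ} {a b : ℕ+} (hN : 1 ≤ N) (hab : a < b)
    (hb : (b : ℝ) < 2 * N) {y y' : ℝ} (hy : y ∈ Icc (0 : ℝ) 2⁻¹) (hy' : y' ∈ Icc (0 : ℝ) 2⁻¹) :
    ((b : ℝ) - a) / (32 * N ^ 2) ≤ |cfEval [a] y - cfEval [b] y'| := by
  obtain ⟨hy0, hy1⟩ := hy
  obtain ⟨hy0', hy1'⟩ := hy'
  have ha1 : (1 : ℝ) ≤ a := by exact_mod_cast one_le
  have hab' : (a : ℝ) + 1 ≤ b := by exact_mod_cast Order.add_one_le_of_lt hab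
  have hdiff : cfEval [a] y - cfEval [b] y' = (b + y' - (a + y)) / ((a + y) * (b + y')) := by
    have : (a : ℝ) + y ≠ 0 := by positivity
    have : (b : ℝ) + y' ≠ 0 := by positivity
    simp only [cfEval]
    field_simp
  norm_num at hy1 hy1'
  rw [hdiff, show ((b : ℝ) - a) / (32 * N ^ 2) = ((b - a) / 2) / (4 * N * (4 * N)) by ring]
  refine (div_le_div₀ ?_ ?_ ?_ ?_).trans (le_abs_self _)
  · linarith
  · linarith
  · positivity
  · exact mul_le_mul (by linarith) (by linarith) (by positivity) (by positivity)

theorem exists_extremes_of_subset_blockWords {N : ℝ} (hN : 0 < N) {V : Finset (List ℕ+)}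
    (hV : V ⊆ blockWords N) (hVnt : V.Nontrivial) : ∃ a b : ℕ+, [a] ∈ V ∧ [b] ∈ V ∧ a < b ∧
      N ≤ a ∧ (b : ℝ) < 2 * N ∧ (V.card : ℝ) ≤ 2 * (b - a) := by
  obtain ⟨w, hw, hmin⟩ := V.exists_min_image (·.headI) hVnt.nonempty
  obtain ⟨w', hw', hmax⟩ := V.exists_max_image (·.headI) hVnt.nonempty
  obtain ⟨a, rfl, haN, -⟩ := (mem_blockWords hN).1 (hV hw)
  obtain ⟨b, rfl, -, hbN⟩ := (mem_blockWords hN).1 (hV hw')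
  have hsub : V ⊆ (Finset.Icc a b).image ([·]) := fun v hv => by
    obtain ⟨k, rfl, -, -⟩ := (mem_blockWords hN).1 (hV hv)
    exact Finset.mem_image_of_mem _ (Finset.mem_Icc.2 ⟨hmin _ hv, hmax _ hv⟩)
  have hcard : V.card ≤ b + 1 - a :=
    (Finset.card_le_card hsub).trans (Finset.card_image_le.trans (PNat.card_Icc a b).le)
  have hone : 1 < V.card := Finset.one_lt_card_iff_nontrivial.2 hVnt
  have hcard2 : V.card + 2 * a ≤ 2 * b := by omega
  refine ⟨a, b, hw, hw', PNat.coe_lt_coe a b |>.1 (by omega), haN, hbN, ?_⟩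
  have : (V.card : ℝ) + 2 * a ≤ 2 * b := by exact_mod_cast hcard2
  linarith

theorem inv_card_mul_cfDen_append_singleton_le {s N : ℝ} (hs : 0 ≤ s) (hs1 : s ≤ 1) (hN : 4 ≤ N)
    {a : ℕ+} (ha : (a : ℝ) < 2 * N) (u : List ℕ+) :
    ((blockWords N).card : ℝ)⁻¹ * (cfDen (u ++ [a]) : ℝ) ^ (2 * s) ≤
      32 * N ^ (2 * s - 1) * (cfDen u : ℝ) ^ (2 * s) := by
  have hN0 : 0 < N := by linarith
  have hden : (cfDen (u ++ [a]) : ℝ) ≤ 4 * (N * cfDen u) := by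
    have : (cfDen (u ++ [a]) : ℝ) ≤ (a + 1) * cfDen u := by
      exact_mod_cast cfDen_append_singleton_le u a
    exact this.trans (by rw [← mul_assoc]; gcongr; linarith)
  have h16 : (4 : ℝ) ^ (2 * s) ≤ 16 := (rpow_two_mul_le_sq (by norm_num) hs1).trans (by norm_num)
  calc _ ≤ 2 / N * (4 * (N * cfDen u)) ^ (2 * s) := by
        gcongr
        exact inv_card_blockWords_le hN
    _ = 2 * 4 ^ (2 * s) * N ^ (2 * s - 1) * (cfDen u : ℝ) ^ (2 * s) := by
        rw [Real.mul_rpow (by norm_num) (by positivity), Real.mul_rpow hN0.le (by positivity),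
          Real.rpow_sub_one hN0.ne']
        ring
    _ ≤ 2 * 16 * N ^ (2 * s - 1) * (cfDen u : ℝ) ^ (2 * s) := by gcongr
    _ = _ := by ring

theorem sum_inv_card_blockWords_le {s N T : ℝ} (hs1 : s ≤ 1) (hN : 4 ≤ N) (hT0 : 0 < T)
    (hTN : T ≤ N) {V : Finset (List ℕ+)} (hV : (V.card : ℝ) ≤ 2 * T) :
    ∑ _w ∈ V, ((blockWords N).card : ℝ)⁻¹ ≤ 4 * 32 ^ s * N ^ s * (T / (32 * N ^ 2)) ^ s := by
  have hN0 : 0 < N := by linarith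
  calc ∑ _w ∈ V, ((blockWords N).card : ℝ)⁻¹ ≤ 2 * T * (2 / N) := by
        rw [Finset.sum_const, nsmul_eq_mul]
        gcongr
        exact inv_card_blockWords_le hN
    _ = 4 * (T / N) := by ring
    _ ≤ 4 * (T / N) ^ s := by
        gcongr
        exact Real.self_le_rpow_of_le_one (by positivity) ((div_le_one hN0).2 hTN) hs1
    _ = 4 * (32 * N * (T / (32 * N ^ 2))) ^ s := by
        congr 2
        field_simp
    _ = _ := by
        rw [Real.mul_rpow (by positivity) (by positivity), Real.mul_rpow (by norm_num) hN0.le]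
        ring

theorem isAdmissibleStep_blockWords {s N : ℝ} (hs : 0 ≤ s) (hs1 : s ≤ 1) (hN : 4 ≤ N) :
    IsAdmissibleStep s (32 * N ^ (2 * s - 1)) (4 * 32 ^ s * N ^ s) (blockWords N)
      fun _ => ((blockWords N).card : ℝ)⁻¹ := by
  have hN0 : 0 < N := by linarith
  have hcard : 2 ≤ ((blockWords N).card : ℝ) := by linarith [half_le_card_blockWords hN]
  refine ⟨fun w hw => ?_, fun _ _ => by positivity, ?_, fun _ _ => ?_, fun w hw u => ?_,
    fun V hV hVnt => ?_⟩
  · obtain ⟨a, rfl, ha, -⟩ := (mem_blockWords hN0).1 hw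
    have ha2 : 2 ≤ (a : ℕ) := by exact_mod_cast (by linarith : (2 : ℝ) ≤ a)
    exact ⟨a, [], rfl, PNat.coe_le_coe 2 a |>.1 ha2⟩
  · rw [Finset.sum_const, nsmul_eq_mul, mul_inv_cancel₀ (by positivity)]
  · rw [one_div]
    exact inv_anti₀ two_pos hcard
  · obtain ⟨a, rfl, -, ha⟩ := (mem_blockWords hN0).1 hw
    exact inv_card_mul_cfDen_append_singleton_le hs hs1 hN ha u
  · obtain ⟨a, b, ha, hb, hab, haN, hbN, hVcard⟩ :=
      exists_extremes_of_subset_blockWords hN0 hV hVnt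
    have hpos : (0 : ℝ) < b - a := sub_pos.2 (by exact_mod_cast hab)
    exact ⟨[a], ha, [b], hb, (b - a) / (32 * N ^ 2), by positivity,
      fun y hy y' hy' => le_abs_cfEval_singleton_sub (by linarith) hab hbN hy hy',
      sum_inv_card_blockWords_le hs1 hN hpos (by linarith) hVcard⟩

/-! ### Pressure sums -/

/-- The sum `∑ₐ B₂ ^ ((1 - s) n) (B₁ ^ n qₙ(a) ^ 2) ^ (-s)` over `n` digits, whose exponential
growth rate decides the exponent `gExp B₁ B₂`. -/
noncomputable def pressureSum (B₁ B₂ s : ℝ) (n : ℕ) : ENNReal :=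
  ∑' a : Fin n → ℕ+, ENNReal.ofReal (B₂ ^ ((1 - s) * (n : ℝ)) *
    (B₁ ^ n * ((contQ n fun i => (a i : ℕ)) : ℝ) ^ 2) ^ (-s))

theorem sExp_eq_gExp_one (B : ℝ) : sExp B = gExp B 1 := by simp [sExp, gExp]

theorem dimNum_eq_gExp (A : ℕ → ℝ) (i : ℕ) :
    dimNum A i = gExp (∏ k ∈ Finset.range (i + 1), A k) (∏ k ∈ Finset.range i, A k) := by
  cases i with
  | zero => simp [dimNum, betaProd, sExp_eq_gExp_one]
  | succ i => simp [dimNum, betaProd]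

theorem pressureSum_eq {B₁ B₂ : ℝ} (h₁ : 0 ≤ B₁) (h₂ : 0 ≤ B₂) (s : ℝ) (n : ℕ) :
    pressureSum B₁ B₂ s n = ∑' a : Fin n → ℕ+, ENNReal.ofReal
      ((B₂ ^ (1 - s) * B₁ ^ (-s)) ^ n * (cfDen (List.ofFn a) : ℝ) ^ (-(2 * s))) := by
  refine tsum_congr fun a => congrArg _ ?_
  rw [contQ_eq_cfDen_ofFn, Real.mul_rpow (by positivity) (by positivity), mul_pow,
    Real.rpow_mul_natCast h₂, ← Real.rpow_pow_comm h₁, ← Real.rpow_natCast_mul (by positivity)]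
  push_cast
  ring_nf

theorem exists_lt_of_pos_limsup_inv_mul_log {f : ℕ → ENNReal}
    (h : 0 < limsup (fun n : ℕ => (((n : ℝ)⁻¹ : ℝ) : EReal) * ENNReal.log (f n)) atTop) (R : ℝ) :
    ∃ n, ENNReal.ofReal R < f n := by
  obtain ⟨δ, hδ0, hδ⟩ := EReal.lt_iff_exists_real_btwn.1 h
  have hlim : Tendsto (fun n : ℕ => Real.exp (n * δ)) atTop atTop :=
    Real.tendsto_exp_atTop.comp
      (tendsto_natCast_atTop_atTop.atTop_mul_const (EReal.coe_pos.1 hδ0))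
  obtain ⟨n, hn, hR, hn1⟩ := ((frequently_lt_of_lt_limsup (by isBoundedDefault) hδ).and_eventually
    ((hlim.eventually_ge_atTop R).and (eventually_ge_atTop 1))).exists
  refine ⟨n, lt_of_not_ge fun hle => hn.not_ge ?_⟩
  have hlog : ENNReal.log (f n) ≤ ((n * δ : ℝ) : EReal) := by
    simpa [ENNReal.log_ofReal_of_pos (Real.exp_pos _)] using
      ENNReal.log_le_log (hle.trans (ENNReal.ofReal_le_ofReal hR))
  calc (((n : ℝ)⁻¹ : ℝ) : EReal) * ENNReal.log (f n)
      ≤ (((n : ℝ)⁻¹ : ℝ) : EReal) * ((n * δ : ℝ) : EReal) :=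
        mul_le_mul_of_nonneg_left hlog (by exact_mod_cast inv_nonneg.2 n.cast_nonneg)
    _ = δ := by rw [← EReal.coe_mul, inv_mul_cancel_left₀ (by positivity)]

theorem exists_finset_lt_pow_mul_cfSum {B₁ B₂ s R : ℝ} (h₁ : 0 ≤ B₁) (h₂ : 0 ≤ B₂) (hs : 0 ≤ s)
    (hlt : s < gExp B₁ B₂) (hR : 0 ≤ R) : ∃ (n : ℕ) (W : Finset (List ℕ+)),
      (∀ w ∈ W, w.length = n) ∧ R < (B₂ ^ (1 - s) * B₁ ^ (-s)) ^ n * cfSum s W := by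
  have hlimsup := notMem_of_lt_csInf hlt ⟨0, fun x hx => hx.1⟩
  rw [mem_ofPred_eq, not_and, not_le] at hlimsup
  obtain ⟨n, hn⟩ := exists_lt_of_pos_limsup_inv_mul_log (f := pressureSum B₁ B₂ s) (hlimsup hs) R
  rw [pressureSum_eq h₁ h₂, ENNReal.tsum_eq_iSup_sum, lt_iSup_iff] at hn
  obtain ⟨F, hF⟩ := hn
  refine ⟨n, F.image List.ofFn, Finset.forall_mem_image.2 fun a _ => List.length_ofFn, ?_⟩
  rw [← ENNReal.ofReal_sum_of_nonneg fun a _ => by positivity] at hF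
  rw [cfSum, Finset.sum_image List.ofFn_injective.injOn, Finset.mul_sum]
  exact (ENNReal.ofReal_lt_ofReal_iff_of_nonneg hR).1 hF

theorem sum_range_one_div_eq {q q' : ℝ} (hq : 0 < q) (hq' : 0 ≤ q') (N : ℕ) :
    ∑ i ∈ Finset.range N, 1 / (((i + 1 : ℕ) * q + q') * ((i + 1 : ℕ) * q + q' + q)) =
      1 / (q * (q + q')) - 1 / (q * ((N + 1) * q + q')) := by
  induction N with
  | zero => simp
  | succ N ih =>
    rw [Finset.sum_range_succ, ih]
    push_cast
    have : 0 < (N + 1) * q + q' + q := by positivity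
    rw [show (N + 1 + 1) * q + q' = (N + 1) * q + q' + q by ring]
    field_simp
    ring

theorem tsum_one_div_le {q q' : ℝ} (hq : 0 < q) (hq' : 0 ≤ q') :
    ∑' a : ℕ+, ENNReal.ofReal (1 / (((a : ℕ) * q + q') * ((a : ℕ) * q + q' + q))) ≤
      ENNReal.ofReal (1 / (q * (q + q'))) := by
  rw [tsum_pnat_eq_tsum_succ (f := fun a : ℕ =>
    ENNReal.ofReal (1 / ((a * q + q') * (a * q + q' + q))))]
  refine ENNReal.tsum_le_of_sum_range_le fun N => ?_
  rw [← ENNReal.ofReal_sum_of_nonneg fun a _ => by positivity, sum_range_one_div_eq hq hq']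
  exact ENNReal.ofReal_le_ofReal (sub_le_self _ (by positivity))

-- The summands are the lengths of the cylinders of order `n`.
theorem tsum_one_div_cfDen_le_one (n : ℕ) : ∑' a : Fin n → ℕ+, ENNReal.ofReal
    (1 / ((cfDen (List.ofFn a) : ℝ) * (cfDen (List.ofFn a) + cfMatrix (List.ofFn a) 1 0))) ≤
      1 := by
  induction n with
  | zero => simp [cfDen]
  | succ n ih =>
    rw [← (Fin.snocEquiv fun _ => ℕ+).tsum_eq, ENNReal.tsum_prod', ENNReal.tsum_comm]
    refine (ENNReal.tsum_le_tsum fun b => ?_).trans ih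
    have hq : (0 : ℝ) < cfDen (List.ofFn b) := by exact_mod_cast cfDen_pos _
    refine le_of_eq_of_le (tsum_congr fun a => ?_) (tsum_one_div_le hq (Nat.cast_nonneg _))
    have hsnoc : List.ofFn (Fin.snocEquiv (fun _ => ℕ+) (a, b)) = List.ofFn b ++ [a] := by
      rw [List.ofFn_succ', List.concat_eq_append]
      simp [Fin.snocEquiv]
    rw [hsnoc, cfDen_append_singleton, cfMatrix_append_singleton_zero, ← cfDen]
    push_cast
    rfl

theorem pressureSum_one_le_two {B₁ B₂ : ℝ} (h₁ : 1 ≤ B₁) (h₂ : 0 ≤ B₂) (n : ℕ) :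
    pressureSum B₁ B₂ 1 n ≤ ENNReal.ofReal 2 := by
  rw [pressureSum_eq (zero_le_one.trans h₁) h₂]
  calc _ ≤ ∑' a : Fin n → ℕ+, ENNReal.ofReal 2 * ENNReal.ofReal (1 / ((cfDen (List.ofFn a) : ℝ) *
        (cfDen (List.ofFn a) + cfMatrix (List.ofFn a) 1 0))) := by
        refine ENNReal.tsum_le_tsum fun a => ?_
        rw [← ENNReal.ofReal_mul zero_le_two]
        refine ENNReal.ofReal_le_ofReal ?_
        have hq : (0 : ℝ) < cfDen (List.ofFn a) := by exact_mod_cast cfDen_pos _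
        have hq' : (cfMatrix (List.ofFn a) 1 0 : ℝ) ≤ cfDen (List.ofFn a) := by
          exact_mod_cast cfMatrix_one_zero_le_cfDen _
        have hB : (B₂ ^ ((1 : ℝ) - 1) * B₁ ^ (-1 : ℝ)) ^ n ≤ 1 := by
          rw [sub_self, Real.rpow_zero, one_mul, Real.rpow_neg_one]
          exact pow_le_one₀ (by positivity) (inv_le_one_of_one_le₀ h₁)
        refine (mul_le_of_le_one_left (by positivity) hB).trans ?_
        rw [mul_one, Real.rpow_neg hq.le, Real.rpow_two, mul_one_div, ← one_div,
          div_le_div_iff₀ (by positivity) (by positivity)]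
        nlinarith
    _ ≤ ENNReal.ofReal 2 := by
        rw [ENNReal.tsum_mul_left]
        exact mul_le_of_le_one_right' (tsum_one_div_cfDen_le_one n)

theorem gExp_le_one {B₁ B₂ : ℝ} (h₁ : 1 ≤ B₁) (h₂ : 0 ≤ B₂) : gExp B₁ B₂ ≤ 1 := by
  refine csInf_le ⟨0, fun x hx => hx.1⟩ ⟨zero_le_one, ?_⟩
  have hlim : Tendsto (fun n : ℕ => (((n : ℝ)⁻¹ * Real.log 2 : ℝ) : EReal)) atTop (nhds 0) := by
    rw [← EReal.coe_zero]
    refine (continuous_coe_real_ereal.tendsto 0).comp ?_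
    simpa using (tendsto_inv_atTop_nhds_zero_nat (𝕜 := ℝ)).mul_const (Real.log 2)
  rw [← hlim.limsup_eq]
  refine limsup_le_limsup (Eventually.of_forall fun n => ?_)
    (by isBoundedDefault) (by isBoundedDefault)
  dsimp only
  rw [EReal.coe_mul, ← ENNReal.log_ofReal_of_pos two_pos]
  exact mul_le_mul_of_nonneg_left (ENNReal.log_le_log (pressureSum_one_le_two h₁ h₂ n))
    (by exact_mod_cast inv_nonneg.2 n.cast_nonneg)

/-! ### The schedule of free steps and block steps -/

/-- A schedule of construction steps: the steps `base ^ e + i` with `e ≥ 1` and `i < width` are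
block steps, which append one large digit each; all others are free steps, which append `freeLen`
digits. The runs of free steps are so long that they outweigh everything that precedes them. -/
structure BlockSchedule where
  width : ℕ
  base : ℕ
  freeLen : ℕ
  width_pos : 0 < width
  width_lt_base : width < base
  freeLen_pos : 0 < freeLen

namespace BlockSchedule

variable (σ : BlockSchedule)

/-- Step `j` belongs to the block starting at the largest power of the base up to `j`. -/
def IsBlock (j : ℕ) : Prop := σ.base ≤ j ∧ j < σ.base ^ Nat.log σ.base j + σ.width

instance : DecidablePred σ.IsBlock := fun _ => instDecidableAnd

/-- The number of digits appended by the steps before step `j`. -/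
def digitsBefore (j : ℕ) : ℕ := ∑ i ∈ Finset.range j, if σ.IsBlock i then 1 else σ.freeLen

/-- The first step of the run of free steps that ends right before step `base ^ (e + 1)`. -/
def runStart (e : ℕ) : ℕ := if e = 0 then 0 else σ.base ^ e + σ.width

/-- The size of the digit appended at a block step `j`, if the `i`-th digit of a block whose first
digit has index `n` is to have size `N i n`. -/
noncomputable def blockSize (N : ℕ → ℕ → ℝ) (j : ℕ) : ℝ :=
  N (j - σ.base ^ Nat.log σ.base j) (σ.digitsBefore (σ.base ^ Nat.log σ.base j) + 1)

theorem one_lt_base : 1 < σ.base := σ.width_lt_base.trans_le' σ.width_pos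

variable {σ} {e i j : ℕ}

theorem pow_add_width_le (he : e ≠ 0) : σ.base ^ e + σ.width ≤ 2 * σ.base ^ e := by
  have := Nat.le_self_pow he σ.base
  have := σ.width_lt_base
  omega

theorem pow_add_lt_pow_succ (he : e ≠ 0) (hi : i < σ.width) :
    σ.base ^ e + i < σ.base ^ (e + 1) := by
  have h₁ := pow_add_width_le he (σ := σ)
  have h₂ : σ.base ^ e * 2 ≤ σ.base ^ e * σ.base := Nat.mul_le_mul_left _ σ.one_lt_base
  rw [pow_succ]
  omega

theorem log_pow_add (he : e ≠ 0) (hi : i < σ.width) : Nat.log σ.base (σ.base ^ e + i) = e :=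
  Nat.log_eq_of_pow_le_of_lt_pow (Nat.le_add_right _ _) (pow_add_lt_pow_succ he hi)

theorem isBlock_pow_add (he : e ≠ 0) (hi : i < σ.width) : σ.IsBlock (σ.base ^ e + i) := by
  refine ⟨(Nat.le_self_pow he _).trans (Nat.le_add_right _ _), ?_⟩
  rw [log_pow_add he hi]
  omega

theorem blockSize_pow_add (N : ℕ → ℕ → ℝ) (he : e ≠ 0) (hi : i < σ.width) :
    σ.blockSize N (σ.base ^ e + i) = N i (σ.digitsBefore (σ.base ^ e) + 1) := by
  rw [blockSize, log_pow_add he hi, Nat.add_sub_cancel_left]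

theorem exists_eq_pow_add_of_isBlock (hj : σ.IsBlock j) :
    ∃ e ≠ 0, ∃ i < σ.width, j = σ.base ^ e + i := by
  have hle := Nat.pow_log_le_self σ.base (by have := hj.1; have := σ.one_lt_base; omega : j ≠ 0)
  refine ⟨Nat.log σ.base j, (Nat.log_pos σ.one_lt_base hj.1).ne',
    j - σ.base ^ Nat.log σ.base j, ?_, by omega⟩
  have := hj.2
  omega

theorem not_isBlock_of_runStart_le (hj : σ.runStart e ≤ j) (hj' : j < σ.base ^ (e + 1)) :
    ¬ σ.IsBlock j := by
  rintro ⟨hbase, hlt⟩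
  obtain rfl | he := eq_or_ne e 0
  · simp only [zero_add, pow_one] at hj'
    omega
  · rw [runStart, if_neg he] at hj
    rw [Nat.log_eq_of_pow_le_of_lt_pow (by omega) hj'] at hlt
    omega

theorem exists_runStart_le_of_not_isBlock (hj : ¬ σ.IsBlock j) :
    ∃ e, σ.runStart e ≤ j ∧ j < σ.base ^ (e + 1) := by
  refine ⟨Nat.log σ.base j, ?_, Nat.lt_pow_succ_log_self σ.one_lt_base j⟩
  rw [runStart]
  split_ifs with h
  · exact j.zero_le
  · exact not_lt.1 fun hlt => hj ⟨Nat.le_of_not_lt fun hb => h (Nat.log_of_lt hb), hlt⟩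

theorem runStart_le_two_mul_pow (e : ℕ) : σ.runStart e ≤ 2 * σ.base ^ e := by
  rw [runStart]
  split_ifs with h
  · exact Nat.zero_le _
  · exact pow_add_width_le h

theorem runStart_le_pow_succ (e : ℕ) : σ.runStart e ≤ σ.base ^ (e + 1) :=
  (runStart_le_two_mul_pow e).trans
    (by rw [pow_succ']; exact Nat.mul_le_mul_right _ σ.one_lt_base)

theorem mul_runStart_add_one_le {K : ℕ} (hK : 3 * K + 2 ≤ σ.base) (e : ℕ) :
    K * (σ.runStart e + 1) ≤ σ.base ^ (e + 1) - σ.runStart e := by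
  have hstart := σ.runStart_le_two_mul_pow e
  have hpos : 1 ≤ σ.base ^ e := Nat.one_le_pow _ _ (zero_lt_one.trans σ.one_lt_base)
  refine Nat.le_sub_of_add_le ?_
  calc K * (σ.runStart e + 1) + σ.runStart e
      ≤ K * (2 * σ.base ^ e + σ.base ^ e) + 2 * σ.base ^ e := by gcongr
    _ = (3 * K + 2) * σ.base ^ e := by ring
    _ ≤ σ.base ^ (e + 1) := by rw [pow_succ']; gcongr

theorem le_digitsBefore (j : ℕ) : j ≤ σ.digitsBefore j := by
  calc j = ∑ _i ∈ Finset.range j, 1 := by simp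
    _ ≤ σ.digitsBefore j := Finset.sum_le_sum fun i _ => by
      have := σ.freeLen_pos
      split_ifs <;> omega

theorem base_le_digitsBefore_pow_add_one (he : e ≠ 0) :
    σ.base ≤ σ.digitsBefore (σ.base ^ e) + 1 :=
  (Nat.le_self_pow he _).trans ((le_digitsBefore _).trans (Nat.le_succ _))

theorem digitsBefore_le (j : ℕ) : σ.digitsBefore j ≤ σ.freeLen * j := by
  calc σ.digitsBefore j ≤ ∑ _i ∈ Finset.range j, σ.freeLen := Finset.sum_le_sum fun i _ => by
        have := σ.freeLen_pos
        split_ifs <;> omega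
    _ = σ.freeLen * j := by simp [mul_comm]

theorem digitsBefore_pow_add (he : e ≠ 0) (hi : i ≤ σ.width) :
    σ.digitsBefore (σ.base ^ e + i) = σ.digitsBefore (σ.base ^ e) + i := by
  rw [digitsBefore, Finset.sum_range_add, ← digitsBefore, Finset.sum_congr rfl fun k hk =>
    if_pos (isBlock_pow_add he ((Finset.mem_range.1 hk).trans_le hi))]
  simp

theorem digitsBefore_runStart_add {r : ℕ} (hr : σ.runStart e + r ≤ σ.base ^ (e + 1)) :
    σ.digitsBefore (σ.runStart e + r) = σ.digitsBefore (σ.runStart e) + σ.freeLen * r := by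
  rw [digitsBefore, Finset.sum_range_add, ← digitsBefore, Finset.sum_congr rfl fun k hk =>
    if_neg (not_isBlock_of_runStart_le (e := e) (Nat.le_add_right _ _)
      (by have := Finset.mem_range.1 hk; omega))]
  simp [mul_comm]

variable (σ) in
/-- The growth factor `ρ` of `IsAdmissibleStep` at step `j`. The factor `1 / 2` at free steps is the
gain that pays for the irregularities at their ends. -/
noncomputable def stepFactor (s l : ℝ) (N : ℕ → ℕ → ℝ) (j : ℕ) : ℝ :=
  if σ.IsBlock j then 32 * σ.blockSize N j ^ (2 * s - 1) else 1 / 2 * l ^ σ.freeLen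

variable (σ) in
/-- An upper bound for the mass times `cfDen ^ (2 * s)` of the cylinders reached before step `j`. -/
noncomputable def potential (s l : ℝ) (N : ℕ → ℕ → ℝ) (j : ℕ) : ℝ :=
  ∏ i ∈ Finset.range j, σ.stepFactor s l N i

variable {s l ε : ℝ} {N : ℕ → ℕ → ℝ}

theorem potential_pow_add (he : e ≠ 0) (hi : i ≤ σ.width) :
    σ.potential s l N (σ.base ^ e + i) = σ.potential s l N (σ.base ^ e) *
      ∏ k ∈ Finset.range i, 32 * N k (σ.digitsBefore (σ.base ^ e) + 1) ^ (2 * s - 1) := by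
  rw [potential, Finset.prod_range_add, ← potential]
  refine congrArg _ (Finset.prod_congr rfl fun k hk => ?_)
  have hk' := (Finset.mem_range.1 hk).trans_le hi
  rw [stepFactor, if_pos (isBlock_pow_add he hk'), blockSize_pow_add N he hk']

theorem potential_runStart_add {r : ℕ} (hr : σ.runStart e + r ≤ σ.base ^ (e + 1)) :
    σ.potential s l N (σ.runStart e + r) =
      σ.potential s l N (σ.runStart e) * (1 / 2 * l ^ σ.freeLen) ^ r := by
  rw [potential, Finset.prod_range_add, ← potential]
  refine congrArg _ ((Finset.prod_eq_pow_card fun k hk => ?_).trans (by rw [Finset.card_range]))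
  have := Finset.mem_range.1 hk
  rw [stepFactor, if_neg (not_isBlock_of_runStart_le (Nat.le_add_right _ _) (by omega))]

variable (σ) in
/-- The schedule suits block sizes `N` and the decay rate `l` per digit of free steps: a potential
of at most `ε * l ^ n` can afford a block whose first digit has index `n`, and every run of free
steps is long enough to bring the potential down to such a value. -/
structure IsAdapted (s l ε : ℝ) (N : ℕ → ℕ → ℝ) : Prop where
  pos : 0 < l
  le_one : l ≤ 1
  four_le : ∀ n ≥ σ.base, ∀ i < σ.width, 4 ≤ N i n
  budget : ∀ n ≥ σ.base, ∀ i < σ.width,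
    ε * l ^ n * (∏ k ∈ Finset.range i, 32 * N k n ^ (2 * s - 1)) * N i n ^ s ≤ 1 / 32
  half_pow_le : ∀ e,
    (1 / 2 : ℝ) ^ (σ.base ^ (e + 1) - σ.runStart e) ≤ ε * l ^ (σ.freeLen * σ.runStart e + 1)

namespace IsAdapted

variable (h : σ.IsAdapted s l ε N)
include h

theorem four_le_blockSize (hj : σ.IsBlock j) : 4 ≤ σ.blockSize N j := by
  obtain ⟨e, he, i, hi, rfl⟩ := exists_eq_pow_add_of_isBlock hj
  rw [blockSize_pow_add N he hi]
  exact h.four_le _ (base_le_digitsBefore_pow_add_one he) _ hi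

theorem potential_runStart_add_le_one {r : ℕ} (hr : σ.runStart e + r ≤ σ.base ^ (e + 1))
    (hstart : σ.potential s l N (σ.runStart e) ≤ 1) :
    σ.potential s l N (σ.runStart e + r) ≤ 1 := by
  have hl : l ^ σ.freeLen ≤ 1 := pow_le_one₀ h.pos.le h.le_one
  have hl₀ : 0 ≤ 1 / 2 * l ^ σ.freeLen := by have := h.pos; positivity
  rw [potential_runStart_add hr]
  exact mul_le_one₀ hstart (pow_nonneg hl₀ _) (pow_le_one₀ hl₀ (by linarith))

theorem potential_pow_succ_le (hstart : σ.potential s l N (σ.runStart e) ≤ 1) :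
    σ.potential s l N (σ.base ^ (e + 1)) ≤ ε * l ^ (σ.digitsBefore (σ.base ^ (e + 1)) + 1) := by
  obtain ⟨r, hr⟩ := Nat.exists_eq_add_of_le (σ.runStart_le_pow_succ e)
  have hl := h.pos
  have hhalf := h.half_pow_le e
  rw [hr, Nat.add_sub_cancel_left] at hhalf
  have hε : 0 ≤ ε := nonneg_of_mul_nonneg_left (hhalf.trans' (by positivity)) (by positivity)
  rw [hr, potential_runStart_add hr.ge, digitsBefore_runStart_add hr.ge]
  calc σ.potential s l N (σ.runStart e) * (1 / 2 * l ^ σ.freeLen) ^ r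
      ≤ (1 / 2 * l ^ σ.freeLen) ^ r := mul_le_of_le_one_left (by positivity) hstart
    _ = (1 / 2) ^ r * l ^ (σ.freeLen * r) := by rw [mul_pow, pow_mul]
    _ ≤ ε * l ^ (σ.freeLen * σ.runStart e + 1) * l ^ (σ.freeLen * r) := by gcongr
    _ = ε * l ^ (σ.freeLen * σ.runStart e + σ.freeLen * r + 1) := by ring
    _ ≤ ε * l ^ (σ.digitsBefore (σ.runStart e) + σ.freeLen * r + 1) :=
      mul_le_mul_of_nonneg_left (pow_le_pow_of_le_one hl.le h.le_one
        (by have := σ.digitsBefore_le (σ.runStart e); omega)) hε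

theorem potential_pow_add_mul_le (he : e ≠ 0) (hi : i < σ.width)
    (hb : σ.potential s l N (σ.base ^ e) ≤ ε * l ^ (σ.digitsBefore (σ.base ^ e) + 1)) :
    σ.potential s l N (σ.base ^ e + i) * N i (σ.digitsBefore (σ.base ^ e) + 1) ^ s ≤ 1 / 32 := by
  have hn := base_le_digitsBefore_pow_add_one he (σ := σ)
  rw [potential_pow_add he hi.le]
  refine (h.budget _ hn i hi).trans' ?_
  have hN : ∀ k ≤ i, 0 ≤ N k (σ.digitsBefore (σ.base ^ e) + 1) := fun k hk => by
    linarith [h.four_le _ hn k (hk.trans_lt hi)]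
  have hprod : 0 ≤ ∏ k ∈ Finset.range i,
      32 * N k (σ.digitsBefore (σ.base ^ e) + 1) ^ (2 * s - 1) :=
    Finset.prod_nonneg fun k hk =>
      mul_nonneg (by norm_num) (Real.rpow_nonneg (hN k (Finset.mem_range.1 hk).le) _)
  gcongr
  exact Real.rpow_nonneg (hN i le_rfl) s

theorem potential_pow_add_width_le_one (hs : s ≤ 1) (he : e ≠ 0)
    (hb : σ.potential s l N (σ.base ^ e) ≤ ε * l ^ (σ.digitsBefore (σ.base ^ e) + 1)) :
    σ.potential s l N (σ.base ^ e + σ.width) ≤ 1 := by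
  obtain ⟨w, hw⟩ := Nat.exists_eq_succ_of_ne_zero σ.width_pos.ne'
  have hlt : w < σ.width := by omega
  set n := σ.digitsBefore (σ.base ^ e) + 1 with hn
  have hN := h.four_le n (base_le_digitsBefore_pow_add_one he) w hlt
  have hsplit : N w n ^ (2 * s - 1) = N w n ^ s * N w n ^ (s - 1) := by
    rw [← Real.rpow_add (by linarith)]
    ring_nf
  have hone : N w n ^ (s - 1) ≤ 1 :=
    Real.rpow_le_one_of_one_le_of_nonpos (by linarith) (by linarith)
  calc σ.potential s l N (σ.base ^ e + σ.width)
      = σ.potential s l N (σ.base ^ e + w) * N w n ^ s * (32 * N w n ^ (s - 1)) := by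
        rw [potential_pow_add he le_rfl, potential_pow_add he hlt.le, hw, Finset.prod_range_succ,
          ← hn, hsplit]
        ring
    _ ≤ 1 / 32 * (32 * N w n ^ (s - 1)) := by
        have := h.potential_pow_add_mul_le he hlt hb
        gcongr
    _ ≤ 1 := by linarith

theorem potential_runStart_le_one (hs : s ≤ 1) :
    ∀ e, σ.potential s l N (σ.runStart e) ≤ 1
  | 0 => by simp [runStart, potential]
  | e + 1 => by
    rw [runStart, if_neg e.succ_ne_zero]
    exact h.potential_pow_add_width_le_one hs e.succ_ne_zero
      (h.potential_pow_succ_le (potential_runStart_le_one hs e))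

theorem potential_mul_le_one (hs : s ≤ 1) (j : ℕ) :
    σ.potential s l N j * (if σ.IsBlock j then σ.blockSize N j ^ s else 1) ≤ 1 := by
  split_ifs with hj
  · obtain ⟨e, he, i, hi, rfl⟩ := exists_eq_pow_add_of_isBlock hj
    obtain ⟨e, rfl⟩ := Nat.exists_eq_succ_of_ne_zero he
    rw [blockSize_pow_add N he hi]
    exact (h.potential_pow_add_mul_le he hi
      (h.potential_pow_succ_le (h.potential_runStart_le_one hs e))).trans (by norm_num)
  · obtain ⟨e, hle, hlt⟩ := exists_runStart_le_of_not_isBlock hj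
    obtain ⟨r, rfl⟩ := Nat.exists_eq_add_of_le hle
    rw [mul_one]
    exact h.potential_runStart_add_le_one hlt.le (h.potential_runStart_le_one hs e)

end IsAdapted
end BlockSchedule

/-! ### The set of points with blocks of large digits -/

/-- The points with infinitely many blocks of `m` digits that have the sizes `N i n`, where `n` is
the index of the first digit of the block; for `N i n = c i * A i ^ n` this is the paper's `S_m`. -/
def blockDigitSet (m : ℕ) (N : ℕ → ℕ → ℝ) : Set ℝ :=
  {x : ℝ | x ∈ Ioo (0 : ℝ) 1 ∧ Irrational x ∧
    {n : ℕ | ∀ i < m, N i n ≤ (pq x (n + i) : ℝ) ∧ (pq x (n + i) : ℝ) < 2 * N i n}.Infinite}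

namespace BlockSchedule

/-- The words appended at step `j`: digits of the prescribed size at a block step, and words of `W`
(after a leading `2`) at a free step. -/
noncomputable def stepWords (σ : BlockSchedule) (N : ℕ → ℕ → ℝ) (W : Finset (List ℕ+)) (j : ℕ) :
    Finset (List ℕ+) :=
  if σ.IsBlock j then blockWords (σ.blockSize N j) else freeWords W

/-- The probability weights on `stepWords`: uniform at a block step, Gibbs at a free step. -/
noncomputable def stepWeight (σ : BlockSchedule) (s : ℝ) (N : ℕ → ℕ → ℝ) (W : Finset (List ℕ+))
    (j : ℕ) : List ℕ+ → ℝ :=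
  if σ.IsBlock j then fun _ => ((blockWords (σ.blockSize N j)).card : ℝ)⁻¹ else freeWeight s W

namespace IsAdapted

variable {σ : BlockSchedule} {s l ε : ℝ} {N : ℕ → ℕ → ℝ} (h : σ.IsAdapted s l ε N)
  {W : Finset (List ℕ+)} {n : ℕ}
include h

theorem exists_isAdmissibleStep_stepWords (hs : 0 ≤ s) (hs1 : s ≤ 1)
    (hlen : ∀ w ∈ W, w.length = n) (hW : 72 ≤ l ^ σ.freeLen * cfSum s W) :
    ∃ C, 0 ≤ C ∧ ∀ j, IsAdmissibleStep s (σ.stepFactor s l N j)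
      (C * if σ.IsBlock j then σ.blockSize N j ^ s else 1) (σ.stepWords N W j)
      (σ.stepWeight s N W j) := by
  have hl : l ^ σ.freeLen ≤ 1 := pow_le_one₀ h.pos.le h.le_one
  have hpos : 0 < cfSum s W :=
    pos_of_mul_pos_right (hW.trans_lt' (by norm_num)) (pow_nonneg h.pos.le _)
  have hfactor : 36 / cfSum s W ≤ 1 / 2 * l ^ σ.freeLen := by
    rw [div_le_iff₀ hpos]
    linarith
  obtain ⟨B, hB⟩ := exists_isAdmissibleStep_freeWords hs hs1 hlen
    (by linarith [mul_le_of_le_one_left hpos.le hl])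
  refine ⟨max B (4 * 32 ^ s), le_max_of_le_right (by positivity), fun j => ?_⟩
  by_cases hj : σ.IsBlock j <;> simp only [stepFactor, stepWords, stepWeight, hj, if_true, if_false]
  · have hN := h.four_le_blockSize hj
    refine (isAdmissibleStep_blockWords hs hs1 hN).mono le_rfl ?_
    gcongr
    exact le_max_right _ _
  · exact hB.mono hfactor (by simp)

theorem length_cfPrefix_eq_digitsBefore (hlen : ∀ w ∈ W, w.length + 1 = σ.freeLen)
    {ω : ℕ → List ℕ+} (hω : ∀ j, ω j ∈ σ.stepWords N W j) (j : ℕ) :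
    (cfPrefix ω j).length = σ.digitsBefore j := by
  rw [length_cfPrefix, digitsBefore]
  refine Finset.sum_congr rfl fun i _ => ?_
  have hωi := hω i
  rw [stepWords] at hωi
  split_ifs at hωi ⊢ with hi
  · obtain ⟨a, ha, -⟩ := (mem_blockWords (by linarith [h.four_le_blockSize hi])).1 hωi
    rw [ha, List.length_singleton]
  · obtain ⟨w, hw, hwω⟩ := Finset.mem_image.1 hωi
    rw [← hwω, List.length_cons, hlen w hw]

theorem infinite_setOf_pq_mem (hlen : ∀ w ∈ W, w.length + 1 = σ.freeLen)
    {ω : ℕ → List ℕ+} {y : ℕ → ℝ} (hω : ∀ j, ω j ∈ σ.stepWords N W j) (hy : IsTailSeq ω y) :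
    {n : ℕ | ∀ i < σ.width, N i n ≤ (pq (y 0) (n + i) : ℝ) ∧
      (pq (y 0) (n + i) : ℝ) < 2 * N i n}.Infinite := by
  refine infinite_of_forall_exists_gt fun e => ⟨σ.digitsBefore (σ.base ^ (e + 1)) + 1, ?_, ?_⟩
  · intro i hi
    have hblock := isBlock_pow_add e.succ_ne_zero hi
    have hωi := hω (σ.base ^ (e + 1) + i)
    rw [stepWords, if_pos hblock, mem_blockWords (by linarith [h.four_le_blockSize hblock]),
      blockSize_pow_add N e.succ_ne_zero hi] at hωi
    obtain ⟨a, ha, hle, hlt⟩ := hωi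
    have hpq := hy.pq_eq ha
    rw [h.length_cfPrefix_eq_digitsBefore hlen hω, digitsBefore_pow_add e.succ_ne_zero hi.le,
      add_right_comm] at hpq
    rw [hpq]
    exact ⟨hle, hlt⟩
  · calc e < e + 1 := e.lt_succ_self
      _ < σ.base ^ (e + 1) := Nat.lt_pow_self σ.one_lt_base
      _ < σ.digitsBefore (σ.base ^ (e + 1)) + 1 := Nat.lt_succ_of_le (le_digitsBefore _)

theorem ofReal_le_dimH_blockDigitSet (hs : 0 ≤ s) (hs1 : s ≤ 1)
    (hlen : ∀ w ∈ W, w.length + 1 = σ.freeLen) (hW : 72 ≤ l ^ σ.freeLen * cfSum s W) :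
    ENNReal.ofReal s ≤ dimH (blockDigitSet σ.width N) := by
  obtain ⟨C, hC, hstep⟩ := h.exists_isAdmissibleStep_stepWords hs hs1 (n := σ.freeLen - 1)
    (fun w hw => by have := hlen w hw; omega) hW
  refine le_dimH_of_isAdmissibleStep hs hC hstep (h.potential_mul_le_one hs1) fun ω y hω hy => ?_
  have hne (j : ℕ) : ω j ≠ [] := by
    obtain ⟨a, v, hav, -⟩ := (hstep j).twoLeHead _ (hω j)
    simp [hav]
  exact ⟨hy.mem_Ioo 0, hy.irrational hne, h.infinite_setOf_pq_mem hlen hω hy⟩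

end IsAdapted
end BlockSchedule

/-! ### Exponentially growing digits -/

/-- The mass per digit that a cylinder must have in order to afford the digits `A k ^ n`, `k ≤ i`;
it is the weight in the pressure sums for `dimNum A i`. -/
noncomputable def pressureFactor (A : ℕ → ℝ) (s : ℝ) (i : ℕ) : ℝ :=
  (∏ k ∈ Finset.range i, A k) ^ (1 - s) * (∏ k ∈ Finset.range (i + 1), A k) ^ (-s)

/-- What is left of the cost of the digits `c k * A k ^ n`, `k ≤ i`, after cancelling the factors
that are exponential in `n`. -/
noncomputable def blockConst (c : ℕ → ℝ) (s : ℝ) (i : ℕ) : ℝ :=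
  (∏ k ∈ Finset.range i, 32 * c k ^ (2 * s - 1)) * c i ^ s

theorem mul_pow_rpow {a b : ℝ} (ha : 0 ≤ a) (hb : 0 ≤ b) (t : ℝ) (n : ℕ) :
    (b * a ^ n) ^ t = b ^ t * (a ^ t) ^ n := by
  rw [Real.mul_rpow hb (pow_nonneg ha n), Real.rpow_pow_comm ha]

section

variable {A c : ℕ → ℝ} {i : ℕ} (hA : ∀ k ≤ i, 0 < A k)
include hA

theorem pressureFactor_pos (s : ℝ) : 0 < pressureFactor A s i := by
  have hprod {j : ℕ} (hj : j ≤ i + 1) : 0 < ∏ k ∈ Finset.range j, A k :=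
    Finset.prod_pos fun k hk => hA k (by have := Finset.mem_range.1 hk; omega)
  exact mul_pos (Real.rpow_pos_of_pos (hprod (by omega)) _) (Real.rpow_pos_of_pos (hprod le_rfl) _)

theorem pressureFactor_mul_eq_one (s : ℝ) :
    pressureFactor A s i * (∏ k ∈ Finset.range i, A k ^ (2 * s - 1)) * A i ^ s = 1 := by
  have hlt : ∀ k ∈ Finset.range i, 0 < A k := fun k hk => hA k (Finset.mem_range.1 hk).le
  have hprod : 0 < ∏ k ∈ Finset.range i, A k := Finset.prod_pos hlt
  rw [pressureFactor, Finset.prod_range_succ, Real.mul_rpow hprod.le (hA i le_rfl).le,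
    Real.finsetProd_rpow _ _ fun k hk => (hlt k hk).le]
  generalize ∏ k ∈ Finset.range i, A k = P at hprod
  calc P ^ (1 - s) * (P ^ (-s) * A i ^ (-s)) * P ^ (2 * s - 1) * A i ^ s
      = P ^ (1 - s) * P ^ (-s) * P ^ (2 * s - 1) * (A i ^ (-s) * A i ^ s) := by ring
    _ = P ^ (1 - s + -s + (2 * s - 1)) * A i ^ (-s + s) := by
        rw [Real.rpow_add hprod, Real.rpow_add hprod, Real.rpow_add (hA i le_rfl)]
    _ = 1 := by ring_nf; simp

theorem pressureFactor_pow_mul_eq_blockConst (hc : ∀ k ≤ i, 0 ≤ c k) (s : ℝ) (n : ℕ) :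
    pressureFactor A s i ^ n * (∏ k ∈ Finset.range i, 32 * (c k * A k ^ n) ^ (2 * s - 1)) *
      (c i * A i ^ n) ^ s = blockConst c s i := by
  have hprod : ∏ k ∈ Finset.range i, 32 * (c k * A k ^ n) ^ (2 * s - 1) =
      (∏ k ∈ Finset.range i, 32 * c k ^ (2 * s - 1)) *
        (∏ k ∈ Finset.range i, A k ^ (2 * s - 1)) ^ n := by
    rw [← Finset.prod_pow, ← Finset.prod_mul_distrib]
    refine Finset.prod_congr rfl fun k hk => ?_
    have hk' := (Finset.mem_range.1 hk).le
    rw [mul_pow_rpow (hA k hk').le (hc k hk'), mul_assoc]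
  rw [hprod, mul_pow_rpow (hA i le_rfl).le (hc i le_rfl)]
  calc _ = (pressureFactor A s i * (∏ k ∈ Finset.range i, A k ^ (2 * s - 1)) * A i ^ s) ^ n *
        blockConst c s i := by rw [blockConst]; ring
    _ = blockConst c s i := by rw [pressureFactor_mul_eq_one hA, one_pow, one_mul]

theorem mul_pow_mul_le_of_le_pressureFactor (hc : ∀ k ≤ i, 0 ≤ c k) {s l ε δ : ℝ} (hε₀ : 0 ≤ ε)
    (hl₀ : 0 ≤ l) (hl : l ≤ pressureFactor A s i) (hε : ε * blockConst c s i ≤ δ) (n : ℕ) :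
    ε * l ^ n * (∏ k ∈ Finset.range i, 32 * (c k * A k ^ n) ^ (2 * s - 1)) *
      (c i * A i ^ n) ^ s ≤ δ := by
  rw [← pressureFactor_pow_mul_eq_blockConst hA hc s n, ← mul_assoc, ← mul_assoc] at hε
  refine hε.trans' ?_
  have hpos : ∀ k ≤ i, 0 ≤ c k * A k ^ n := fun k hk =>
    mul_nonneg (hc k hk) (pow_nonneg (hA k hk).le n)
  have hprod : 0 ≤ ∏ k ∈ Finset.range i, 32 * (c k * A k ^ n) ^ (2 * s - 1) :=
    Finset.prod_nonneg fun k hk =>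
      mul_nonneg (by norm_num) (Real.rpow_nonneg (hpos k (Finset.mem_range.1 hk).le) _)
  gcongr
  exact Real.rpow_nonneg (hpos i le_rfl) s

end

theorem exists_pos_forall_mul_le {ι : Type*} (t : Finset ι) (f : ι → ℝ) {δ : ℝ} (hδ : 0 < δ) :
    ∃ ε > 0, ∀ i ∈ t, ε * f i ≤ δ := by
  have hsmall : ∀ᶠ ε in nhdsWithin (0 : ℝ) (Ioi 0), ∀ i ∈ t, ε * f i ≤ δ :=
    nhdsWithin_le_nhds <| (Filter.eventually_all_finset t).2 fun i _ =>
      ((continuous_mul_const (f i)).tendsto' 0 0 (zero_mul _)).eventually_le_const hδ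
  obtain ⟨ε, hε, hε₀⟩ := (hsmall.and self_mem_nhdsWithin).exists
  exact ⟨ε, hε₀, hε⟩

theorem exists_forall_ge_four_le_mul_pow {A c : ℕ → ℝ} {m : ℕ} (hA : ∀ i < m, 1 < A i)
    (hc : ∀ i < m, 0 < c i) : ∃ n₀, ∀ n ≥ n₀, ∀ i < m, 4 ≤ c i * A i ^ n := by
  have hlarge : ∀ᶠ n in atTop, ∀ i ∈ Finset.range m, 4 ≤ c i * A i ^ n :=
    (Filter.eventually_all_finset _).2 fun i hi =>
      ((tendsto_pow_atTop_atTop_of_one_lt (hA i (Finset.mem_range.1 hi))).const_mul_atTop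
        (hc i (Finset.mem_range.1 hi))).eventually_ge_atTop 4
  simpa only [Finset.mem_range] using eventually_atTop.1 hlarge

theorem BlockSchedule.half_pow_le_mul_pow {σ : BlockSchedule} {l ε : ℝ} {K : ℕ}
    (hε : (1 / 2) ^ K ≤ ε * l) (hfree : (1 / 2) ^ K ≤ l ^ σ.freeLen)
    (hK : 3 * K + 2 ≤ σ.base) (e : ℕ) :
    (1 / 2) ^ (σ.base ^ (e + 1) - σ.runStart e) ≤ ε * l ^ (σ.freeLen * σ.runStart e + 1) := by
  calc (1 / 2 : ℝ) ^ (σ.base ^ (e + 1) - σ.runStart e)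
      ≤ (1 / 2) ^ (K * (σ.runStart e + 1)) :=
        pow_le_pow_of_le_one (by norm_num) (by norm_num) (mul_runStart_add_one_le hK e)
    _ = (1 / 2) ^ K * ((1 / 2) ^ K) ^ σ.runStart e := by rw [pow_mul, pow_succ']
    _ ≤ ε * l * (l ^ σ.freeLen) ^ σ.runStart e := by
        have : 0 ≤ ε * l := hε.trans' (by positivity)
        gcongr
    _ = ε * l ^ (σ.freeLen * σ.runStart e + 1) := by rw [pow_succ, pow_mul]; ring

theorem exists_isAdapted {A c : ℕ → ℝ} {m L : ℕ} {s l : ℝ} (hm : 0 < m) (hL : 0 < L)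
    (hA : ∀ i < m, 1 < A i) (hc : ∀ i < m, 0 < c i) (hl₀ : 0 < l) (hl₁ : l ≤ 1)
    (hl : ∀ i < m, l ≤ pressureFactor A s i) : ∃ (σ : BlockSchedule) (ε : ℝ),
      σ.width = m ∧ σ.freeLen = L ∧ σ.IsAdapted s l ε fun i n => c i * A i ^ n := by
  obtain ⟨ε, hε₀, hε⟩ := exists_pos_forall_mul_le (Finset.range m) (blockConst c s)
    (by norm_num : (0 : ℝ) < 1 / 32)
  obtain ⟨n₀, hn₀⟩ := exists_forall_ge_four_le_mul_pow hA hc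
  obtain ⟨K, hK⟩ := exists_pow_lt_of_lt_one (lt_min (mul_pos hε₀ hl₀) (pow_pos hl₀ L))
    (by norm_num : (1 / 2 : ℝ) < 1)
  obtain ⟨hKε, hKL⟩ := lt_min_iff.1 hK
  let σ : BlockSchedule := ⟨m, n₀ + m + 3 * K + 2, L, hm, by omega, hL⟩
  have hfour : ∀ n ≥ σ.base, ∀ i < m, 4 ≤ c i * A i ^ n := fun n hn =>
    hn₀ n (hn.trans' (by simp only [σ]; omega))
  exact ⟨σ, ε, rfl, rfl, hl₀, hl₁, hfour, fun n _ i hi =>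
    mul_pow_mul_le_of_le_pressureFactor (fun k hk => zero_lt_one.trans (hA k (hk.trans_lt hi)))
      (fun k hk => (hc k (hk.trans_lt hi)).le) hε₀.le hl₀.le (hl i hi)
      (hε i (Finset.mem_range.2 hi)) n,
    BlockSchedule.half_pow_le_mul_pow hKε.le hKL.le (by simp only [σ]; omega)⟩

theorem ofReal_le_dimH_of_lt_dimNum {A c : ℕ → ℝ} {m : ℕ} {s : ℝ} (hm : 0 < m)
    (hA : ∀ i < m, 1 < A i) (hc : ∀ i < m, 0 < c i) (hs : 0 ≤ s) (hs1 : s ≤ 1)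
    (hlt : ∀ i < m, s < dimNum A i) :
    ENNReal.ofReal s ≤ dimH (blockDigitSet m fun i n => c i * A i ^ n) := by
  have hA₀ : ∀ i < m, 0 < A i := fun i hi => zero_lt_one.trans (hA i hi)
  obtain ⟨i, hi, hmin⟩ := Finset.exists_min_image (Finset.range m) (pressureFactor A s)
    ⟨0, Finset.mem_range.2 hm⟩
  rw [Finset.mem_range] at hi
  have hl₀ : 0 < pressureFactor A s i := pressureFactor_pos (fun k hk => hA₀ k (hk.trans_lt hi)) s
  have hl₁ : pressureFactor A s i ≤ 1 := (hmin 0 (Finset.mem_range.2 hm)).trans <| by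
    simpa [pressureFactor] using
      Real.rpow_le_one_of_one_le_of_nonpos (hA 0 hm).le (neg_nonpos.2 hs)
  have hprod {j : ℕ} (hj : j ≤ m) : 0 ≤ ∏ k ∈ Finset.range j, A k :=
    Finset.prod_nonneg fun k hk => (hA₀ k ((Finset.mem_range.1 hk).trans_le hj)).le
  obtain ⟨n, W, hlen, hW⟩ := exists_finset_lt_pow_mul_cfSum (hprod hi) (hprod hi.le) hs
    (dimNum_eq_gExp A i ▸ hlt i hi) (R := 72 / pressureFactor A s i) (by positivity)
  obtain ⟨σ, ε, rfl, hL, hσ⟩ := exists_isAdapted hm n.succ_pos hA hc hl₀ hl₁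
    fun k hk => hmin k (Finset.mem_range.2 hk)
  refine hσ.ofReal_le_dimH_blockDigitSet hs hs1 (W := W) (fun w hw => by rw [hlen w hw, hL]) ?_
  rw [hL, pow_succ', mul_assoc]
  exact ((div_lt_iff₀' hl₀).1 hW).le

theorem hausdorff_dim_Sm_lower (m : ℕ) (hm : 1 ≤ m) (A c : ℕ → ℝ)
    (hA : ∀ i < m, 1 < A i) (hc : ∀ i < m, 0 < c i) :
    dimH {x : ℝ | x ∈ Set.Ioo (0 : ℝ) 1 ∧ Irrational x ∧
      {n : ℕ | ∀ i < m, c i * A i ^ n ≤ (pq x (n + i) : ℝ) ∧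
        (pq x (n + i) : ℝ) < 2 * (c i * A i ^ n)}.Infinite} ≥
    ENNReal.ofReal
      ((Finset.range m).inf' (Finset.nonempty_range_iff.mpr (by omega)) (dimNum A)) := by
  set d := (Finset.range m).inf' (Finset.nonempty_range_iff.mpr (by omega)) (dimNum A)
  have hd : ∀ i < m, d ≤ dimNum A i := fun i hi => Finset.inf'_le _ (Finset.mem_range.2 hi)
  have hd₁ : d ≤ 1 := (hd 0 hm).trans <| by
    simpa [dimNum_eq_gExp] using gExp_le_one (hA 0 hm).le zero_le_one
  refine le_of_forall_lt fun b hb => ?_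
  have hbt : b ≠ ⊤ := ne_top_of_lt hb
  obtain ⟨s, hbs, hsd⟩ := exists_between ((ENNReal.lt_ofReal_iff_toReal_lt hbt).1 hb)
  calc b < ENNReal.ofReal s := (ENNReal.lt_ofReal_iff_toReal_lt hbt).2 hbs
    _ ≤ _ := ofReal_le_dimH_of_lt_dimNum hm hA hc (ENNReal.toReal_nonneg.trans hbs.le)
      (hsd.le.trans hd₁) fun i hi => hsd.trans_le (hd i hi)
end

section
/- For every real B with 1 ≤ B < ∞, the set F(B) = { x ∈ (0,1) irrational : a_n(x) ≥ B^n for infinitely many n ∈ ℕ } satisfies dim_H F(B) = s_B. -/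
open Filter MeasureTheory Set

/-!
Write `T` for the Gauss map and `qₙ` for the continuant of a word of length `n`. The inverse branch
of `Tⁿ` indexed by a word contracts distances by a factor comparable to `qₙ⁻²`.

*Upper bound.* If `aₙ₊₁(x) ≥ Bⁿ⁺¹`, then `Tⁿ x ≤ B⁻ⁿ⁻¹`, so `x` lies in one of the intervals of
length at most `(Bⁿ qₙ²)⁻¹` that are indexed by the words of length `n`. The sums of the `s`-th
powers of these lengths are the partition sums of the pressure; they decay geometrically once
`s > s_B`, and the points that are covered infinitely often form a null set for `μH[s]`.

*Lower bound.* If `s < s_B`, the partition sums are unbounded, so there is a probability measure on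
finitely many words of a common length `n` whose weights are at most `(Bⁿ qₙ²)⁻ˢ / c`, with `c` as
large as we please. Concatenating independent words with this law gives prefixes of length `n` and
mass at most a small multiple of `(Bⁿ qₙ²)⁻ˢ`. When the mass has become small enough, it pays for a
digit drawn uniformly from `[N, 2N)` with `N` just above `Bⁿ`, where `n` is now the index of that
digit. Afterwards the mass is larger than `(Bⁿ qₙ²)⁻ˢ` again, but still `O(qₙ⁻²ˢ)`. Alternating long
runs of free words with such jumps gives a measure on `F(B)` to which the mass distribution
principle with exponent `s` applies. Every block starts with the digit `2`, which keeps the images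
of distinct words apart at the cost of a bounded factor.
-/

namespace WangWu

open scoped ENNReal

section Branch

/-- The inverse branch `x ↦ 1 / (a₁ + 1 / (a₂ + ⋯ + 1 / (aₙ + x)))` of the `n`-th iterate of the
Gauss map that is indexed by the word `a₁ a₂ ⋯ aₙ`. -/
noncomputable def branch : List ℕ+ → ℝ → ℝ
  | [], x => x
  | a :: w, x => 1 / (a + branch w x)

/-- The denominator `qₙ + x qₙ₋₁` of `branch w x`, computed as the product of the denominators of
the successive quotients. -/
noncomputable def branchDenom : List ℕ+ → ℝ → ℝ
  | [], _ => 1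
  | a :: w, x => (a + branch w x) * branchDenom w x

/-- The continuant `qₙ` of a word of length `n`; see `contQ_eq_continuant` for its link with the
recursion defining `contQ`. -/
noncomputable def continuant (w : List ℕ+) : ℝ := branchDenom w 0

variable {w w' : List ℕ+} {x y : ℝ}

lemma one_le_digit (a : ℕ+) : (1 : ℝ) ≤ (a : ℕ) := mod_cast a.pos

lemma branch_nonneg (w : List ℕ+) (hx : 0 ≤ x) : 0 ≤ branch w x := by
  induction w with
  | nil => exact hx
  | cons a w ih => simp only [branch]; positivity

lemma branch_mem_Icc (w : List ℕ+) (hx : x ∈ Icc (0 : ℝ) 1) : branch w x ∈ Icc (0 : ℝ) 1 := by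
  refine ⟨branch_nonneg w hx.1, ?_⟩
  cases w with
  | nil => exact hx.2
  | cons a w =>
    have hpos : 1 ≤ a + branch w x := by linarith [one_le_digit a, branch_nonneg w hx.1]
    exact div_le_one_of_le₀ hpos (by linarith)

lemma branch_mem_Ioo (w : List ℕ+) (hx : x ∈ Ioo (0 : ℝ) 1) : branch w x ∈ Ioo (0 : ℝ) 1 := by
  induction w with
  | nil => exact hx
  | cons a w ih =>
    have hpos : 1 < a + branch w x := by linarith [one_le_digit a, ih.1]
    exact ⟨by simp only [branch]; positivity, (div_lt_one (by linarith)).2 hpos⟩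

lemma branch_append (w w' : List ℕ+) (x : ℝ) :
    branch (w ++ w') x = branch w (branch w' x) := by
  induction w with
  | nil => rfl
  | cons a w ih => simp only [List.cons_append, branch, ih]

lemma branchDenom_append (w w' : List ℕ+) (x : ℝ) :
    branchDenom (w ++ w') x = branchDenom w (branch w' x) * branchDenom w' x := by
  induction w with
  | nil => simp only [List.nil_append, branchDenom, one_mul]
  | cons a w ih => simp only [List.cons_append, branchDenom, branch_append, ih, mul_assoc]

lemma one_le_branchDenom (w : List ℕ+) (hx : 0 ≤ x) : 1 ≤ branchDenom w x := by
  induction w with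
  | nil => exact le_rfl
  | cons a w ih =>
    exact one_le_mul_of_one_le_of_one_le (by linarith [one_le_digit a, branch_nonneg w hx]) ih

lemma one_le_continuant (w : List ℕ+) : 1 ≤ continuant w := one_le_branchDenom w le_rfl

lemma continuant_pos (w : List ℕ+) : 0 < continuant w := one_pos.trans_le (one_le_continuant w)

lemma abs_branch_sub (w : List ℕ+) (hx : 0 ≤ x) (hy : 0 ≤ y) :
    |branch w x - branch w y| = |x - y| / (branchDenom w x * branchDenom w y) := by
  induction w with
  | nil => simp only [branch, branchDenom, mul_one, div_one]
  | cons a w ih =>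
    have hdx : 0 < a + branch w x := by linarith [one_le_digit a, branch_nonneg w hx]
    have hdy : 0 < a + branch w y := by linarith [one_le_digit a, branch_nonneg w hy]
    have hdiff : branch (a :: w) x - branch (a :: w) y =
        -(branch w x - branch w y) / ((a + branch w x) * (a + branch w y)) := by
      simp only [branch]
      field_simp
      ring
    rw [hdiff, abs_div, abs_neg, abs_of_pos (mul_pos hdx hdy), ih, div_div]
    simp only [branchDenom]
    ring_nf

lemma branchDenom_concat_of_eq {β : ℝ}
    (hβ : ∀ x, 0 ≤ x → branchDenom w x = continuant w + β * x) (a : ℕ+) (hx : 0 ≤ x) :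
    branchDenom (w ++ [a]) x = a * continuant w + β + continuant w * x := by
  have hpos : 0 < a + x := by linarith [one_le_digit a]
  have hbranch : branch [a] x = 1 / (a + x) := rfl
  have hdenom : branchDenom [a] x = a + x := mul_one _
  rw [branchDenom_append, hbranch, hdenom, hβ _ (one_div_pos.2 hpos).le]
  field_simp
  ring

lemma exists_branchDenom_eq (w : List ℕ+) :
    ∃ β ∈ Icc 0 (continuant w), ∀ x, 0 ≤ x → branchDenom w x = continuant w + β * x := by
  induction w using List.reverseRecOn with
  | nil => exact ⟨0, ⟨le_rfl, zero_le_one⟩, by simp [branchDenom, continuant]⟩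
  | append_singleton w a ih =>
    obtain ⟨β, ⟨hβ, -⟩, hw⟩ := ih
    have hconcat : continuant (w ++ [a]) = a * continuant w + β := by
      rw [continuant, branchDenom_concat_of_eq hw a le_rfl, mul_zero, add_zero]
    have hq := continuant_pos w
    refine ⟨continuant w, ⟨hq.le, ?_⟩, fun x hx ↦ ?_⟩
    · nlinarith [one_le_digit a]
    · rw [branchDenom_concat_of_eq hw a hx, hconcat]

lemma branchDenom_concat (w : List ℕ+) (a : ℕ+) (hx : 0 ≤ x) :
    branchDenom (w ++ [a]) x = continuant (w ++ [a]) + continuant w * x := by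
  obtain ⟨β, -, hβ⟩ := exists_branchDenom_eq w
  rw [continuant, branchDenom_concat_of_eq hβ a hx, branchDenom_concat_of_eq hβ a le_rfl]
  ring

lemma continuant_concat_concat (w : List ℕ+) (a b : ℕ+) :
    continuant (w ++ [a] ++ [b]) = b * continuant (w ++ [a]) + continuant w := by
  have hb : (0 : ℝ) < b := mod_cast b.pos
  have hbranch : branch [b] 0 = 1 / b := by simp [branch]
  have hdenom : branchDenom [b] 0 = b := by simp [branch, branchDenom]
  rw [continuant, branchDenom_append, hbranch, hdenom, branchDenom_concat w a (one_div_pos.2 hb).le]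
  field_simp

lemma contQ_eq_continuant : ∀ (n : ℕ) (a : Fin n → ℕ+),
    (contQ n (fun i ↦ (a i : ℕ)) : ℝ) = continuant (List.ofFn a)
  | 0, a => by simp [contQ, continuant, branchDenom]
  | 1, a => by simp [contQ, continuant, branchDenom, branch]
  | n + 2, a => by
    have hinit : List.ofFn (Fin.init a) =
        List.ofFn (Fin.init (Fin.init a)) ++ [a (Fin.last n).castSucc] := List.ofFn_succ_last
    have hlast : List.ofFn a = List.ofFn (Fin.init a) ++ [a (Fin.last (n + 1))] :=
      List.ofFn_succ_last
    rw [hlast, hinit, continuant_concat_concat, ← hinit, ← contQ_eq_continuant (n + 1),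
      ← contQ_eq_continuant n, contQ]
    push_cast
    rfl

lemma continuant_le_branchDenom (w : List ℕ+) (hx : 0 ≤ x) : continuant w ≤ branchDenom w x := by
  obtain ⟨β, ⟨hβ, -⟩, hw⟩ := exists_branchDenom_eq w
  rw [hw x hx]
  exact le_add_of_nonneg_right (by positivity)

lemma branchDenom_le_two_mul (w : List ℕ+) (hx : x ∈ Icc (0 : ℝ) 1) :
    branchDenom w x ≤ 2 * continuant w := by
  obtain ⟨β, ⟨hβ, hβq⟩, hw⟩ := exists_branchDenom_eq w
  rw [hw x hx.1]
  linarith [mul_le_of_le_one_right hβ hx.2]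

lemma continuant_append_le (w w' : List ℕ+) :
    continuant (w ++ w') ≤ 2 * continuant w * continuant w' := by
  rw [continuant.eq_def (w ++ w'), branchDenom_append]
  exact mul_le_mul_of_nonneg_right
    (branchDenom_le_two_mul w (branch_mem_Icc w' ⟨le_rfl, zero_le_one⟩)) (continuant_pos w').le

lemma continuant_append_two_cons_le (w w' : List ℕ+) :
    continuant (w ++ 2 :: w') ≤ 6 * continuant w * continuant w' := by
  have hcons : continuant (2 :: w') ≤ 3 * continuant w' := by
    have hbranch := (branch_mem_Icc w' (x := 0) ⟨le_rfl, zero_le_one⟩).2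
    have htwo : (((2 : ℕ+) : ℕ) : ℝ) = 2 := rfl
    exact mul_le_mul_of_nonneg_right (by linarith) (continuant_pos w').le
  calc continuant (w ++ 2 :: w') ≤ 2 * continuant w * continuant (2 :: w') :=
        continuant_append_le _ _
    _ ≤ 2 * continuant w * (3 * continuant w') := by have := continuant_pos w; gcongr
    _ = 6 * continuant w * continuant w' := by ring

lemma abs_branch_sub_le (w : List ℕ+) (hx : 0 ≤ x) (hy : 0 ≤ y) :
    |branch w x - branch w y| ≤ |x - y| / continuant w ^ 2 := by
  have hq := continuant_pos w
  rw [abs_branch_sub w hx hy, sq]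
  exact div_le_div_of_nonneg_left (abs_nonneg _) (mul_pos hq hq)
    (mul_le_mul_of_nonneg (continuant_le_branchDenom w hx) (continuant_le_branchDenom w hy) hq.le
      (hq.le.trans (continuant_le_branchDenom w hy)))

lemma abs_sub_le_mul_abs_branch_sub (w : List ℕ+) (hx : x ∈ Icc (0 : ℝ) 1)
    (hy : y ∈ Icc (0 : ℝ) 1) :
    |x - y| ≤ 4 * continuant w ^ 2 * |branch w x - branch w y| := by
  have hdx := one_le_branchDenom w hx.1
  have hdy := one_le_branchDenom w hy.1
  have hprod : branchDenom w x * branchDenom w y ≤ 4 * continuant w ^ 2 := by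
    nlinarith [branchDenom_le_two_mul w hx, branchDenom_le_two_mul w hy]
  rw [abs_branch_sub w hx.1 hy.1, mul_div_assoc', le_div_iff₀ (by positivity), mul_comm]
  gcongr

lemma injOn_branch (w : List ℕ+) : InjOn (branch w) (Icc 0 1) := by
  intro x hx y hy h
  simpa [h, sub_eq_zero] using abs_sub_le_mul_abs_branch_sub w hx hy

lemma two_pow_length_le : ∀ w : List ℕ+, (2 : ℝ) ^ w.length ≤ 2 * continuant w ^ 2
  | [] => by simp [continuant, branchDenom]
  | [a] => by
    have ha := one_le_digit a
    simp only [continuant, branchDenom, branch, add_zero, mul_one, List.length_singleton, pow_one]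
    nlinarith
  | a :: b :: w => by
    have hz := branch_nonneg w (le_refl (0 : ℝ))
    have hq := continuant_pos w
    have hdouble : 2 * continuant w ≤ continuant (a :: b :: w) := by
      have ha := one_le_digit a
      have hb := one_le_digit b
      simp only [continuant, branchDenom, branch] at hz hq ⊢
      rw [← mul_assoc]
      gcongr
      field_simp
      nlinarith
    calc (2 : ℝ) ^ (a :: b :: w).length = 4 * 2 ^ w.length := by
          simp only [List.length_cons]; ring
      _ ≤ 4 * (2 * continuant w ^ 2) := by gcongr; exact two_pow_length_le w
      _ = 2 * (2 * continuant w) ^ 2 := by ring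
      _ ≤ 2 * continuant (a :: b :: w) ^ 2 := by gcongr

lemma continuousOn_branch (w : List ℕ+) : ContinuousOn (branch w) (Icc 0 1) := by
  refine (LipschitzOnWith.of_dist_le_mul (K := 1) fun x hx y hy ↦ ?_).continuousOn
  simp only [Real.dist_eq, NNReal.coe_one, one_mul]
  exact (abs_branch_sub_le w hx.1 hy.1).trans
    (div_le_self (abs_nonneg _) (one_le_pow₀ (one_le_continuant w)))

end Branch

section GaussMap

variable {x y : ℝ}

lemma gaussMap_eq_fract (x : ℝ) : gaussMap x = Int.fract x⁻¹ := by
  rw [gaussMap, one_div, Int.fract]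

lemma gaussMap_one_div_add (a : ℕ+) (hx : x ∈ Ioo (0 : ℝ) 1) : gaussMap (1 / (a + x)) = x := by
  rw [gaussMap_eq_fract, one_div, inv_inv, Int.fract_natCast_add]
  exact Int.fract_eq_self.2 ⟨hx.1.le, hx.2⟩

lemma pq_one_one_div_add (a : ℕ+) (hx : x ∈ Ioo (0 : ℝ) 1) : pq (1 / (a + x)) 1 = a := by
  have hfloor : ⌊x⌋₊ = 0 := Nat.floor_eq_zero.2 hx.2
  simp only [pq, Nat.sub_self, Function.iterate_zero, id, one_div_one_div]
  rw [add_comm, Nat.floor_add_natCast hx.1.le, hfloor, zero_add]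

lemma gaussMap_iterate_branch (w : List ℕ+) (hx : x ∈ Ioo (0 : ℝ) 1) :
    gaussMap^[w.length] (branch w x) = x := by
  induction w with
  | nil => rfl
  | cons a w ih =>
    simp only [List.length_cons, Function.iterate_succ_apply, branch]
    rw [gaussMap_one_div_add a (branch_mem_Ioo w hx), ih]

lemma gaussMap_iterate_branch_of_le {w : List ℕ+} {n : ℕ} (hn : n ≤ w.length)
    (hx : x ∈ Ioo (0 : ℝ) 1) : gaussMap^[n] (branch w x) = branch (w.drop n) x := by
  have h := gaussMap_iterate_branch (w.take n) (branch_mem_Ioo (w.drop n) hx)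
  rwa [← branch_append, List.take_append_drop, List.length_take_of_le hn] at h

lemma pq_branch_append_cons (w : List ℕ+) (a : ℕ+) (w' : List ℕ+) (hx : x ∈ Ioo (0 : ℝ) 1) :
    pq (branch (w ++ a :: w') x) (w.length + 1) = a := by
  rw [branch_append, pq, Nat.add_sub_cancel,
    gaussMap_iterate_branch w (branch_mem_Ioo (a :: w') hx)]
  exact pq_one_one_div_add a (branch_mem_Ioo w' hx)

lemma eq_of_branch_eq {w w' : List ℕ+} (hlength : w.length = w'.length) (hx : x ∈ Ioo (0 : ℝ) 1)
    (hy : y ∈ Ioo (0 : ℝ) 1) (h : branch w x = branch w' y) : w = w' := by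
  induction w generalizing w' with
  | nil => exact (List.length_eq_zero_iff.1 hlength.symm).symm
  | cons a w ih =>
    obtain ⟨b, w', rfl⟩ := List.exists_cons_of_length_eq_add_one hlength.symm
    have hw := branch_mem_Ioo w hx
    have hw' := branch_mem_Ioo w' hy
    have hdigit : a = b := by
      rw [← PNat.coe_inj, ← pq_one_one_div_add a hw, ← pq_one_one_div_add b hw']
      exact congrArg (pq · 1) h
    have htail : branch w x = branch w' y := by
      rw [← gaussMap_one_div_add a hw, ← gaussMap_one_div_add b hw']
      exact congrArg gaussMap h
    rw [hdigit, ih (Nat.succ_injective hlength) htail]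

lemma gaussMap_mem_Ioo (hx : Irrational x) : gaussMap x ∈ Ioo (0 : ℝ) 1 := by
  rw [gaussMap_eq_fract]
  exact ⟨Int.fract_pos.2 (hx.inv.ne_int _), Int.fract_lt_one _⟩

lemma irrational_gaussMap (hx : Irrational x) : Irrational (gaussMap x) := by
  rw [gaussMap_eq_fract, Int.fract]
  exact hx.inv.sub_intCast _

lemma gaussMap_iterate_mem_Ioo (hx : x ∈ Ioo (0 : ℝ) 1) (hirr : Irrational x) (n : ℕ) :
    gaussMap^[n] x ∈ Ioo (0 : ℝ) 1 := by
  induction n generalizing x with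
  | zero => exact hx
  | succ _ ih => exact ih (gaussMap_mem_Ioo hirr) (irrational_gaussMap hirr)

lemma exists_one_div_add_gaussMap_eq (hx : x ∈ Ioo (0 : ℝ) 1) :
    ∃ a : ℕ+, 1 / (a + gaussMap x) = x := by
  have hfloor : 0 < ⌊1 / x⌋₊ := Nat.floor_pos.2 ((one_le_div hx.1).2 hx.2.le)
  refine ⟨⟨⌊1 / x⌋₊, hfloor⟩, ?_⟩
  rw [gaussMap, PNat.mk_coe, natCast_floor_eq_intCast_floor (one_div_pos.2 hx.1).le,
    add_sub_cancel, one_div_one_div]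

lemma exists_branch_gaussMap_iterate_eq (n : ℕ) (hx : x ∈ Ioo (0 : ℝ) 1) (hirr : Irrational x) :
    ∃ a : Fin n → ℕ+, branch (List.ofFn a) (gaussMap^[n] x) = x := by
  induction n generalizing x with
  | zero => exact ⟨Fin.elim0, rfl⟩
  | succ n ih =>
    obtain ⟨a, ha⟩ := exists_one_div_add_gaussMap_eq hx
    obtain ⟨b, hb⟩ := ih (gaussMap_mem_Ioo hirr) (irrational_gaussMap hirr)
    refine ⟨Fin.cons a b, ?_⟩
    rw [List.ofFn_cons, Function.iterate_succ_apply, branch, hb, ha]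

open GenContFract in
lemma irrational_of_gaussMap_iterate_mem_Ioo (hx : ∀ n, gaussMap^[n] x ∈ Ioo (0 : ℝ) 1) :
    Irrational x := by
  have hstream (n : ℕ) : ∃ p, IntFractPair.stream x n = some p ∧ p.fr = gaussMap^[n] x := by
    induction n with
    | zero => exact ⟨_, rfl, Int.fract_eq_self.2 ⟨(hx 0).1.le, (hx 0).2⟩⟩
    | succ n ih =>
      obtain ⟨p, hp, hfr⟩ := ih
      have hne : p.fr ≠ 0 := hfr ▸ (hx n).1.ne'
      refine ⟨_, IntFractPair.stream_succ_of_some hp hne, ?_⟩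
      rw [Function.iterate_succ_apply', ← hfr, gaussMap_eq_fract]
      rfl
  rintro ⟨r, hr⟩
  obtain ⟨n, hn⟩ := (terminates_iff_rat x).2 ⟨r, hr.symm⟩
  obtain ⟨p, hp, -⟩ := hstream (n + 1)
  simp [of_terminatedAt_n_iff_succ_nth_intFractPair_stream_eq_none.1 hn] at hp

end GaussMap

section TailInterval

/-- The interval `[1/3, 1/2]`, which contains the image of `[0, 1]` under every inverse branch whose
first digit is `2`. It stays away from the endpoints of `[0, 1]`, where inverse branches of distinct
words of the same length may agree. -/
def tailInterval : Set ℝ := Icc (1 / 3) (1 / 2)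

lemma tailInterval_subset_Ioo : tailInterval ⊆ Ioo 0 1 :=
  Icc_subset_Ioo (by norm_num) (by norm_num)

lemma tailInterval_subset_Icc : tailInterval ⊆ Icc 0 1 :=
  Icc_subset_Icc (by norm_num) (by norm_num)

lemma branch_two_cons_mem_tailInterval (w : List ℕ+) {x : ℝ} (hx : x ∈ Icc (0 : ℝ) 1) :
    branch (2 :: w) x ∈ tailInterval := by
  obtain ⟨hnonneg, hle⟩ := branch_mem_Icc w hx
  have htwo : (((2 : ℕ+) : ℕ) : ℝ) = 2 := rfl
  simp only [branch, htwo]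
  constructor
  · exact one_div_le_one_div_of_le (by linarith) (by linarith)
  · exact one_div_le_one_div_of_le two_pos (by linarith)

lemma continuousOn_branch_tailInterval (w : List ℕ+) : ContinuousOn (branch w) tailInterval :=
  (continuousOn_branch w).mono tailInterval_subset_Icc

lemma isCompact_image_branch (w : List ℕ+) : IsCompact (branch w '' tailInterval) :=
  isCompact_Icc.image_of_continuousOn (continuousOn_branch_tailInterval w)

lemma disjoint_image_branch {w w' : List ℕ+} (hlength : w.length = w'.length) (hne : w ≠ w') :
    Disjoint (branch w '' tailInterval) (branch w' '' tailInterval) := by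
  rw [Set.disjoint_left]
  rintro _ ⟨x, hx, rfl⟩ ⟨y, hy, h⟩
  exact hne (eq_of_branch_eq hlength (tailInterval_subset_Ioo hx) (tailInterval_subset_Ioo hy)
    h.symm)

lemma le_volume_image_branch (w : List ℕ+) :
    ENNReal.ofReal (1 / (24 * continuant w ^ 2)) ≤ volume (branch w '' tailInterval) := by
  have hle : (1 / 3 : ℝ) ≤ 1 / 2 := by norm_num
  have hq := continuant_pos w
  have hexpand : 1 / 6 ≤ 4 * continuant w ^ 2 * |branch w (1 / 2) - branch w (1 / 3)| := by
    convert abs_sub_le_mul_abs_branch_sub w (x := 1 / 2) (y := 1 / 3) ⟨by norm_num, by norm_num⟩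
      ⟨by norm_num, by norm_num⟩ using 1
    norm_num
  have hsubset : uIcc (branch w (1 / 3)) (branch w (1 / 2)) ⊆ branch w '' tailInterval := by
    have := intermediate_value_uIcc (f := branch w) (a := 1 / 3) (b := 1 / 2)
      (by rw [uIcc_of_le hle]; exact continuousOn_branch_tailInterval w)
    rwa [uIcc_of_le hle] at this
  calc ENNReal.ofReal (1 / (24 * continuant w ^ 2))
      ≤ ENNReal.ofReal |branch w (1 / 2) - branch w (1 / 3)| := by
        refine ENNReal.ofReal_le_ofReal ((div_le_iff₀ (by positivity)).2 ?_)
        linarith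
    _ = volume (uIcc (branch w (1 / 3)) (branch w (1 / 2))) := Real.volume_interval.symm
    _ ≤ volume (branch w '' tailInterval) := measure_mono hsubset

end TailInterval

section Pressure

open ExpGrowth

/-- The partition function `∑ (Bⁿ qₙ(a₁, …, aₙ)²)⁻ˢ`, whose exponential growth rate in `n` is the
pressure of the potential `-s log |T'| - s log B`. -/
noncomputable def partitionSum (B s : ℝ) (n : ℕ) : ℝ≥0∞ :=
  ∑' a : Fin n → ℕ+, ENNReal.ofReal ((B ^ n * continuant (List.ofFn a) ^ 2) ^ (-s))

variable {B s : ℝ}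

lemma sExp_eq_sInf (B : ℝ) : sExp B = sInf {s | 0 ≤ s ∧ expGrowthSup (partitionSum B s) ≤ 0} := by
  have hterm (n : ℕ) (s : ℝ) : ((n : ℝ)⁻¹ : ℝ) * ENNReal.log (∑' a : Fin n → ℕ+,
      ENNReal.ofReal ((B ^ n * ((contQ n fun i ↦ (a i : ℕ)) : ℝ) ^ 2) ^ (-s))) =
      ENNReal.log (partitionSum B s n) / n := by
    simp only [contQ_eq_continuant, partitionSum]
    rw [mul_comm, EReal.div_eq_inv_mul, mul_comm, EReal.coe_inv]
    rfl
  simp only [sExp, hterm]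
  rfl

lemma sExp_nonneg (B : ℝ) : 0 ≤ sExp B := Real.sInf_nonneg fun _ hs ↦ hs.1

lemma sExp_le (hs : 0 ≤ s) (h : expGrowthSup (partitionSum B s) ≤ 0) : sExp B ≤ s :=
  (sExp_eq_sInf B).trans_le (csInf_le ⟨0, fun _ ht ↦ ht.1⟩ ⟨hs, h⟩)

lemma expGrowthSup_nonpos_of_le {u : ℕ → ℝ≥0∞} {C : ℝ≥0∞} (hC : C ≠ ∞) (h : ∀ n, u n ≤ C) :
    expGrowthSup u ≤ 0 :=
  calc expGrowthSup u ≤ expGrowthSup fun _ ↦ max C 1 :=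
        expGrowthSup_monotone fun n ↦ (h n).trans (le_max_left C 1)
    _ = 0 := expGrowthSup_const (by simp) (by simp [hC])

lemma exists_lt_partitionSum {C : ℝ≥0∞} (hs : 0 ≤ s) (hsB : s < sExp B) (hC : C ≠ ∞) :
    ∃ n, C < partitionSum B s n := by
  by_contra! h
  exact hsB.not_ge (sExp_le hs (expGrowthSup_nonpos_of_le hC h))

lemma partitionSum_one_le (hB : 1 ≤ B) (n : ℕ) : partitionSum B 1 n ≤ 24 := by
  have hvolume : ∑' a : Fin n → ℕ+, volume (branch (List.ofFn a) '' tailInterval) ≤ 1 := by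
    calc _ = volume (⋃ a : Fin n → ℕ+, branch (List.ofFn a) '' tailInterval) := by
          refine (measure_iUnion (fun a b hab ↦ disjoint_image_branch (by simp) ?_)
            fun a ↦ (isCompact_image_branch _).measurableSet).symm
          exact fun h ↦ hab (List.ofFn_injective h)
      _ ≤ volume (Icc (0 : ℝ) 1) := by
          refine measure_mono (iUnion_subset fun a ↦ ?_)
          rintro _ ⟨x, hx, rfl⟩
          exact branch_mem_Icc _ (tailInterval_subset_Icc hx)
      _ = 1 := by simp
  calc partitionSum B 1 n
      ≤ ∑' a : Fin n → ℕ+, 24 * volume (branch (List.ofFn a) '' tailInterval) := by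
        refine ENNReal.tsum_le_tsum fun a ↦ ?_
        refine le_trans ?_ (mul_le_mul_right (le_volume_image_branch (List.ofFn a)) 24)
        have hq := continuant_pos (List.ofFn a)
        rw [← ENNReal.ofReal_ofNat, ← ENNReal.ofReal_mul (by norm_num), Real.rpow_neg_one]
        refine ENNReal.ofReal_le_ofReal ?_
        rw [mul_one_div, ← div_div, div_self (by norm_num), one_div]
        exact inv_anti₀ (by positivity) (le_mul_of_one_le_left (by positivity) (one_le_pow₀ hB))
    _ = 24 * ∑' a : Fin n → ℕ+, volume (branch (List.ofFn a) '' tailInterval) :=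
        ENNReal.tsum_mul_left
    _ ≤ 24 := mul_le_of_le_one_right' hvolume

lemma expGrowthSup_partitionSum_one_nonpos (hB : 1 ≤ B) : expGrowthSup (partitionSum B 1) ≤ 0 :=
  expGrowthSup_nonpos_of_le (by simp) (partitionSum_one_le hB)

lemma sExp_le_one (hB : 1 ≤ B) : sExp B ≤ 1 :=
  sExp_le zero_le_one (expGrowthSup_partitionSum_one_nonpos hB)

lemma partitionSum_le_mul {s' : ℝ} (hB : 1 ≤ B) (hs : s' ≤ s) (n : ℕ) :
    partitionSum B s n ≤ ENNReal.ofReal (2 ^ (s - s')) *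
      (ENNReal.ofReal (2 ^ (-(s - s'))) ^ n * partitionSum B s' n) := by
  simp only [partitionSum]
  rw [← ENNReal.tsum_mul_left, ← ENNReal.tsum_mul_left]
  refine ENNReal.tsum_le_tsum fun a ↦ ?_
  have hq := continuant_pos (List.ofFn a)
  have hlarge : (2 : ℝ) ^ n / 2 ≤ B ^ n * continuant (List.ofFn a) ^ 2 := by
    have := two_pow_length_le (List.ofFn a)
    rw [List.length_ofFn] at this
    nlinarith [one_le_pow₀ (n := n) hB, sq_nonneg (continuant (List.ofFn a))]
  set Q := B ^ n * continuant (List.ofFn a) ^ 2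
  have hQpos : 0 < Q := lt_of_lt_of_le (by positivity) hlarge
  have hdecay : Q ^ (-(s - s')) ≤ 2 ^ (s - s') * (2 ^ (-(s - s'))) ^ n := by
    calc Q ^ (-(s - s')) ≤ ((2 : ℝ) ^ n / 2) ^ (-(s - s')) :=
          Real.rpow_le_rpow_of_nonpos (by positivity) hlarge (by linarith)
      _ = 2 ^ (s - s') * (2 ^ (-(s - s'))) ^ n := by
          rw [Real.div_rpow (by positivity) two_pos.le, ← Real.rpow_natCast_mul two_pos.le,
            ← Real.rpow_mul_natCast two_pos.le, mul_comm (n : ℝ), Real.rpow_neg two_pos.le (s - s'),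
            div_inv_eq_mul, mul_comm]
  rw [← ENNReal.ofReal_pow (by positivity), ← ENNReal.ofReal_mul (by positivity),
    ← ENNReal.ofReal_mul (by positivity)]
  refine ENNReal.ofReal_le_ofReal ?_
  calc Q ^ (-s) = Q ^ (-(s - s')) * Q ^ (-s') := by rw [← Real.rpow_add hQpos]; ring_nf
    _ ≤ 2 ^ (s - s') * ((2 ^ (-(s - s'))) ^ n * Q ^ (-s')) := by
      rw [← mul_assoc]; gcongr

lemma expGrowthSup_partitionSum_neg (hB : 1 ≤ B) (hs : sExp B < s) :
    expGrowthSup (partitionSum B s) < 0 := by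
  obtain ⟨s', ⟨-, hgrowth⟩, hs's⟩ :=
    exists_lt_of_csInf_lt
      (by exact ⟨1, zero_le_one, expGrowthSup_partitionSum_one_nonpos hB⟩) (sExp_eq_sInf B ▸ hs)
  set r := ENNReal.ofReal (2 ^ (-(s - s')))
  have hr : r < 1 := by
    rw [ENNReal.ofReal_lt_one]
    exact Real.rpow_lt_one_of_one_lt_of_neg one_lt_two (by linarith)
  have hlog : ENNReal.log r < 0 := ENNReal.log_lt_zero_iff.2 hr
  calc expGrowthSup (partitionSum B s)
      ≤ expGrowthSup ((fun n ↦ r ^ n) * partitionSum B s') :=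
        expGrowthSup_le_of_eventually_le ENNReal.ofReal_ne_top
          (.of_forall (partitionSum_le_mul hB hs's.le))
    _ ≤ ENNReal.log r + expGrowthSup (partitionSum B s') := by
        rw [← expGrowthSup_pow]
        refine expGrowthSup_mul_le (.inr (hgrowth.trans_lt EReal.zero_lt_top).ne) (.inl ?_)
        rw [expGrowthSup_pow]
        exact (hlog.trans EReal.zero_lt_top).ne
    _ ≤ ENNReal.log r + 0 := by gcongr
    _ < 0 := by rwa [add_zero]

lemma exists_tsum_add_ne_top_of_expGrowthSup_neg {u : ℕ → ℝ≥0∞} (hu : expGrowthSup u < 0) :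
    ∃ N, ∑' n, u (n + N) ≠ ∞ := by
  obtain ⟨a, hua, ha⟩ := exists_between hu
  obtain ⟨N, hN⟩ := eventually_atTop.1 (eventually_le_exp hua)
  have hle (n : ℕ) : u (n + N) ≤ EReal.exp a ^ n := by
    calc u (n + N) ≤ EReal.exp (a * (n + N : ℕ)) := hN _ (Nat.le_add_left N n)
      _ ≤ EReal.exp (n * a) := by
        rw [mul_comm]
        exact EReal.exp_monotone
          (EReal.mul_le_mul_of_nonpos_right (mod_cast Nat.le_add_right n N) ha.le)
      _ = EReal.exp a ^ n := EReal.exp_nmul _ _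
  refine ⟨N, ne_top_of_le_ne_top ?_ (ENNReal.tsum_le_tsum hle)⟩
  rw [ENNReal.tsum_geometric, ENNReal.inv_ne_top]
  exact (tsub_pos_of_lt (EReal.exp_lt_one_iff.2 ha)).ne'

end Pressure

section UpperBound

open Topology

lemma hausdorffMeasure_eq_zero_of_frequently_mem {X : Type*} [EMetricSpace X] [MeasurableSpace X]
    [BorelSpace X] {ι : ℕ → Type*} [∀ n, Countable (ι n)] {s : ℝ} (hs : 0 < s) {E : Set X}
    (t : ∀ n, ι n → Set X) (ht : ∑' n, ∑' i, Metric.ediam (t n i) ^ s ≠ ∞)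
    (hE : ∀ x ∈ E, ∃ᶠ n in atTop, x ∈ ⋃ i, t n i) : μH[s] E = 0 := by
  have htail := ENNReal.tendsto_sum_nat_add (fun n ↦ ∑' i, Metric.ediam (t n i) ^ s) ht
  have hradius : Tendsto (fun k ↦ (∑' m, ∑' i, Metric.ediam (t (m + k) i) ^ s) ^ s⁻¹) atTop
      (𝓝 0) := by
    simpa [hs] using htail.ennrpow_const s⁻¹
  have hdiam (k : ℕ) (i : Σ m, ι (m + k)) :
      Metric.ediam (t (i.1 + k) i.2) ≤ (∑' m, ∑' i, Metric.ediam (t (m + k) i) ^ s) ^ s⁻¹ := by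
    rw [ENNReal.le_rpow_inv_iff hs]
    exact (ENNReal.le_tsum i.2).trans
      (ENNReal.le_tsum (f := fun m ↦ ∑' i, Metric.ediam (t (m + k) i) ^ s) i.1)
  have hcover (k : ℕ) : E ⊆ ⋃ i : Σ m, ι (m + k), t (i.1 + k) i.2 := by
    intro x hx
    obtain ⟨n, hkn, hxn⟩ := frequently_atTop.1 (hE x hx) k
    obtain ⟨m, rfl⟩ := Nat.exists_eq_add_of_le' hkn
    obtain ⟨i, hi⟩ := mem_iUnion.1 hxn
    exact mem_iUnion.2 ⟨⟨m, i⟩, hi⟩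
  have hliminf := Measure.hausdorffMeasure_le_liminf_tsum (ι := fun k ↦ Σ m, ι (m + k)) s E _
    hradius (fun k i ↦ t (i.1 + k) i.2) (.of_forall hdiam) (.of_forall hcover)
  simp only [ENNReal.tsum_sigma (fun m (i : ι (m + _)) ↦ Metric.ediam (t (m + _) i) ^ s)]
    at hliminf
  exact le_antisymm (hliminf.trans_eq htail.liminf_eq) zero_le

/-- The set `F(B)` of irrationals in `(0, 1)` for which `aₙ(x) ≥ Bⁿ` infinitely often. -/
def largeQuotientSet (B : ℝ) : Set ℝ :=
  {x | x ∈ Ioo 0 1 ∧ Irrational x ∧ {n : ℕ | B ^ n ≤ (pq x n : ℝ)}.Infinite}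

/-- The interval containing all the numbers in `(0, 1)` whose continued fraction starts with the
digits `a₁, …, aₙ` followed by a digit that is at least `Bⁿ⁺¹`. -/
noncomputable def largeQuotientInterval (B : ℝ) {n : ℕ} (a : Fin n → ℕ+) : Set ℝ :=
  branch (List.ofFn a) '' Icc 0 (B ^ (n + 1))⁻¹

variable {B s : ℝ}

lemma ediam_largeQuotientInterval_le (hB : 1 ≤ B) {n : ℕ} (a : Fin n → ℕ+) :
    Metric.ediam (largeQuotientInterval B a) ≤
      ENNReal.ofReal (B ^ n * continuant (List.ofFn a) ^ 2)⁻¹ := by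
  have hBn : 0 < B ^ n := by positivity
  refine Metric.ediam_le ?_
  rintro _ ⟨x, hx, rfl⟩ _ ⟨y, hy, rfl⟩
  rw [edist_dist, Real.dist_eq]
  refine ENNReal.ofReal_le_ofReal ((abs_branch_sub_le _ hx.1 hy.1).trans ?_)
  have hxy : |x - y| ≤ (B ^ n)⁻¹ :=
    calc |x - y| ≤ (B ^ (n + 1))⁻¹ := (abs_sub_le_of_le_of_le hx.1 hx.2 hy.1 hy.2).trans_eq
          (sub_zero _)
      _ ≤ (B ^ n)⁻¹ := inv_anti₀ hBn (pow_le_pow_right₀ hB n.le_succ)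
  rw [mul_inv, ← div_eq_mul_inv]
  gcongr

lemma exists_mem_largeQuotientInterval (hB : 1 ≤ B) {x : ℝ} (hx : x ∈ Ioo 0 1)
    (hirr : Irrational x) {n : ℕ} (hn : B ^ (n + 1) ≤ pq x (n + 1)) :
    ∃ a : Fin n → ℕ+, x ∈ largeQuotientInterval B a := by
  obtain ⟨a, ha⟩ := exists_branch_gaussMap_iterate_eq n hx hirr
  have hpos := (gaussMap_iterate_mem_Ioo hx hirr n).1
  refine ⟨a, gaussMap^[n] x, ⟨hpos.le, ?_⟩, ha⟩
  rw [le_inv_comm₀ hpos (by positivity), ← one_div]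
  exact hn.trans (Nat.floor_le (one_div_pos.2 hpos).le)

lemma frequently_mem_iUnion_largeQuotientInterval (hB : 1 ≤ B) (N : ℕ) {x : ℝ}
    (hx : x ∈ largeQuotientSet B) :
    ∃ᶠ m in atTop, x ∈ ⋃ a : Fin (m + N) → ℕ+, largeQuotientInterval B a := by
  obtain ⟨hx01, hirr, hinf⟩ := hx
  refine frequently_atTop.2 fun k ↦ ?_
  obtain ⟨n, hn, hlt⟩ := hinf.exists_gt (k + N)
  obtain ⟨m, rfl⟩ := Nat.exists_eq_add_of_le' (Nat.succ_le_of_lt hlt)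
  refine ⟨m + k, Nat.le_add_left k m, mem_iUnion.2 ?_⟩
  rw [add_assoc]
  exact exists_mem_largeQuotientInterval hB hx01 hirr hn

lemma tsum_ediam_largeQuotientInterval_le (hB : 1 ≤ B) (hs : 0 ≤ s) (n : ℕ) :
    ∑' a : Fin n → ℕ+, Metric.ediam (largeQuotientInterval B a) ^ s ≤ partitionSum B s n := by
  refine ENNReal.tsum_le_tsum fun a ↦ ?_
  have hpos : 0 < B ^ n * continuant (List.ofFn a) ^ 2 := by
    have := continuant_pos (List.ofFn a)
    positivity
  rw [Real.rpow_neg hpos.le, ← Real.inv_rpow hpos.le,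
    ← ENNReal.ofReal_rpow_of_nonneg (inv_pos.2 hpos).le hs]
  exact ENNReal.rpow_le_rpow (ediam_largeQuotientInterval_le hB a) hs

lemma hausdorffMeasure_largeQuotientSet_eq_zero (hB : 1 ≤ B) (hs : sExp B < s) :
    μH[s] (largeQuotientSet B) = 0 := by
  have hpos : 0 < s := (sExp_nonneg B).trans_lt hs
  obtain ⟨N, hN⟩ :=
    exists_tsum_add_ne_top_of_expGrowthSup_neg (expGrowthSup_partitionSum_neg hB hs)
  refine hausdorffMeasure_eq_zero_of_frequently_mem hpos
    (fun m (a : Fin (m + N) → ℕ+) ↦ largeQuotientInterval B a)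
    (ne_top_of_le_ne_top hN (ENNReal.tsum_le_tsum fun m ↦ ?_))
    fun x hx ↦ frequently_mem_iUnion_largeQuotientInterval hB N hx
  exact tsum_ediam_largeQuotientInterval_le hB hpos.le (m + N)

theorem dimH_largeQuotientSet_le (hB : 1 ≤ B) :
    dimH (largeQuotientSet B) ≤ ENNReal.ofReal (sExp B) := by
  refine dimH_le fun d hd ↦ ?_
  by_contra! hlt
  have hs : sExp B < d := by
    rwa [ENNReal.ofReal, ENNReal.coe_lt_coe, Real.toNNReal_lt_iff_lt_coe (sExp_nonneg B)] at hlt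
  simp [hausdorffMeasure_largeQuotientSet_eq_zero hB hs] at hd

end UpperBound

section MassDistribution

lemma le_dimH_range_of_measure_preimage_le {Ω X : Type*} [MeasurableSpace Ω] [EMetricSpace X]
    {μ : Measure Ω} [NeZero μ] {f : Ω → X} {s : NNReal} {C : ℝ≥0∞} (hC : C ≠ ∞)
    (h : ∀ U : Set X, μ (f ⁻¹' U) ≤ C * Metric.ediam U ^ (s : ℝ)) : s ≤ dimH (range f) := by
  borelize X
  refine le_dimH_of_hausdorffMeasure_ne_zero fun hzero ↦ ?_
  have hle : μ univ / C ≤ μH[s] (range f) := by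
    rw [Measure.hausdorffMeasure_apply]
    refine le_iSup₂_of_le 1 one_pos (le_iInf₂ fun t ht ↦ le_iInf fun _ ↦ ?_)
    refine ENNReal.div_le_of_le_mul' ?_
    calc μ univ ≤ μ (⋃ n, f ⁻¹' t n) := by
          rw [← preimage_iUnion, preimage_eq_univ_iff.2 ht]
      _ ≤ ∑' n, μ (f ⁻¹' t n) := measure_iUnion_le _
      _ ≤ ∑' n, C * ⨆ _ : (t n).Nonempty, Metric.ediam (t n) ^ (s : ℝ) := by
          refine ENNReal.tsum_le_tsum fun n ↦ ?_
          obtain hempty | hn := (t n).eq_empty_or_nonempty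
          · simp [hempty]
          · simpa [hn] using h (t n)
      _ = C * ∑' n, ⨆ _ : (t n).Nonempty, Metric.ediam (t n) ^ (s : ℝ) := ENNReal.tsum_mul_left
  rw [hzero, nonpos_iff_eq_zero, ENNReal.div_eq_zero_iff] at hle
  exact hle.elim (NeZero.ne (μ univ)) hC

variable {X : ℕ → Type*}

lemma infinitePi_forall_lt_eq_and_mem [∀ n, MeasurableSpace (X n)]
    [∀ n, MeasurableSingletonClass (X n)] (μ : ∀ n, Measure (X n))
    [∀ n, IsProbabilityMeasure (μ n)] (ω₀ : ∀ n, X n) (k : ℕ) {A : Set (X k)}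
    (hA : MeasurableSet A) :
    Measure.infinitePi μ {ω | (∀ i < k, ω i = ω₀ i) ∧ ω k ∈ A} =
      (∏ i ∈ Finset.range k, μ i {ω₀ i}) * μ k A := by
  have hcylinder : {ω | (∀ i < k, ω i = ω₀ i) ∧ ω k ∈ A} =
      pi (Finset.range (k + 1)) (Function.update (fun i ↦ {ω₀ i}) k A) := by
    ext ω
    rw [Set.mem_pi, mem_ofPred]
    simp only [Finset.mem_coe, Finset.mem_range, Nat.forall_lt_succ_right, Function.update_self]
    refine and_congr_left' (forall₂_congr fun i hi ↦ ?_)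
    rw [Function.update_of_ne hi.ne, mem_singleton_iff]
  rw [hcylinder, Measure.infinitePi_pi, Finset.prod_range_succ, Function.update_self]
  · congr 1
    refine Finset.prod_congr rfl fun i hi ↦ ?_
    rw [Function.update_of_ne (Finset.mem_range.1 hi).ne]
  · intro i _
    obtain rfl | hik := eq_or_ne i k
    · rwa [Function.update_self]
    · rw [Function.update_of_ne hik]
      exact measurableSet_singleton _

lemma exists_first_disagreement {V : Set (∀ n, X n)} (hV : V.Nontrivial) :
    ∃ k, (∀ ω ∈ V, ∀ ω' ∈ V, ∀ i < k, ω i = ω' i) ∧ ((fun ω ↦ ω k) '' V).Nontrivial := by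
  classical
  have hex : ∃ k, ((fun ω ↦ ω k) '' V).Nontrivial := by
    obtain ⟨ω, hω, ω', hω', hne⟩ := hV
    obtain ⟨k, hk⟩ := Function.ne_iff.1 hne
    exact ⟨k, ω k, mem_image_of_mem _ hω, ω' k, mem_image_of_mem _ hω', hk⟩
  refine ⟨Nat.find hex, fun ω hω ω' hω' i hi ↦ ?_, Nat.find_spec hex⟩
  exact not_nontrivial_iff.1 (Nat.find_min hex hi) (mem_image_of_mem _ hω) (mem_image_of_mem _ hω')

end MassDistribution

section Tail

/-- The concatenation of the first `k` blocks of a sequence of blocks of digits. -/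
def prefixWord (c : ℕ → List ℕ+) (k : ℕ) : List ℕ+ := (List.range k).flatMap c

lemma prefixWord_succ (c : ℕ → List ℕ+) (k : ℕ) :
    prefixWord c (k + 1) = prefixWord c k ++ c k := by
  simp [prefixWord, List.range_succ]

lemma prefixWord_congr {c c' : ℕ → List ℕ+} {k : ℕ} (h : ∀ i < k, c i = c' i) :
    prefixWord c k = prefixWord c' k :=
  List.flatMap_congr fun i hi ↦ h i (List.mem_range.1 hi)

lemma exists_tail (c : ℕ → List ℕ+) :
    ∃ t : ℕ → ℝ, ∀ k, t k ∈ Icc 0 1 ∧ branch (c k) (t (k + 1)) = t k := by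
  obtain ⟨x, hx⟩ := IsCompact.nonempty_iInter_of_sequence_nonempty_isCompact_isClosed
    (fun k ↦ branch (prefixWord c k) '' Icc 0 1)
    (fun k ↦ by
      rintro _ ⟨y, hy, rfl⟩
      rw [prefixWord_succ, branch_append]
      exact mem_image_of_mem _ (branch_mem_Icc _ hy))
    (fun k ↦ (nonempty_Icc.2 zero_le_one).image _)
    (isCompact_Icc.image_of_continuousOn (continuousOn_branch _))
    (fun k ↦ (isCompact_Icc.image_of_continuousOn (continuousOn_branch _)).isClosed)
  choose t ht htx using mem_iInter.1 hx
  refine ⟨t, fun k ↦ ⟨ht k, ?_⟩⟩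
  have hnext := branch_mem_Icc (c k) (ht (k + 1))
  refine injOn_branch (prefixWord c k) hnext (ht k) ?_
  rw [← branch_append, ← prefixWord_succ, htx, htx]

/-- The real number in `[0, 1]` whose continued fraction expansion is the concatenation of the
blocks `c k`, `c (k + 1)`, … -/
noncomputable def tail (c : ℕ → List ℕ+) : ℕ → ℝ := (exists_tail c).choose

lemma branch_tail_succ (c : ℕ → List ℕ+) (k : ℕ) : branch (c k) (tail c (k + 1)) = tail c k :=
  ((exists_tail c).choose_spec k).2

lemma tail_mem_Icc (c : ℕ → List ℕ+) (k : ℕ) : tail c k ∈ Icc 0 1 :=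
  ((exists_tail c).choose_spec k).1

lemma branch_prefixWord_tail (c : ℕ → List ℕ+) (k : ℕ) :
    branch (prefixWord c k) (tail c k) = tail c 0 := by
  induction k with
  | zero => rfl
  | succ k ih => rw [prefixWord_succ, branch_append, branch_tail_succ, ih]

end Tail

instance : MeasurableSpace (List ℕ+) := ⊤

instance : DiscreteMeasurableSpace (List ℕ+) := ⟨fun _ ↦ trivial⟩

/-- A finite family of words of a common length with probability weights on them. The words `u` are
used in the form of the blocks `2 :: u`: by `branch_two_cons_mem_tailInterval` the leading digit `2`
keeps all tails of a concatenation of blocks in `tailInterval`. -/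
structure Stage where
  words : Finset (List ℕ+)
  length : ℕ
  length_eq : ∀ u ∈ words, u.length = length
  weight : List ℕ+ → ℝ
  weight_nonneg : ∀ u ∈ words, 0 ≤ weight u
  sum_weight : ∑ u ∈ words, weight u = 1

namespace Stage

variable (S : Stage) {s : ℝ}

lemma sum_ofReal_weight : ∑ u : S.words, ENNReal.ofReal (S.weight u) = 1 := by
  rw [← ENNReal.ofReal_sum_of_nonneg fun (u : S.words) _ ↦ S.weight_nonneg u u.2,
    Finset.sum_coe_sort S.words S.weight, S.sum_weight, ENNReal.ofReal_one]

/-- The probability measure on the words of a stage that is given by its weights. -/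
noncomputable def measure : Measure S.words :=
  (PMF.ofFintype (fun u : S.words ↦ ENNReal.ofReal (S.weight u)) S.sum_ofReal_weight).toMeasure

instance : IsProbabilityMeasure S.measure := PMF.toMeasure.isProbabilityMeasure _

lemma measure_finset (A : Finset S.words) :
    S.measure A = ENNReal.ofReal (∑ u ∈ A, S.weight u) := by
  rw [measure, PMF.toMeasure_apply_finset,
    ENNReal.ofReal_sum_of_nonneg fun (u : S.words) _ ↦ S.weight_nonneg u u.2]
  rfl

lemma measure_singleton (u : S.words) : S.measure {u} = ENNReal.ofReal (S.weight u) := by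
  simpa using S.measure_finset {u}

lemma sum_weight_le_one (A : Finset S.words) : ∑ u ∈ A, S.weight u ≤ 1 := by
  rw [← S.sum_weight, ← Finset.sum_coe_sort S.words S.weight]
  exact Finset.sum_le_sum_of_subset_of_nonneg A.subset_univ fun u _ _ ↦ S.weight_nonneg u u.2

/-- Every set of at least two words of the stage contains two whose blocks have images of
`tailInterval` so far apart that, up to a constant, the weight of the set is at most the `s`-th
power of `K` times their distance. -/
def Separated (s K : ℝ) : Prop :=
  ∀ A : Finset S.words, A.Nontrivial → ∃ u ∈ A, ∃ v ∈ A, ∀ y ∈ tailInterval, ∀ z ∈ tailInterval,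
    ∑ a ∈ A, S.weight a ≤ 2 * (K * |branch (2 :: u) y - branch (2 :: v) z|) ^ s

lemma exists_one_le_mul_abs_branch_sub {u v : S.words} (huv : u ≠ v) :
    ∃ K : ℝ, ∀ y ∈ tailInterval, ∀ z ∈ tailInterval,
      1 ≤ K * |branch (2 :: u) y - branch (2 :: v) z| := by
  have hdisjoint : Disjoint (branch (2 :: u) '' tailInterval)
      (branch (2 :: v) '' tailInterval) := by
    refine disjoint_image_branch ?_ fun h ↦ huv (Subtype.ext (List.cons_injective h))
    simp [S.length_eq u u.2, S.length_eq v v.2]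
  obtain ⟨δ, hδ, hdist⟩ := Metric.exists_pos_forall_lt_edist (isCompact_image_branch _)
    (isCompact_image_branch _).isClosed hdisjoint
  refine ⟨(δ : ℝ)⁻¹, fun y hy z hz ↦ ?_⟩
  have hlt := hdist _ (mem_image_of_mem _ hy) _ (mem_image_of_mem _ hz)
  rw [edist_nndist, ENNReal.coe_lt_coe, ← NNReal.coe_lt_coe, coe_nndist, Real.dist_eq] at hlt
  rw [inv_mul_eq_div, one_le_div (mod_cast hδ)]
  exact hlt.le

lemma exists_separated (hs : 0 ≤ s) : ∃ K, 1 ≤ K ∧ S.Separated s K := by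
  have hpair (p : S.words × S.words) : ∃ K : ℝ, p.1 ≠ p.2 → ∀ y ∈ tailInterval,
      ∀ z ∈ tailInterval, 1 ≤ K * |branch (2 :: p.1) y - branch (2 :: p.2) z| := by
    by_cases h : p.1 = p.2
    · exact ⟨0, fun hne ↦ absurd h hne⟩
    · exact (S.exists_one_le_mul_abs_branch_sub h).imp fun _ hK _ ↦ hK
  choose K hK using hpair
  obtain ⟨M, hM⟩ := Finite.bddAbove_range K
  refine ⟨max M 1, le_max_right M 1, fun A hA ↦ ?_⟩
  obtain ⟨u, hu, v, hv, huv⟩ := hA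
  refine ⟨u, hu, v, hv, fun y hy z hz ↦ (S.sum_weight_le_one A).trans ?_⟩
  have hone : 1 ≤ max M 1 * |branch (2 :: u) y - branch (2 :: v) z| := by
    refine (hK (u, v) huv y hy z hz).trans ?_
    gcongr
    exact (hM (mem_range_self (u, v))).trans (le_max_left M 1)
  linarith [Real.one_le_rpow hone hs]

end Stage

section Code

/-- The sequences of words whose `k`-th term belongs to the stage `S k`. -/
abbrev Code (S : ℕ → Stage) : Type := ∀ k, (S k).words

/-- The product of the probability measures of the stages. -/
noncomputable def codeMeasure (S : ℕ → Stage) : Measure (Code S) :=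
  Measure.infinitePi fun k ↦ (S k).measure

instance (S : ℕ → Stage) : IsProbabilityMeasure (codeMeasure S) := by
  unfold codeMeasure
  infer_instance

namespace Code

variable {S : ℕ → Stage} {s C : ℝ} {K : ℕ → ℝ} {U : Set ℝ}

/-- The block `2 :: ω k` that the code `ω` contributes at the `k`-th stage. -/
def block (ω : Code S) (k : ℕ) : List ℕ+ := 2 :: ω k

/-- The real number whose continued fraction expansion is the concatenation of all blocks. -/
noncomputable def point (ω : Code S) : ℝ := tail ω.block 0

/-- The weight of the first `k` words of a code; see `codeMeasure_cylinder`. -/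
noncomputable def mass (ω : Code S) (k : ℕ) : ℝ := ∏ i ∈ Finset.range k, (S i).weight (ω i)

lemma mass_nonneg (ω : Code S) (k : ℕ) : 0 ≤ ω.mass k :=
  Finset.prod_nonneg fun i _ ↦ (S i).weight_nonneg _ (ω i).2

lemma tail_mem_tailInterval (ω : Code S) (k : ℕ) : tail ω.block k ∈ tailInterval := by
  rw [← branch_tail_succ]
  exact branch_two_cons_mem_tailInterval _ (tail_mem_Icc _ _)

lemma branch_prefixWord_eq_point (ω : Code S) (k : ℕ) :
    branch (prefixWord ω.block k) (tail ω.block k) = ω.point := branch_prefixWord_tail _ k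

lemma length_prefixWord (ω : Code S) (k : ℕ) :
    (prefixWord ω.block k).length = ∑ i ∈ Finset.range k, ((S i).length + 1) := by
  induction k with
  | zero => rfl
  | succ k ih =>
    rw [prefixWord_succ, List.length_append, ih, Finset.sum_range_succ, block, List.length_cons,
      (S k).length_eq _ (ω k).2]

lemma le_length_prefixWord (ω : Code S) (k : ℕ) : k ≤ (prefixWord ω.block k).length := by
  rw [length_prefixWord]
  simpa using Finset.card_nsmul_le_sum (Finset.range k) (fun i ↦ (S i).length + 1) 1 (by simp)

lemma gaussMap_iterate_point_mem_Ioo (ω : Code S) (n : ℕ) : gaussMap^[n] ω.point ∈ Ioo 0 1 := by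
  have htail := tailInterval_subset_Ioo (ω.tail_mem_tailInterval n)
  rw [← ω.branch_prefixWord_eq_point n,
    gaussMap_iterate_branch_of_le (ω.le_length_prefixWord n) htail]
  exact branch_mem_Ioo _ htail

lemma irrational_point (ω : Code S) : Irrational ω.point :=
  irrational_of_gaussMap_iterate_mem_Ioo ω.gaussMap_iterate_point_mem_Ioo

lemma codeMeasure_cylinder (ω₀ : Code S) (k : ℕ) (A : Finset (S k).words) :
    codeMeasure S {ω | (∀ i < k, ω i = ω₀ i) ∧ ω k ∈ A} =
      ENNReal.ofReal (ω₀.mass k * ∑ u ∈ A, (S k).weight u) := by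
  rw [ENNReal.ofReal_mul (ω₀.mass_nonneg k), mass,
    ENNReal.ofReal_prod_of_nonneg fun i _ ↦ (S i).weight_nonneg _ (ω₀ i).2, ← Stage.measure_finset]
  simp only [← Stage.measure_singleton]
  exact infinitePi_forall_lt_eq_and_mem _ ω₀ k (A := A) .of_discrete

lemma codeMeasure_singleton_le (ω : Code S) (k : ℕ) :
    codeMeasure S {ω} ≤ ENNReal.ofReal (ω.mass k) := by
  refine (measure_mono ?_).trans ((ω.codeMeasure_cylinder k Finset.univ).trans_le ?_)
  · rintro _ rfl
    exact ⟨fun _ _ ↦ rfl, Finset.mem_univ _⟩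
  · exact ENNReal.ofReal_le_ofReal
      (mul_le_of_le_one_right (ω.mass_nonneg k) ((S k).sum_weight_le_one _))

lemma tendsto_mass_zero (hs : 0 < s) (hK : ∀ k, 1 ≤ K k) (ω : Code S)
    (hmass : ∀ k, ω.mass k * (K k * continuant (prefixWord ω.block k) ^ 2) ^ s ≤ C) :
    Tendsto ω.mass atTop (nhds 0) := by
  have hgrowth : Tendsto (fun k : ℕ ↦ ((2 : ℝ) ^ k / 2) ^ s) atTop atTop :=
    (tendsto_rpow_atTop hs).comp
      ((tendsto_pow_atTop_atTop_of_one_lt one_lt_two).atTop_div_const two_pos)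
  refine squeeze_zero ω.mass_nonneg (fun k ↦ ?_) (tendsto_const_nhds.div_atTop hgrowth (a := C))
  rw [le_div_iff₀ (by positivity)]
  refine (mul_le_mul_of_nonneg_left ?_ (ω.mass_nonneg k)).trans (hmass k)
  refine Real.rpow_le_rpow (by positivity) ?_ hs.le
  have hlength : (2 : ℝ) ^ k ≤ 2 ^ (prefixWord ω.block k).length :=
    pow_le_pow_right₀ one_le_two (ω.le_length_prefixWord k)
  nlinarith [two_pow_length_le (prefixWord ω.block k), hK k,
    sq_nonneg (continuant (prefixWord ω.block k))]

lemma codeMeasure_singleton (hs : 0 < s) (hK : ∀ k, 1 ≤ K k) (ω : Code S)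
    (hmass : ∀ k, ω.mass k * (K k * continuant (prefixWord ω.block k) ^ 2) ^ s ≤ C) :
    codeMeasure S {ω} = 0 := by
  have htendsto := ENNReal.tendsto_ofReal (ω.tendsto_mass_zero hs hK hmass)
  rw [ENNReal.ofReal_zero] at htendsto
  exact le_antisymm (ge_of_tendsto' htendsto ω.codeMeasure_singleton_le) zero_le

lemma abs_tail_sub_le {ω ω' : Code S} {k : ℕ} (h : ∀ i < k, ω i = ω' i) :
    |tail ω.block k - tail ω'.block k| ≤
      4 * continuant (prefixWord ω.block k) ^ 2 * |ω.point - ω'.point| := by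
  have hprefix : prefixWord ω'.block k = prefixWord ω.block k :=
    prefixWord_congr fun i hi ↦ by rw [block, block, h i hi]
  have hexpand := abs_sub_le_mul_abs_branch_sub (prefixWord ω.block k)
    (tail_mem_Icc ω.block k) (tail_mem_Icc ω'.block k)
  rwa [ω.branch_prefixWord_eq_point, ← hprefix, ω'.branch_prefixWord_eq_point, hprefix] at hexpand

lemma exists_codeMeasure_preimage_le (hs : 0 ≤ s) (hK : ∀ k, 1 ≤ K k)
    (hsep : ∀ k, (S k).Separated s (K k))
    (hmass : ∀ (ω : Code S) k, ω.mass k * (K k * continuant (prefixWord ω.block k) ^ 2) ^ s ≤ C)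
    (hU : (point (S := S) ⁻¹' U).Nontrivial) : ∃ x ∈ U, ∃ y ∈ U,
      codeMeasure S (point ⁻¹' U) ≤ ENNReal.ofReal (2 * 4 ^ s * C * |x - y| ^ s) := by
  obtain ⟨k, hagree, hdiff⟩ := exists_first_disagreement hU
  set A := (toFinite ((fun ω ↦ ω k) '' (point (S := S) ⁻¹' U))).toFinset
  obtain ⟨_, hu, _, hv, hweight⟩ := hsep k A (by simpa [A] using hdiff)
  obtain ⟨ω, hω, rfl⟩ := (toFinite _).mem_toFinset.1 hu
  obtain ⟨ω', hω', rfl⟩ := (toFinite _).mem_toFinset.1 hv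
  refine ⟨ω.point, hω, ω'.point, hω', ?_⟩
  refine (measure_mono fun ω₁ hω₁ ↦ ?_).trans ((ω.codeMeasure_cylinder k A).trans_le ?_)
  · exact ⟨hagree ω₁ hω₁ ω hω, (toFinite _).mem_toFinset.2 (mem_image_of_mem _ hω₁)⟩
  refine ENNReal.ofReal_le_ofReal ?_
  set Q := continuant (prefixWord ω.block k) ^ 2
  set d := |ω.point - ω'.point|
  have hKk : 0 ≤ K k := zero_le_one.trans (hK k)
  have htail : |tail ω.block k - tail ω'.block k| ≤ 4 * Q * d :=
    abs_tail_sub_le (hagree ω hω ω' hω')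
  have hsum := hweight _ (ω.tail_mem_tailInterval (k + 1)) _ (ω'.tail_mem_tailInterval (k + 1))
  calc ω.mass k * ∑ u ∈ A, (S k).weight u
      ≤ ω.mass k * (2 * (K k * |tail ω.block k - tail ω'.block k|) ^ s) := by
        rw [← branch_tail_succ ω.block, ← branch_tail_succ ω'.block]
        exact mul_le_mul_of_nonneg_left hsum (ω.mass_nonneg k)
    _ ≤ ω.mass k * (2 * (K k * (4 * Q * d)) ^ s) := by
        have := ω.mass_nonneg k
        gcongr
    _ = 2 * 4 ^ s * (ω.mass k * (K k * Q) ^ s) * d ^ s := by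
        rw [show K k * (4 * Q * d) = 4 * (K k * Q) * d by ring,
          Real.mul_rpow (by positivity) (abs_nonneg _),
          Real.mul_rpow (by positivity) (by positivity)]
        ring
    _ ≤ 2 * 4 ^ s * C * d ^ s := by
        have := hmass ω k
        gcongr

lemma codeMeasure_preimage_le (hs : 0 < s) (hK : ∀ k, 1 ≤ K k)
    (hsep : ∀ k, (S k).Separated s (K k))
    (hmass : ∀ (ω : Code S) k, ω.mass k * (K k * continuant (prefixWord ω.block k) ^ 2) ^ s ≤ C)
    (U : Set ℝ) :
    codeMeasure S (point ⁻¹' U) ≤ ENNReal.ofReal (2 * 4 ^ s * C) * Metric.ediam U ^ s := by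
  obtain hsub | hnontrivial := (point (S := S) ⁻¹' U).subsingleton_or_nontrivial
  · obtain hempty | ⟨ω, hω⟩ := hsub.eq_empty_or_singleton
    · simp [hempty]
    · simp [hω, ω.codeMeasure_singleton hs hK (hmass ω)]
  · obtain ⟨x, hx, y, hy, hle⟩ := exists_codeMeasure_preimage_le hs.le hK hsep hmass hnontrivial
    refine hle.trans ?_
    rw [ENNReal.ofReal_mul' (by positivity),
      ← ENNReal.ofReal_rpow_of_nonneg (abs_nonneg _) hs.le, ← Real.dist_eq, ← edist_dist]
    gcongr
    exact Metric.edist_le_ediam_of_mem hx hy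

theorem le_dimH_range_point (hs : 0 < s) (hK : ∀ k, 1 ≤ K k)
    (hsep : ∀ k, (S k).Separated s (K k))
    (hmass : ∀ (ω : Code S) k, ω.mass k * (K k * continuant (prefixWord ω.block k) ^ 2) ^ s ≤ C) :
    ENNReal.ofReal s ≤ dimH (range (point (S := S))) := by
  refine le_dimH_range_of_measure_preimage_le (μ := codeMeasure S)
    (C := ENNReal.ofReal (2 * 4 ^ s * C)) ENNReal.ofReal_ne_top fun U ↦ ?_
  rw [Real.coe_toNNReal s hs.le]
  exact codeMeasure_preimage_le hs hK hsep hmass U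

end Code

end Code

section StageConstruction

variable {B s : ℝ}

/-- The stage whose words are the single digits `N, …, 2N - 1`, equally weighted. -/
noncomputable def jumpStage (N : ℕ+) : Stage where
  words := (Finset.Ico N (2 * N)).map ⟨fun a ↦ [a], List.singleton_injective⟩
  length := 1
  length_eq := by
    simp only [Finset.mem_map]
    rintro _ ⟨a, -, rfl⟩
    rfl
  weight _ := (N : ℝ)⁻¹
  weight_nonneg _ _ := by positivity
  sum_weight := by simp [two_mul]

lemma mem_words_jumpStage {N : ℕ+} {u : List ℕ+} :
    u ∈ (jumpStage N).words ↔ ∃ a, (N ≤ a ∧ a < 2 * N) ∧ [a] = u := by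
  simp [jumpStage]

lemma sub_le_mul_abs_branch_two_cons_sub {N a b : ℕ+} (hNa : N ≤ a) (hab : a < b) (hbN : b < 2 * N)
    {y z : ℝ} (hy : y ∈ tailInterval) (hz : z ∈ tailInterval) :
    (b : ℝ) - a ≤ 128 * N ^ 2 * |branch [2, a] y - branch [2, b] z| := by
  have hNa' : (N : ℝ) ≤ a := mod_cast hNa
  have hab' : (a : ℝ) + 1 ≤ b := mod_cast hab
  have hbN' : (b : ℝ) + 1 ≤ 2 * N := mod_cast hbN
  have _ := one_le_digit N
  obtain ⟨hy₁, hy₂⟩ := hy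
  obtain ⟨hz₁, hz₂⟩ := hz
  have hsub : branch [a] y - branch [b] z = (b - a + (z - y)) / ((a + y) * (b + z)) := by
    have : (a : ℝ) + y ≠ 0 := by linarith
    have : (b : ℝ) + z ≠ 0 := by linarith
    simp only [branch]
    field_simp
    ring
  have hden : (a + y) * (b + z) ≤ (2 * N) * (2 * N) := by
    gcongr <;> linarith
  have hinner : ((b : ℝ) - a) / 2 / ((2 * N) * (2 * N)) ≤ |branch [a] y - branch [b] z| := by
    rw [hsub]
    refine le_trans ?_ (le_abs_self _)
    exact div_le_div₀ (by linarith) (by linarith) (mul_pos (by linarith) (by linarith)) hden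
  have hexpand : |branch [a] y - branch [b] z| ≤ 16 * |branch [2, a] y - branch [2, b] z| := by
    have hcontinuant : continuant [2] = 2 := by simp [continuant, branchDenom, branch]
    have := abs_sub_le_mul_abs_branch_sub [2]
      (branch_mem_Icc [a] (tailInterval_subset_Icc ⟨hy₁, hy₂⟩))
      (branch_mem_Icc [b] (tailInterval_subset_Icc ⟨hz₁, hz₂⟩))
    rw [← branch_append, ← branch_append, hcontinuant] at this
    exact this.trans_eq (by norm_num)
  have := hinner.trans hexpand
  rw [div_div, div_le_iff₀ (by positivity)] at this
  linarith

lemma exists_card_le_two_mul_sub {α : Type*} {f : α → ℕ} (hf : Function.Injective f) {A : Finset α}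
    (hA : A.Nontrivial) :
    ∃ u ∈ A, ∃ v ∈ A, f u < f v ∧ (A.card : ℝ) ≤ 2 * ((f v : ℝ) - f u) := by
  obtain ⟨u, hu, hmin⟩ := A.exists_min_image f hA.nonempty
  obtain ⟨v, hv, hmax⟩ := A.exists_max_image f hA.nonempty
  have hcard : A.card ≤ (Finset.Icc (f u) (f v)).card :=
    Finset.card_le_card_of_injOn f (fun a ha ↦ Finset.mem_Icc.2 ⟨hmin a ha, hmax a ha⟩) hf.injOn
  have htwo : 1 < A.card := Finset.one_lt_card_iff_nontrivial.2 hA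
  rw [Nat.card_Icc] at hcard
  have hle : A.card + 2 * f u ≤ 2 * f v := by omega
  refine ⟨u, hu, v, hv, by omega, ?_⟩
  rw [mul_sub, le_sub_iff_add_le]
  exact_mod_cast hle

lemma separated_jumpStage (hs : 0 ≤ s) (hs1 : s ≤ 1) (N : ℕ+) :
    (jumpStage N).Separated s (128 * N) := by
  intro A hA
  choose digit hdigit hword using fun u : (jumpStage N).words ↦ mem_words_jumpStage.1 u.2
  have hinj : Function.Injective fun u ↦ (digit u : ℕ) := fun u v h ↦ by
    rw [Subtype.ext_iff, ← hword u, PNat.coe_injective h, hword v]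
  obtain ⟨u, hu, v, hv, hlt, hcard⟩ := exists_card_le_two_mul_sub hinj hA
  refine ⟨u, hu, v, hv, fun y hy z hz ↦ ?_⟩
  have hN := one_le_digit N
  have hpos : (digit u : ℝ) < digit v := mod_cast hlt
  have hle_one : ((digit v : ℝ) - digit u) / N ≤ 1 := by
    have hu : (N : ℝ) ≤ digit u := mod_cast (hdigit u).1
    have hv : (digit v : ℝ) < 2 * N := mod_cast (hdigit v).2
    rw [div_le_one (by positivity)]
    linarith
  calc ∑ a ∈ A, (jumpStage N).weight a = A.card / N := by
        exact (Finset.sum_const _).trans (nsmul_eq_mul _ _)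
    _ ≤ 2 * (((digit v : ℝ) - digit u) / N) := by rw [← mul_div_assoc]; gcongr
    _ ≤ 2 * (((digit v : ℝ) - digit u) / N) ^ s := by
        gcongr
        exact Real.self_le_rpow_of_le_one (div_nonneg (by linarith) (by linarith)) hle_one hs1
    _ ≤ 2 * (128 * N * |branch (2 :: u) y - branch (2 :: v) z|) ^ s := by
        have hgap := sub_le_mul_abs_branch_two_cons_sub (hdigit u).1 hlt (hdigit v).2 hy hz
        rw [hword, hword] at hgap
        have _ : 0 ≤ ((digit v : ℝ) - digit u) / N :=
          div_nonneg (by linarith) (by linarith)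
        gcongr
        rw [div_le_iff₀ (by positivity)]
        linarith

lemma exists_stage_weight_mul_rpow_le {c : ℝ} {n : ℕ} (hB : 0 < B) (hc : 0 < c)
    (h : ENNReal.ofReal c < partitionSum B s n) :
    ∃ D : Stage, ∀ u ∈ D.words, D.weight u * (B ^ D.length * continuant u ^ 2) ^ s ≤ c⁻¹ := by
  have hpos (u : List ℕ+) : 0 < B ^ n * continuant u ^ 2 := by
    have := continuant_pos u
    positivity
  rw [partitionSum, ENNReal.tsum_eq_iSup_sum, lt_iSup_iff] at h
  obtain ⟨F, hF⟩ := h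
  rw [← ENNReal.ofReal_sum_of_nonneg fun a _ ↦ (Real.rpow_pos_of_pos (hpos _) _).le,
    ENNReal.ofReal_lt_ofReal_iff_of_nonneg hc.le] at hF
  set Z := ∑ a ∈ F, (B ^ n * continuant (List.ofFn a) ^ 2) ^ (-s)
  have hZ : 0 < Z := hc.trans hF
  refine ⟨{
    words := F.map ⟨List.ofFn, List.ofFn_injective⟩
    length := n
    length_eq := by simp
    weight := fun u ↦ (B ^ n * continuant u ^ 2) ^ (-s) / Z
    weight_nonneg := fun u _ ↦ div_nonneg (Real.rpow_pos_of_pos (hpos u) _).le hZ.le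
    sum_weight := by
      rw [Finset.sum_map, ← Finset.sum_div]
      exact div_self hZ.ne' }, fun u _ ↦ ?_⟩
  calc (B ^ n * continuant u ^ 2) ^ (-s) / Z * (B ^ n * continuant u ^ 2) ^ s = Z⁻¹ := by
        rw [div_mul_eq_mul_div, ← Real.rpow_add (hpos u), neg_add_cancel, Real.rpow_zero, one_div]
    _ ≤ c⁻¹ := inv_anti₀ hc hF.le

end StageConstruction

section Schedule

/-- The bookkeeping of the construction of codes: `length` is the total length `n` of the blocks
chosen so far, and `slack` the bound that `MassBound` puts on `m (Bⁿ qₙ²)ˢ` for the mass `m` of the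
prefix that they form. -/
structure ScheduleState where
  length : ℕ
  slack : ℝ

namespace ScheduleState

/-- The lower bound `N > Bⁿ` for the digits `aₙ` chosen in a jump, where `n = length + 2` because a
block starts with the digit `2`. -/
noncomputable def jumpDigit (B : ℝ) (p : ScheduleState) : ℕ+ := ⌊B ^ (p.length + 2)⌋₊.succPNat

/-- The stage that follows a given state: a jump as soon as the slack allows it, and otherwise the
stage `D` of freely chosen digits. -/
noncomputable def stage (B : ℝ) (D : Stage) (p : ScheduleState) : Stage :=
  open Classical in if p.slack ≤ 1 then jumpStage (p.jumpDigit B) else D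

/-- The state reached after one more stage. -/
noncomputable def next (B s : ℝ) (D : Stage) (p : ScheduleState) : ScheduleState where
  length := p.length + ((p.stage B D).length + 1)
  slack := open Classical in
    if p.slack ≤ 1 then 144 * B ^ 2 * (2 * B ^ (p.length + 2)) ^ s else p.slack / 2

variable {B s : ℝ} {D : Stage} {p : ScheduleState}

lemma stage_of_slack_le_one (hp : p.slack ≤ 1) : p.stage B D = jumpStage (p.jumpDigit B) :=
  if_pos hp

lemma stage_of_one_lt_slack (hp : 1 < p.slack) : p.stage B D = D := if_neg hp.not_ge

lemma slack_next_of_slack_le_one (hp : p.slack ≤ 1) :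
    (p.next B s D).slack = 144 * B ^ 2 * (2 * B ^ (p.length + 2)) ^ s := if_pos hp

lemma slack_next_of_one_lt_slack (hp : 1 < p.slack) : (p.next B s D).slack = p.slack / 2 :=
  if_neg hp.not_ge

lemma pow_le_jumpDigit (B : ℝ) (p : ScheduleState) : B ^ (p.length + 2) ≤ p.jumpDigit B := by
  simpa [jumpDigit] using (Nat.lt_floor_add_one (B ^ (p.length + 2))).le

lemma jumpDigit_le (hB : 1 ≤ B) (p : ScheduleState) :
    (p.jumpDigit B : ℝ) ≤ 2 * B ^ (p.length + 2) := by
  have hone := one_le_pow₀ (n := p.length + 2) hB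
  have hfloor := Nat.floor_le (zero_le_one.trans hone)
  rw [jumpDigit, Nat.succPNat_coe]
  push_cast
  linarith

end ScheduleState

open ScheduleState

variable {B s : ℝ} {D : Stage} {p : ScheduleState} {m : ℝ} {w u : List ℕ+}

/-- The invariant of the construction for the mass `m` of a prefix `w` that leads to the state `p`.
The first bound is what the mass distribution principle needs at a free stage; the second one pays
for a jump once the slack is at most `1`. -/
def MassBound (B s : ℝ) (p : ScheduleState) (m : ℝ) (w : List ℕ+) : Prop :=
  m * (continuant w ^ 2) ^ s ≤ 288 * B ^ 2 ∧ m * (B ^ p.length * continuant w ^ 2) ^ s ≤ p.slack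

lemma mul_mul_rpow_le {c m μ x y z σ τ s : ℝ} (hs : 0 ≤ s) (hs1 : s ≤ 1) (hc : 1 ≤ c) (hm : 0 ≤ m)
    (hμ : 0 ≤ μ) (hx : 0 ≤ x) (hy : 0 ≤ y) (hz : 0 ≤ z) (hle : z ≤ c * (x * y))
    (hσ : m * x ^ s ≤ σ) (hτ : μ * y ^ s ≤ τ) : m * μ * z ^ s ≤ c * (σ * τ) := by
  have hcs : c ^ s ≤ c := Real.rpow_le_self_of_one_le hc hs1
  have hσ₀ : 0 ≤ σ := le_trans (by positivity) hσ
  calc m * μ * z ^ s ≤ m * μ * (c * (x * y)) ^ s := by gcongr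
    _ = c ^ s * ((m * x ^ s) * (μ * y ^ s)) := by
      rw [Real.mul_rpow (by positivity) (by positivity), Real.mul_rpow hx hy]
      ring
    _ ≤ c * (σ * τ) := by gcongr

lemma continuant_sq_append_two_cons_le (w u : List ℕ+) :
    continuant (w ++ 2 :: u) ^ 2 ≤ 36 * (continuant w ^ 2 * continuant u ^ 2) := by
  have hle := continuant_append_two_cons_le w u
  have hpos := continuant_pos (w ++ 2 :: u)
  calc continuant (w ++ 2 :: u) ^ 2 ≤ (6 * continuant w * continuant u) ^ 2 := by gcongr
    _ = 36 * (continuant w ^ 2 * continuant u ^ 2) := by ring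

lemma continuant_sq_append_two_cons_le_of_mem_jumpStage {N : ℕ+} (w : List ℕ+)
    (hu : u ∈ (jumpStage N).words) :
    continuant (w ++ 2 :: u) ^ 2 ≤ 144 * (continuant w ^ 2 * (N : ℝ) ^ 2) := by
  obtain ⟨a, ⟨-, ha⟩, rfl⟩ := mem_words_jumpStage.1 hu
  have ha' : (a : ℝ) < 2 * N := mod_cast ha
  have hcontinuant : continuant [a] = a := by simp [continuant, branchDenom, branch]
  calc continuant (w ++ [2, a]) ^ 2
      ≤ 36 * (continuant w ^ 2 * continuant [a] ^ 2) := continuant_sq_append_two_cons_le w [a]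
    _ ≤ 36 * (continuant w ^ 2 * (2 * N) ^ 2) := by rw [hcontinuant]; gcongr
    _ = 144 * (continuant w ^ 2 * (N : ℝ) ^ 2) := by ring

lemma inv_mul_mul_rpow_le {x y s : ℝ} (hx : 1 ≤ x) (hy : 0 ≤ y) (hs1 : s ≤ 1) :
    x⁻¹ * (x * y) ^ s ≤ y ^ s := by
  have hx₀ : 0 < x := by linarith
  rw [Real.mul_rpow hx₀.le hy, ← mul_assoc]
  refine mul_le_of_le_one_left (by positivity) ?_
  rw [inv_mul_le_one₀ hx₀]
  exact Real.rpow_le_self_of_one_le hx hs1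

namespace MassBound

lemma jump (h : MassBound B s p m w) (hB : 1 ≤ B) (hs : 0 ≤ s) (hs1 : s ≤ 1) (hm : 0 ≤ m)
    (hp : p.slack ≤ 1) (hu : u ∈ (jumpStage (p.jumpDigit B)).words) :
    MassBound B s (p.next B s D) (m * (p.jumpDigit B : ℝ)⁻¹) (w ++ 2 :: u) := by
  have hq := continuant_sq_append_two_cons_le_of_mem_jumpStage w hu
  have hupper := p.jumpDigit_le hB
  have hN := one_le_digit (p.jumpDigit B)
  have hlength : (p.next B s D).length = p.length + 2 := by
    simp [next, stage_of_slack_le_one hp, jumpStage]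
  rw [MassBound, slack_next_of_slack_le_one hp, hlength]
  set N : ℝ := (p.jumpDigit B : ℝ)
  have hm_one := h.2.trans hp
  have _ : 0 < B := by linarith
  constructor
  · have hweight : N⁻¹ * (N * (N / B ^ p.length)) ^ s ≤ 2 * B ^ 2 :=
      calc N⁻¹ * (N * (N / B ^ p.length)) ^ s ≤ (N / B ^ p.length) ^ s :=
            inv_mul_mul_rpow_le hN (by positivity) hs1
        _ ≤ (2 * B ^ 2) ^ s := by
            gcongr
            rw [div_le_iff₀ (by positivity)]
            exact hupper.trans_eq (by ring)
        _ ≤ 2 * B ^ 2 := Real.rpow_le_self_of_one_le (by nlinarith) hs1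
    calc m * N⁻¹ * (continuant (w ++ 2 :: u) ^ 2) ^ s
        ≤ 144 * (1 * (2 * B ^ 2)) :=
          mul_mul_rpow_le hs hs1 (by norm_num) hm (by positivity) (by positivity) (by positivity)
            (by positivity) (hq.trans_eq (by field_simp)) hm_one hweight
      _ = 288 * B ^ 2 := by ring
  · have hweight : N⁻¹ * (N * N) ^ s ≤ (2 * B ^ (p.length + 2)) ^ s :=
      (inv_mul_mul_rpow_le hN (by positivity) hs1).trans (by gcongr)
    have hz : B ^ (p.length + 2) * continuant (w ++ 2 :: u) ^ 2 ≤
        144 * B ^ 2 * (B ^ p.length * continuant w ^ 2 * (N * N)) :=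
      (mul_le_mul_of_nonneg_left hq (by positivity)).trans_eq (by ring)
    simpa only [one_mul] using mul_mul_rpow_le hs hs1 (by nlinarith) hm (by positivity)
      (by positivity) (by positivity) (by positivity) hz hm_one hweight

lemma free (h : MassBound B s p m w) (hB : 1 ≤ B) (hs : 0 ≤ s) (hs1 : s ≤ 1) (hm : 0 ≤ m)
    (hp : 1 < p.slack) (hu : u ∈ D.words)
    (hD : D.weight u * (B ^ D.length * continuant u ^ 2) ^ s ≤ (72 * B)⁻¹) :
    MassBound B s (p.next B s D) (m * D.weight u) (w ++ 2 :: u) := by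
  have hq := continuant_sq_append_two_cons_le w u
  have hweight := D.weight_nonneg u hu
  have hlength : (p.next B s D).length = p.length + (D.length + 1) := by
    simp [next, stage_of_one_lt_slack hp]
  rw [MassBound, slack_next_of_one_lt_slack hp, hlength]
  have _ : 0 < B := by linarith
  constructor
  · have hz : continuant (w ++ 2 :: u) ^ 2 ≤
        36 * B * (continuant w ^ 2 * (B ^ D.length * continuant u ^ 2)) :=
      hq.trans <| by
        have := one_le_pow₀ (n := D.length + 1) hB
        calc 36 * (continuant w ^ 2 * continuant u ^ 2)
            ≤ B ^ (D.length + 1) * (36 * (continuant w ^ 2 * continuant u ^ 2)) :=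
              le_mul_of_one_le_left (by positivity) this
          _ = _ := by ring
    calc m * D.weight u * (continuant (w ++ 2 :: u) ^ 2) ^ s
        ≤ 36 * B * (288 * B ^ 2 * (72 * B)⁻¹) :=
          mul_mul_rpow_le hs hs1 (by linarith) hm hweight (by positivity) (by positivity)
            (by positivity) hz h.1 hD
      _ = 144 * B ^ 2 := by field_simp; norm_num
      _ ≤ 288 * B ^ 2 := by nlinarith
  · have hz : B ^ (p.length + (D.length + 1)) * continuant (w ++ 2 :: u) ^ 2 ≤
        36 * B * (B ^ p.length * continuant w ^ 2 * (B ^ D.length * continuant u ^ 2)) :=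
      (mul_le_mul_of_nonneg_left hq (by positivity)).trans_eq (by ring)
    calc m * D.weight u * (B ^ (p.length + (D.length + 1)) * continuant (w ++ 2 :: u) ^ 2) ^ s
        ≤ 36 * B * (p.slack * (72 * B)⁻¹) :=
          mul_mul_rpow_le hs hs1 (by linarith) hm hweight (by positivity) (by positivity)
            (by positivity) hz h.2 hD
      _ = p.slack / 2 := by field_simp; norm_num

lemma mul_jumpDigit_rpow_le (h : MassBound B s p m w) (hB : 1 ≤ B) (hs : 0 ≤ s) (hs1 : s ≤ 1)
    (hm : 0 ≤ m) (hp : p.slack ≤ 1) :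
    m * (128 * p.jumpDigit B * continuant w ^ 2) ^ s ≤ 256 * B ^ 2 := by
  have hN : (128 : ℝ) * p.jumpDigit B ≤ 256 * B ^ 2 * B ^ p.length := by
    linarith [p.jumpDigit_le hB, pow_add B p.length 2]
  calc m * (128 * p.jumpDigit B * continuant w ^ 2) ^ s
      ≤ m * (256 * B ^ 2 * B ^ p.length * continuant w ^ 2) ^ s := by gcongr
    _ = (256 * B ^ 2) ^ s * (m * (B ^ p.length * continuant w ^ 2) ^ s) := by
      rw [mul_assoc (256 * B ^ 2), Real.mul_rpow (by positivity) (by positivity), mul_left_comm]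
    _ ≤ 256 * B ^ 2 * 1 := by
      gcongr
      · exact Real.rpow_le_self_of_one_le (by nlinarith) hs1
      · exact h.2.trans hp
    _ = 256 * B ^ 2 := mul_one _

lemma next (h : MassBound B s p m w) (hB : 1 ≤ B) (hs : 0 ≤ s) (hs1 : s ≤ 1) (hm : 0 ≤ m)
    (hD : ∀ u ∈ D.words, D.weight u * (B ^ D.length * continuant u ^ 2) ^ s ≤ (72 * B)⁻¹)
    (hu : u ∈ (p.stage B D).words) :
    MassBound B s (p.next B s D) (m * (p.stage B D).weight u) (w ++ 2 :: u) := by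
  obtain hp | hp := le_or_gt p.slack 1
  · rw [stage_of_slack_le_one hp] at hu ⊢
    exact h.jump hB hs hs1 hm hp hu
  · rw [stage_of_one_lt_slack hp] at hu ⊢
    exact h.free hB hs hs1 hm hp hu (hD u hu)

end MassBound

/-- The sequence of states that starts at the empty word. -/
noncomputable def schedule (B s : ℝ) (D : Stage) (k : ℕ) : ScheduleState :=
  (ScheduleState.next B s D)^[k] ⟨0, 1⟩

/-- The sequence of stages along `schedule`. -/
noncomputable def scheduleStage (B s : ℝ) (D : Stage) (k : ℕ) : Stage :=
  (schedule B s D k).stage B D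

lemma schedule_succ (B s : ℝ) (D : Stage) (k : ℕ) :
    schedule B s D (k + 1) = (schedule B s D k).next B s D := Function.iterate_succ_apply' _ _ _

lemma length_schedule (B s : ℝ) (D : Stage) (k : ℕ) :
    (schedule B s D k).length =
      ∑ i ∈ Finset.range k, ((scheduleStage B s D i).length + 1) := by
  induction k with
  | zero => rfl
  | succ k ih => rw [schedule_succ, Finset.sum_range_succ, ← ih]; rfl

lemma frequently_slack_schedule_le_one (B s : ℝ) (D : Stage) :
    ∃ᶠ k in atTop, (schedule B s D k).slack ≤ 1 := by
  intro hlarge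
  obtain ⟨k, hk⟩ := eventually_atTop.1 hlarge
  simp only [not_le] at hk
  have hhalf (j : ℕ) : (schedule B s D (k + j)).slack = (schedule B s D k).slack / 2 ^ j := by
    induction j with
    | zero => simp
    | succ j ih =>
      rw [← add_assoc, schedule_succ, slack_next_of_one_lt_slack (hk _ (Nat.le_add_right k j)), ih,
        div_div, pow_succ]
  obtain ⟨j, hj⟩ := pow_unbounded_of_one_lt (schedule B s D k).slack one_lt_two
  have hlt := hk _ (Nat.le_add_right k j)
  rw [hhalf, lt_div_iff₀ (by positivity), one_mul] at hlt
  exact hlt.not_gt hj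

lemma massBound_schedule (hB : 1 ≤ B) (hs : 0 ≤ s) (hs1 : s ≤ 1)
    (hD : ∀ u ∈ D.words, D.weight u * (B ^ D.length * continuant u ^ 2) ^ s ≤ (72 * B)⁻¹)
    (ω : Code (scheduleStage B s D)) (k : ℕ) :
    MassBound B s (schedule B s D k) (ω.mass k) (prefixWord ω.block k) := by
  induction k with
  | zero =>
    have : (1 : ℝ) ≤ 288 * B ^ 2 := by nlinarith
    simpa [MassBound, schedule, Code.mass, prefixWord, continuant, branchDenom] using this
  | succ k ih =>
    rw [schedule_succ, prefixWord_succ, Code.mass, Finset.prod_range_succ]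
    exact ih.next hB hs hs1 (ω.mass_nonneg k) hD (ω k).2

lemma exists_separated_scheduleStage (hB : 1 ≤ B) (hs : 0 ≤ s) (hs1 : s ≤ 1)
    (hD : ∀ u ∈ D.words, D.weight u * (B ^ D.length * continuant u ^ 2) ^ s ≤ (72 * B)⁻¹) :
    ∃ C : ℝ, ∀ k, ∃ K, 1 ≤ K ∧ (scheduleStage B s D k).Separated s K ∧
      ∀ ω : Code (scheduleStage B s D),
        ω.mass k * (K * continuant (prefixWord ω.block k) ^ 2) ^ s ≤ C := by
  obtain ⟨K, hK, hsep⟩ := D.exists_separated hs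
  refine ⟨max (256 * B ^ 2) (K ^ s * (288 * B ^ 2)), fun k ↦ ?_⟩
  have hbound := massBound_schedule hB hs hs1 hD (k := k)
  obtain hslack | hslack := le_or_gt (schedule B s D k).slack 1
  · refine ⟨128 * (schedule B s D k).jumpDigit B, ?_, ?_, fun ω ↦ (le_max_left _ _).trans' ?_⟩
    · linarith [one_le_digit ((schedule B s D k).jumpDigit B)]
    · simpa only [scheduleStage, stage_of_slack_le_one hslack] using separated_jumpStage hs hs1 _
    · exact (hbound ω).mul_jumpDigit_rpow_le hB hs hs1 (ω.mass_nonneg k) hslack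
  · refine ⟨K, hK, ?_, fun ω ↦ (le_max_right _ _).trans' ?_⟩
    · simpa only [scheduleStage, stage_of_one_lt_slack hslack] using hsep
    · rw [Real.mul_rpow (by positivity) (by positivity), mul_left_comm]
      exact mul_le_mul_of_nonneg_left (hbound ω).1 (by positivity)

lemma point_mem_largeQuotientSet (ω : Code (scheduleStage B s D)) :
    ω.point ∈ largeQuotientSet B := by
  refine ⟨ω.gaussMap_iterate_point_mem_Ioo 0, ω.irrational_point,
    infinite_of_forall_exists_gt fun M ↦ ?_⟩
  obtain ⟨k, hMk, hslack⟩ := frequently_atTop.1 (frequently_slack_schedule_le_one B s D) M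
  have hjump {u : List ℕ+} (hu : u ∈ (scheduleStage B s D k).words) :
      ∃ a, (schedule B s D k).jumpDigit B ≤ a ∧ [a] = u := by
    rw [scheduleStage, stage_of_slack_le_one hslack, mem_words_jumpStage] at hu
    exact hu.imp fun a ha ↦ ⟨ha.1.1, ha.2⟩
  obtain ⟨a, hNa, ha⟩ := hjump (ω k).2
  have hprefix : prefixWord ω.block (k + 1) = (prefixWord ω.block k ++ [2]) ++ [a] := by
    rw [prefixWord_succ, Code.block, ← ha, List.append_assoc]
    rfl
  have hlength := ω.length_prefixWord k
  rw [← length_schedule] at hlength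
  have hpq := pq_branch_append_cons (prefixWord ω.block k ++ [2]) a []
    (tailInterval_subset_Ioo (ω.tail_mem_tailInterval (k + 1)))
  rw [← hprefix, ω.branch_prefixWord_eq_point, List.length_append, hlength, List.length_singleton,
    add_assoc, one_add_one_eq_two] at hpq
  refine ⟨(schedule B s D k).length + 2, ?_, ?_⟩
  · rw [mem_ofPred, hpq]
    exact (pow_le_jumpDigit B _).trans (mod_cast hNa)
  · rw [← hlength]
    linarith [ω.le_length_prefixWord k]

lemma ofReal_le_dimH_largeQuotientSet (hB : 1 ≤ B) (hs : 0 < s) (hsB : s < sExp B) :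
    ENNReal.ofReal s ≤ dimH (largeQuotientSet B) := by
  have hs1 : s ≤ 1 := hsB.le.trans (sExp_le_one hB)
  have hc : 0 < 72 * B := by linarith
  obtain ⟨n, hn⟩ := exists_lt_partitionSum hs.le hsB (ENNReal.ofReal_ne_top (r := 72 * B))
  obtain ⟨D, hD⟩ := exists_stage_weight_mul_rpow_le (one_pos.trans_le hB) hc hn
  obtain ⟨C, hC⟩ := exists_separated_scheduleStage hB hs.le hs1 hD
  choose K hK hsep hmass using hC
  calc ENNReal.ofReal s ≤ dimH (range (Code.point (S := scheduleStage B s D))) :=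
        Code.le_dimH_range_point hs hK hsep fun ω k ↦ hmass k ω
    _ ≤ dimH (largeQuotientSet B) := dimH_mono (range_subset_iff.2 point_mem_largeQuotientSet)

theorem le_dimH_largeQuotientSet (hB : 1 ≤ B) :
    ENNReal.ofReal (sExp B) ≤ dimH (largeQuotientSet B) := by
  refine le_of_forall_lt_imp_le_of_dense fun r hr ↦ ?_
  obtain rfl | hpos := eq_zero_or_pos r
  · exact zero_le
  have htop : r ≠ ∞ := (hr.trans ENNReal.ofReal_lt_top).ne
  rw [← ENNReal.ofReal_toReal htop] at hr ⊢
  exact ofReal_le_dimH_largeQuotientSet hB (ENNReal.toReal_pos hpos.ne' htop)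
    ((ENNReal.ofReal_lt_ofReal_iff_of_nonneg ENNReal.toReal_nonneg).1 hr)

end Schedule

end WangWu

theorem wang_wu (B : ℝ) (hB : 1 ≤ B) :
    dimH {x : ℝ | x ∈ Set.Ioo (0 : ℝ) 1 ∧ Irrational x ∧
      {n : ℕ | B ^ n ≤ (pq x n : ℝ)}.Infinite} = ENNReal.ofReal (sExp B) :=
  le_antisymm (WangWu.dimH_largeQuotientSet_le hB) (WangWu.le_dimH_largeQuotientSet hB)
end
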